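/- arXiv:math/0301381 — 16 statements merged into one kernel-verified Lean document; each statement's English description precedes it below -/
import Mathlib

section
/- Let H be a real Hilbert space, F : H → H Fréchet differentiable, u₀ ∈ H, R > 0, and B := {u ∈ H : ‖u − u₀‖ ≤ R}. Let Φ : [0,∞) × H → H be continuous in t and Lipschitz in u on B, and let g₁, g₂ be positive functions on [0,∞) with g₂ continuous and g₁ locally integrable. Assume: (i) ⟨F′(u)Φ(t,u), F(u)⟩ ≤ −g₁(t)‖F(u)‖² for all u ∈ B and t ≥ 0; (ii) ‖Φ(t,u)‖ ≤ g₂(t)‖F(u)‖ for all u ∈ B and t ≥ 0; (iii) ∫₀^∞ g₁(t) dt = +∞; (iv) G(t) := g₂(t)·exp(−∫₀ᵗ g₁(s) ds) is integrable on [0,∞); (v) ‖F(u₀)‖·∫₀^∞ G(t) dt ≤ R. Then the Cauchy problem u̇(t) = Φ(t,u(t)), u(0) = u₀ has a global solution u on [0,∞) with u(t) ∈ B for all t ≥ 0; the strong limit y := lim_{t→∞} u(t) exists; F(y) = 0; and for all t ≥ 0 one has ‖u(t) − y‖ ≤ ‖F(u₀)‖·∫ₜ^∞ G(x) dx and ‖F(u(t))‖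 ≤ ‖F(u₀)‖·exp(−∫₀ᵗ g₁(x) dx). -/
open MeasureTheory Filter
open scoped RealInnerProductSpace

theorem dsm_global {H : Type*} [NormedAddCommGroup H] [NormedSpace ℝ H] [CompleteSpace H]
    (v : ℝ → H → H) (K : NNReal) (hlip : ∀ t, LipschitzWith K (v t))
    (hcont : ∀ x, Continuous (fun t => v t x))
    (hbd : ∀ T : ℝ, ∃ C : NNReal, ∀ t ∈ Set.Icc (-T) T, ∀ x, ‖v t x‖ ≤ C) (u₀ : H) :
    ∃ u : ℝ → H, u 0 = u₀ ∧ ∀ t, HasDerivAt u (v t (u t)) t := by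
  have hloc : ∀ n : ℕ, ∃ α : ℝ → H, α 0 = u₀ ∧
      ∀ t ∈ Set.Ioo (-((n:ℝ)+1)) ((n:ℝ)+1), HasDerivAt α (v t (α t)) t := by
    intro n
    obtain ⟨C, hC⟩ := hbd ((n:ℝ)+1)
    have h0 : (0:ℝ) ∈ Set.Icc (-((n:ℝ)+1)) ((n:ℝ)+1) := by
      constructor <;> have := n.cast_nonneg (α := ℝ) <;> linarith
    have hp : IsPicardLindelof v (⟨0, h0⟩ : Set.Icc (-((n:ℝ)+1)) ((n:ℝ)+1)) u₀
        (C * ((n:NNReal)+1)) 0 C K :=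
      { lipschitzOnWith := fun t _ => (hlip t).lipschitzOnWith
        continuousOn := fun x _ => (hcont x).continuousOn
        norm_le := fun t ht x _ => hC t ht x
        mul_max_le := by simp }
    obtain ⟨α, h1, h2⟩ := hp.exists_eq_forall_mem_Icc_hasDerivWithinAt₀
    exact ⟨α, h1, fun t ht => (h2 t (Set.Ioo_subset_Icc_self ht)).hasDerivAt
      (Icc_mem_nhds ht.1 ht.2)⟩
  choose α hα0 hα using hloc
  have hle : ∀ m n : ℕ, m ≤ n → ∀ t ∈ Set.Ioo (-((m:ℝ)+1)) ((m:ℝ)+1), α m t = α n t := by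
    intro m n hmn t ht
    have hmn' : (m:ℝ) ≤ n := by exact_mod_cast hmn
    have h0 : (0:ℝ) ∈ Set.Ioo (-((m:ℝ)+1)) ((m:ℝ)+1) := by
      constructor <;> have := m.cast_nonneg (α := ℝ) <;> linarith
    refine ODE_solution_unique_of_mem_Ioo (v := v) (s := fun _ => Set.univ) (K := K)
      (fun t _ => (hlip t).lipschitzOnWith) h0
      (fun t ht => ⟨hα m t ht, trivial⟩)
      (fun t ht => ⟨hα n t ⟨by linarith [ht.1], by linarith [ht.2]⟩, trivial⟩)
      (by rw [hα0, hα0]) ht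
  have hu : ∀ n : ℕ, ∀ t ∈ Set.Ioo (-((n:ℝ)+1)) ((n:ℝ)+1), α ⌈|t|⌉₊ t = α n t := by
    intro n t ht
    rcases le_total ⌈|t|⌉₊ n with h | h
    · refine hle _ _ h t ?_
      have := Nat.le_ceil |t|
      have := abs_lt.1 (show |t| < (⌈|t|⌉₊ : ℝ) + 1 by linarith)
      exact this
    · exact (hle _ _ h t ht).symm
  refine ⟨fun t => α ⌈|t|⌉₊ t, by simp [hα0], fun t => ?_⟩
  have ht : t ∈ Set.Ioo (-((⌈|t|⌉₊:ℝ)+1)) ((⌈|t|⌉₊:ℝ)+1) := by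
    have := Nat.le_ceil |t|
    exact abs_lt.1 (show |t| < (⌈|t|⌉₊ : ℝ) + 1 by linarith)
  refine (hα _ t ht).congr_of_eventuallyEq ?_
  filter_upwards [Ioo_mem_nhds ht.1 ht.2] with s hs
  exact hu _ s hs

theorem dsm_proj {H : Type*} [NormedAddCommGroup H] [InnerProductSpace ℝ H] [CompleteSpace H]
    (B : Set H) (hne : B.Nonempty) (hcl : IsClosed B) (hcv : Convex ℝ B) :
    ∃ P : H → H, (∀ x, P x ∈ B) ∧ (∀ x ∈ B, P x = x) ∧ LipschitzWith 1 P := by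
  choose P hP hP2 using exists_norm_eq_iInf_of_complete_convex hne hcl.isComplete hcv
  have hP3 := fun x => (norm_eq_iInf_iff_real_inner_le_zero hcv (hP x)).1 (hP2 x)
  refine ⟨P, hP, fun x hx => ?_, LipschitzWith.of_dist_le_mul fun x y => ?_⟩
  · have := hP3 x x hx
    rw [real_inner_self_eq_norm_sq] at this
    have h : ‖x - P x‖ = 0 := by nlinarith [norm_nonneg (x - P x)]
    exact (sub_eq_zero.1 (norm_eq_zero.1 h)).symm
  · have h1 := hP3 x (P y) (hP y)
    have h2 := hP3 y (P x) (hP x)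
    have h3 : ‖P x - P y‖ ^ 2 ≤ ⟪x - y, P x - P y⟫ := by
      rw [← real_inner_self_eq_norm_sq]
      simp only [inner_sub_left, inner_sub_right] at *
      linarith
    have h4 := real_inner_le_norm (x - y) (P x - P y)
    rw [dist_eq_norm, dist_eq_norm, NNReal.coe_one, one_mul]
    by_contra hlt
    push Not at hlt
    nlinarith [norm_nonneg (x - y), norm_nonneg (P x - P y)]

/-- Decay of `‖F (u t)‖`. -/
theorem dsm_decay (h h' g : ℝ → ℝ) (T : ℝ) (hT : 0 ≤ T) (hh : ∀ t ∈ Set.Icc 0 T, 0 ≤ h t)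
    (hg : ∀ t ∈ Set.Icc 0 T, 0 ≤ g t)
    (hd : ∀ t ∈ Set.Icc 0 T, HasDerivAt h (h' t) t)
    (hle : ∀ t ∈ Set.Icc 0 T, h' t ≤ - 2 * g t * h t)
    (hi : IntervalIntegrable g volume 0 T) :
    h T ≤ h 0 * Real.exp (-∫ s in (0:ℝ)..T, g s) ^ 2 := by
  rcases (hh T ⟨hT, le_rfl⟩).eq_or_lt with h0 | h0
  · rw [← h0]
    have := hh 0 ⟨le_rfl, hT⟩
    positivity
  have hanti : AntitoneOn h (Set.Icc 0 T) := by
    refine antitoneOn_of_hasDerivWithinAt_nonpos (f' := h') (convex_Icc 0 T)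
      (fun t ht => (hd t ht).continuousAt.continuousWithinAt) ?_ ?_
    · intro t ht
      exact (hd t (interior_subset ht)).hasDerivWithinAt
    · intro t ht
      have ht := interior_subset ht
      have := mul_nonneg (hg t ht) (hh t ht)
      linarith [hle t ht]
  have hpos : ∀ t ∈ Set.Icc 0 T, 0 < h t := fun t ht =>
    h0.trans_le (hanti ht ⟨hT, le_rfl⟩ ht.2)
  have key := intervalIntegral.sub_le_integral_of_hasDeriv_right_of_le (g := fun t => Real.log (h t))
    (g' := fun t => h' t / h t) (φ := fun t => (-2) * g t) hT
    (fun t ht => ((hd t ht).log (hpos t ht).ne').continuousAt.continuousWithinAt)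
    (fun t ht => ((hd t (Set.Ioo_subset_Icc_self ht)).log
      (hpos t (Set.Ioo_subset_Icc_self ht)).ne').hasDerivWithinAt)
    (by
      rw [integrableOn_Icc_iff_integrableOn_Ioc]
      exact ((intervalIntegrable_iff_integrableOn_Ioc_of_le hT).1 hi).const_mul (-2))
    (fun t ht => by
      have ht := Set.Ioo_subset_Icc_self ht
      rw [div_le_iff₀ (hpos t ht)]
      exact hle t ht)
  rw [intervalIntegral.integral_const_mul] at key
  have h00 := hpos 0 ⟨le_rfl, hT⟩
  calc h T = Real.exp (Real.log (h T)) := (Real.exp_log h0).symm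
    _ ≤ Real.exp (Real.log (h 0) + (2:ℕ) * (-∫ s in (0:ℝ)..T, g s)) := by
        apply Real.exp_le_exp.2
        push_cast
        linarith
    _ = _ := by rw [Real.exp_add, Real.exp_log h00, Real.exp_nat_mul]

/-- **Theorem 1 (DSM existence theorem).** Under conditions (1.2)–(1.5) and (1.7),
the Cauchy problem (1.6) has a global solution `u` staying in the ball `B`,
`u(t)` converges strongly to a limit `y` solving `F(y) = 0`, and the
inequalities (1.8) and (1.9) hold. -/
theorem dsm_main_theorem
    {H : Type*} [NormedAddCommGroup H] [InnerProductSpace ℝ H] [CompleteSpace H]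
    (F : H → H) (F' : H → H →L[ℝ] H)
    (hF : ∀ u : H, HasFDerivAt F (F' u) u)
    (u₀ : H) (R : ℝ) (hR : 0 < R)
    (B : Set H) (hB : B = {u : H | ‖u - u₀‖ ≤ R})
    (Φ : ℝ → H → H)
    (hΦcont : ∀ u ∈ B, ContinuousOn (fun t => Φ t u) (Set.Ici (0:ℝ)))
    (L : NNReal) (hΦlip : ∀ t ∈ Set.Ici (0:ℝ), LipschitzOnWith L (Φ t) B)
    (g₁ g₂ : ℝ → ℝ)
    (hg₁pos : ∀ t ≥ (0:ℝ), 0 < g₁ t)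
    (hg₂pos : ∀ t ≥ (0:ℝ), 0 < g₂ t)
    (hg₂cont : ContinuousOn g₂ (Set.Ici (0:ℝ)))
    (hg₁loc : ∀ t ≥ (0:ℝ), IntervalIntegrable g₁ volume 0 t)
    (h12 : ∀ t ≥ (0:ℝ), ∀ u ∈ B, ⟪F' u (Φ t u), F u⟫ ≤ -(g₁ t) * ‖F u‖ ^ 2)
    (h13 : ∀ t ≥ (0:ℝ), ∀ u ∈ B, ‖Φ t u‖ ≤ g₂ t * ‖F u‖)
    (h14 : Tendsto (fun t => ∫ s in (0:ℝ)..t, g₁ s) atTop atTop)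
    (G : ℝ → ℝ) (hG : G = fun t => g₂ t * Real.exp (-∫ s in (0:ℝ)..t, g₁ s))
    (h15 : IntegrableOn G (Set.Ici (0:ℝ)))
    (h17 : ‖F u₀‖ * ∫ t in Set.Ioi (0:ℝ), G t ≤ R) :
    ∃ u : ℝ → H, u 0 = u₀ ∧
      (∀ t ≥ (0:ℝ), HasDerivAt u (Φ t (u t)) t) ∧
      (∀ t ≥ (0:ℝ), u t ∈ B) ∧
      ∃ y : H, Tendsto u atTop (nhds y) ∧ F y = 0 ∧
        (∀ t ≥ (0:ℝ), ‖u t - y‖ ≤ ‖F u₀‖ * ∫ x in Set.Ioi t, G x) ∧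
        (∀ t ≥ (0:ℝ), ‖F (u t)‖ ≤ ‖F u₀‖ * Real.exp (-∫ x in (0:ℝ)..t, g₁ x)) := by
  have hu₀B : u₀ ∈ B := by rw [hB]; simpa using hR.le
  have hBball : B = Metric.closedBall u₀ R := by
    rw [hB]; ext x; simp [dist_eq_norm]
  have hBR : ∀ x, x ∈ B ↔ ‖x - u₀‖ ≤ R := fun x => by rw [hB]; rfl
  have hBcl : IsClosed B := by rw [hBball]; exact Metric.isClosed_closedBall
  obtain ⟨P, hPB, hPid, hPlip⟩ := dsm_proj B ⟨u₀, hu₀B⟩ hBcl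
    (by rw [hBball]; exact convex_closedBall u₀ R)
  have hmax : ∀ t : ℝ, max t 0 ∈ Set.Ici (0:ℝ) := fun t => le_max_right t 0
  obtain ⟨v, hv⟩ : ∃ v : ℝ → H → H, v = fun t x => Φ (max t 0) (P x) := ⟨_, rfl⟩
  have hvcont : ∀ x, Continuous (fun t => v t x) := by
    intro x
    rw [hv]
    exact (hΦcont (P x) (hPB x)).comp_continuous (continuous_id.max continuous_const) hmax
  have hvlip : ∀ t, LipschitzWith L (v t) := by
    intro t
    rw [hv]
    have h := (hΦlip (max t 0) (hmax t)).comp (hPlip.lipschitzOnWith (s := Set.univ))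
      (fun x _ => hPB x)
    rw [mul_one, lipschitzOnWith_univ] at h
    exact h
  have hvbd : ∀ T : ℝ, ∃ C : NNReal, ∀ t ∈ Set.Icc (-T) T, ∀ x, ‖v t x‖ ≤ C := by
    intro T
    obtain ⟨C, hC⟩ := (isCompact_Icc (a := -T) (b := T)).exists_bound_of_continuousOn
      (hvcont u₀).continuousOn
    refine ⟨(C + L * R).toNNReal, fun t ht x => le_trans ?_ (Real.le_coe_toNNReal _)⟩
    have h1 := hC t ht
    have h2 : ‖v t x - v t u₀‖ ≤ L * ‖P x - u₀‖ := by
      have := (hΦlip (max t 0) (hmax t)).dist_le_mul (P x) (hPB x) u₀ hu₀B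
      rw [dist_eq_norm, dist_eq_norm] at this
      rw [hv]
      simpa only [hPid u₀ hu₀B] using this
    have h3 := mul_le_mul_of_nonneg_left ((hBR _).1 (hPB x)) L.coe_nonneg
    have h4 := norm_le_insert' (v t x) (v t u₀)
    linarith
  obtain ⟨u, hu0, hu⟩ := dsm_global v L hvlip hvcont hvbd u₀
  have hucont : Continuous u := continuous_iff_continuousAt.2 fun t => (hu t).continuousAt
  have hw : Continuous (fun t => v t (u t)) :=
    (continuous_prod_of_continuous_lipschitzWith' (fun p : ℝ × H => v p.1 p.2) L
      hvlip hvcont).comp (continuous_id.prodMk hucont)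
  have hvΦ : ∀ t ≥ (0:ℝ), ∀ x ∈ B, v t x = Φ t x := by
    intro t ht x hx
    rw [hv]
    simp only [hPid x hx, max_eq_left ht]
  have hFcont : Continuous F := continuous_iff_continuousAt.2 fun x => (hF x).continuousAt
  have hdec : ∀ T ≥ (0:ℝ), (∀ s ∈ Set.Icc 0 T, u s ∈ B) →
      ‖F (u T)‖ ≤ ‖F u₀‖ * Real.exp (-∫ x in (0:ℝ)..T, g₁ x) := by
    intro T hT hs
    have := dsm_decay (fun t => ‖F (u t)‖ ^ 2)
      (fun t => 2 * ⟪F (u t), F' (u t) (v t (u t))⟫) g₁ T hT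
      (fun t _ => by positivity) (fun t ht => (hg₁pos t ht.1).le)
      (fun t _ => ((hF (u t)).comp_hasDerivAt t (hu t)).norm_sq)
      (fun t ht => by
        have := h12 t ht.1 (u t) (hs t ht)
        rw [hvΦ t ht.1 _ (hs t ht), real_inner_comm]
        linarith) (hg₁loc T hT)
    simp only [hu0] at this
    rw [← mul_pow] at this
    exact le_of_sq_le_sq this (by positivity)
  have hGint : ∀ a b : ℝ, 0 ≤ a → a ≤ b → IntervalIntegrable G volume a b := by
    intro a b ha hab
    rw [intervalIntegrable_iff_integrableOn_Ioc_of_le hab]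
    exact h15.mono_set fun x hx => ha.trans hx.1.le
  have hGi : ∀ a : ℝ, 0 ≤ a → IntegrableOn G (Set.Ioi a) := fun a ha =>
    h15.mono_set fun x hx => ha.trans (le_of_lt hx)
  have hGpos : ∀ t ≥ (0:ℝ), 0 < G t := fun t ht => by
    rw [hG]; exact mul_pos (hg₂pos t ht) (Real.exp_pos _)
  have hGsplit : ∀ a b : ℝ, 0 ≤ a → a ≤ b →
      (∫ x in Set.Ioi a, G x) = (∫ x in a..b, G x) + ∫ x in Set.Ioi b, G x := by
    intro a b ha hab
    rw [intervalIntegral.integral_of_le hab, ← Set.Ioc_union_Ioi_eq_Ioi hab]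
    exact setIntegral_union (Set.Ioc_disjoint_Ioi le_rfl) measurableSet_Ioi
      ((hGi a ha).mono_set Set.Ioc_subset_Ioi_self) (hGi b (ha.trans hab))
  have hGtail : ∀ b : ℝ, 0 ≤ b → 0 < ∫ x in Set.Ioi b, G x := by
    intro b hb
    rw [setIntegral_pos_iff_support_of_nonneg_ae _ (hGi b hb)]
    · have : Function.support G ∩ Set.Ioi b = Set.Ioi b :=
        Set.inter_eq_right.2 fun x hx => (hGpos x (hb.trans (le_of_lt hx))).ne'
      rw [this]
      simp
    · filter_upwards [ae_restrict_mem measurableSet_Ioi] with x hx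
      exact (hGpos x (hb.trans (le_of_lt hx))).le
  have hsp : ∀ a b : ℝ, 0 ≤ a → a ≤ b → (∀ s ∈ Set.Icc 0 b, u s ∈ B) →
      ‖u b - u a‖ ≤ ‖F u₀‖ * ∫ x in a..b, G x := by
    intro a b ha hab hs
    rw [← intervalIntegral.integral_eq_sub_of_hasDerivAt (fun x _ => hu x)
      (hw.intervalIntegrable a b), ← intervalIntegral.integral_const_mul]
    refine intervalIntegral.norm_integral_le_of_norm_le hab
      (Eventually.of_forall fun t ht => ?_) ((hGint a b ha hab).const_mul _)
    have ht0 : 0 ≤ t := ha.trans ht.1.le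
    have htB := hs t ⟨ht0, ht.2⟩
    have h1 := h13 t ht0 _ htB
    have h2 := hdec t ht0 fun s hst => hs s ⟨hst.1, hst.2.trans ht.2⟩
    rw [hvΦ t ht0 _ htB, hG]
    have h3 := mul_le_mul_of_nonneg_left h2 (hg₂pos t ht0).le
    calc _ ≤ _ := h1
      _ ≤ _ := h3
      _ = _ := by ring
  have hstrict : ∀ b : ℝ, 0 ≤ b → (∀ s ∈ Set.Icc 0 b, u s ∈ B) → ‖u b - u₀‖ < R := by
    intro b hb hs
    have h1 := hsp 0 b le_rfl hb hs
    rw [hu0] at h1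
    rw [hGsplit 0 b le_rfl hb, mul_add] at h17
    rcases (norm_nonneg (F u₀)).eq_or_lt with h0 | h0
    · rw [← h0, zero_mul] at h1
      linarith
    · have := mul_pos h0 (hGtail b hb)
      linarith
  have huB : ∀ t ≥ (0:ℝ), u t ∈ B := by
    intro T hT
    by_contra hTB
    have hnc : Continuous fun t => ‖u t - u₀‖ := (hucont.sub continuous_const).norm
    obtain ⟨t₀, ⟨ht₀, ht₀R⟩, hmin⟩ := (isCompact_Icc.inter_right
      (isClosed_le continuous_const hnc) :
        IsCompact (Set.Icc 0 T ∩ {t | R ≤ ‖u t - u₀‖})).exists_isLeast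
      ⟨T, ⟨hT, le_rfl⟩, by
        rw [hBR] at hTB
        exact (not_le.1 hTB).le⟩
    have hlt : ∀ s, 0 ≤ s → s < t₀ → ‖u s - u₀‖ < R := by
      intro s hs0 hst
      by_contra hc
      exact absurd (hmin ⟨⟨hs0, hst.le.trans ht₀.2⟩, not_lt.1 hc⟩) (not_le.2 hst)
    have ht₀pos : 0 < t₀ := by
      rcases ht₀.1.eq_or_lt with h | h
      · rw [← h] at ht₀R
        simp [hu0] at ht₀R
        linarith
      · exact h
    have hend : ‖u t₀ - u₀‖ ≤ R := by
      have : Tendsto (fun t => ‖u t - u₀‖) (nhdsWithin t₀ (Set.Iio t₀)) (nhds ‖u t₀ - u₀‖) :=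
        (hnc.tendsto t₀).mono_left nhdsWithin_le_nhds
      refine le_of_tendsto this ?_
      filter_upwards [Ioo_mem_nhdsLT ht₀pos] with s hs
      exact (hlt s hs.1.le hs.2).le
    refine absurd (hstrict t₀ ht₀.1 fun s hs => ?_) (not_lt.2 ht₀R)
    rw [hBR]
    rcases hs.2.eq_or_lt with h | h
    · rw [h]; exact hend
    · exact (hlt s hs.1 h).le
  have hsp' : ∀ a b : ℝ, 0 ≤ a → a ≤ b → ‖u b - u a‖ ≤ ‖F u₀‖ * ∫ x in Set.Ioi a, G x := by
    intro a b ha hab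
    refine (hsp a b ha hab fun s hs => huB s hs.1).trans
      (mul_le_mul_of_nonneg_left ?_ (norm_nonneg _))
    rw [hGsplit a b ha hab]
    linarith [hGtail b (ha.trans hab)]
  have htail : Tendsto (fun t => ‖F u₀‖ * ∫ x in Set.Ioi t, G x) atTop (nhds 0) := by
    have h1 := intervalIntegral_tendsto_integral_Ioi 0 (hGi 0 le_rfl) tendsto_id
    have h2 := (h1.const_sub (∫ x in Set.Ioi 0, G x)).const_mul ‖F u₀‖
    rw [sub_self, mul_zero] at h2
    refine h2.congr' ?_
    filter_upwards [eventually_ge_atTop 0] with t ht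
    rw [hGsplit 0 t le_rfl ht, id, add_sub_cancel_left]
  have hcau : CauchySeq u := by
    rw [Metric.cauchySeq_iff']
    intro ε hε
    obtain ⟨N, hN, hN0⟩ := ((htail.eventually (gt_mem_nhds hε)).and
      (eventually_ge_atTop 0)).exists
    exact ⟨N, fun n hn => by
      rw [dist_eq_norm]
      exact (hsp' N n hN0 hn).trans_lt hN⟩
  obtain ⟨y, hy⟩ := cauchySeq_tendsto_of_complete hcau
  have hFdec : ∀ t ≥ (0:ℝ), ‖F (u t)‖ ≤ ‖F u₀‖ * Real.exp (-∫ x in (0:ℝ)..t, g₁ x) :=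
    fun t ht => hdec t ht fun s hs => huB s hs.1
  refine ⟨u, hu0, fun t ht => ?_, huB, y, hy, ?_, fun t ht => ?_, hFdec⟩
  · rw [← hvΦ t ht _ (huB t ht)]
    exact hu t
  · have h1 : Tendsto (fun t => F (u t)) atTop (nhds (F y)) := (hFcont.tendsto y).comp hy
    have h2 : Tendsto (fun t => ‖F u₀‖ * Real.exp (-∫ x in (0:ℝ)..t, g₁ x)) atTop (nhds 0) := by
      have := (Real.tendsto_exp_neg_atTop_nhds_zero.comp h14).const_mul ‖F u₀‖
      rw [mul_zero] at this
      exact this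
    have h3 : Tendsto (fun t => F (u t)) atTop (nhds 0) :=
      squeeze_zero_norm' ((eventually_ge_atTop 0).mono fun t ht => hFdec t ht) h2
    exact tendsto_nhds_unique h1 h3
  · have h1 : Tendsto (fun s => ‖u t - u s‖) atTop (nhds ‖u t - y‖) :=
      (hy.const_sub (u t)).norm
    refine le_of_tendsto h1 ?_
    filter_upwards [eventually_ge_atTop t] with s hs
    rw [norm_sub_rev]
    exact hsp' t s ht hs
end

section
/- Let H be a real Hilbert space, F : H → H continuously Fréchet differentiable, u₀ ∈ H, R > 0, B := {u ∈ H : ‖u − u₀‖ ≤ R}, and let g₁ be a positive locally integrable function on [0,∞). Suppose u : [0,T] → H is differentiable, u(0) = u₀, u(t) ∈ B for all t ∈ [0,T], u̇(t) = Φ(t,u(t)), and ⟨F′(u)Φ(t,u), F(u)⟩ ≤ −g₁(t)‖F(u)‖² for all u ∈ B and t ∈ [0,T]. Then for all t ∈ [0,T]: ‖F(u(t))‖ ≤ ‖F(u₀)‖·exp(−∫₀ᵗ g₁(x) dx). -/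
open MeasureTheory Filter
open scoped RealInnerProductSpace

/-- Inequality (1.9): along a solution of `u̇ = Φ(t,u)` staying in the ball `B`,
if `⟨F′(u)Φ(t,u), F(u)⟩ ≤ −g₁(t)‖F(u)‖²` on `B`, then
`‖F(u(t))‖ ≤ ‖F(u₀)‖ exp(−∫₀ᵗ g₁)`. -/
theorem dsm_norm_decay
    {H : Type*} [NormedAddCommGroup H] [InnerProductSpace ℝ H] [CompleteSpace H]
    (F : H → H) (F' : H → H →L[ℝ] H)
    (hF : ∀ u : H, HasFDerivAt F (F' u) u)
    (hF'cont : Continuous F')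
    (u₀ : H) (R : ℝ) (hR : 0 < R)
    (B : Set H) (hB : B = {u : H | ‖u - u₀‖ ≤ R})
    (g₁ : ℝ → ℝ)
    (hg₁pos : ∀ t ≥ (0:ℝ), 0 < g₁ t)
    (hg₁loc : ∀ t ≥ (0:ℝ), IntervalIntegrable g₁ volume 0 t)
    (T : ℝ) (hT : 0 ≤ T)
    (Φ : ℝ → H → H)
    (u : ℝ → H) (hu0 : u 0 = u₀)
    (huB : ∀ t ∈ Set.Icc (0:ℝ) T, u t ∈ B)
    (hu' : ∀ t ∈ Set.Icc (0:ℝ) T, HasDerivAt u (Φ t (u t)) t)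
    (h12 : ∀ t ∈ Set.Icc (0:ℝ) T, ∀ v ∈ B, ⟪F' v (Φ t v), F v⟫ ≤ -(g₁ t) * ‖F v‖ ^ 2) :
    ∀ t ∈ Set.Icc (0:ℝ) T,
      ‖F (u t)‖ ≤ ‖F u₀‖ * Real.exp (-∫ x in (0:ℝ)..t, g₁ x) := by
  intro t ht
  have hp : ∀ s ∈ Set.Icc (0:ℝ) T, HasDerivAt (fun s => ‖F (u s)‖ ^ 2)
      (2 * ⟪F (u s), F' (u s) (Φ s (u s))⟫) s := fun s hs =>
    ((hF (u s)).comp_hasDerivAt s (hu' s hs)).norm_sq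
  have hle : ∀ s ∈ Set.Icc (0:ℝ) T,
      2 * ⟪F (u s), F' (u s) (Φ s (u s))⟫ ≤ -2 * g₁ s * ‖F (u s)‖ ^ 2 := by
    intro s hs
    have h := h12 s hs (u s) (huB s hs)
    rw [real_inner_comm] at h
    linarith
  have hanti : AntitoneOn (fun s => ‖F (u s)‖ ^ 2) (Set.Icc 0 T) := by
    apply antitoneOn_of_deriv_nonpos (convex_Icc 0 T)
    · exact fun s hs => (hp s hs).continuousAt.continuousWithinAt
    · exact fun s hs =>
        (hp s (interior_subset hs)).differentiableAt.differentiableWithinAt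
    · intro s hs
      have hs := interior_subset hs
      rw [(hp s hs).deriv]
      have h1 := hle s hs
      have h2 := mul_nonneg (hg₁pos s hs.1).le (sq_nonneg ‖F (u s)‖)
      linarith
  by_cases h0 : F (u t) = 0
  · rw [h0, norm_zero]; positivity
  have hpt : 0 < ‖F (u t)‖ := norm_pos_iff.2 h0
  have hsub : ∀ s ∈ Set.Icc (0:ℝ) t, s ∈ Set.Icc (0:ℝ) T := fun s hs => ⟨hs.1, hs.2.trans ht.2⟩
  have hpos : ∀ s ∈ Set.Icc (0:ℝ) t, 0 < ‖F (u s)‖ ^ 2 := fun s hs =>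
    lt_of_lt_of_le (by positivity) (hanti (hsub s hs) ht hs.2)
  have hlog : ∀ s ∈ Set.Icc (0:ℝ) t, HasDerivAt (fun s => Real.log (‖F (u s)‖ ^ 2))
      (2 * ⟪F (u s), F' (u s) (Φ s (u s))⟫ / ‖F (u s)‖ ^ 2) s := fun s hs =>
    (hp s (hsub s hs)).log (hpos s hs).ne'
  have key := intervalIntegral.sub_le_integral_of_hasDeriv_right_of_le (φ := fun s => -2 * g₁ s)
    ht.1 (fun s hs => (hlog s hs).continuousAt.continuousWithinAt)
    (fun s hs => (hlog s (Set.Ioo_subset_Icc_self hs)).hasDerivWithinAt)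
    (((intervalIntegrable_iff_integrableOn_Icc_of_le ht.1).1 (hg₁loc t ht.1)).const_mul (-2))
    (fun s hs => by
      have hs := Set.Ioo_subset_Icc_self hs
      rw [div_le_iff₀ (hpos s hs)]
      exact hle s (hsub s hs))
  rw [intervalIntegral.integral_const_mul] at key
  simp only [Real.log_pow, hu0] at key
  have hp0 : 0 < ‖F u₀‖ := by
    have h := hpos 0 ⟨le_rfl, ht.1⟩
    rw [hu0] at h
    exact lt_of_le_of_ne (norm_nonneg _) (fun h' => by rw [← h'] at h; norm_num at h)
  push_cast at key
  rw [← Real.log_le_log_iff hpt (by positivity), Real.log_mul hp0.ne' (Real.exp_pos _).ne',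
    Real.log_exp]
  linarith
end

section
/- Let H be a real Hilbert space, F : H → H continuously Fréchet differentiable, u₀ ∈ H, R > 0, B := {u ∈ H : ‖u − u₀‖ ≤ R}, g₁ positive and locally integrable on [0,∞), g₂ positive and continuous on [0,∞). Suppose u : [0,T] → H is differentiable, u(0) = u₀, u(t) ∈ B for all t ∈ [0,T], u̇(t) = Φ(t,u(t)), and for all u ∈ B and all t ∈ [0,T]: ⟨F′(u)Φ(t,u), F(u)⟩ ≤ −g₁(t)‖F(u)‖² and ‖Φ(t,u)‖ ≤ g₂(t)‖F(u)‖. Then for all 0 ≤ s ≤ t ≤ T: ‖u(t) − u(s)‖ ≤ ‖F(u₀)‖·∫ₛᵗ G(x) dx, where G(x) := g₂(x)·exp(−∫₀ˣ g₁(z) dz). -/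
open MeasureTheory Filter
open scoped RealInnerProductSpace

/-- Inequality (2.1): along a solution of `u̇ = Φ(t,u)` staying in the ball `B`,
under (1.2) and (1.3) one has `‖u(t)−u(s)‖ ≤ ‖F(u₀)‖ ∫ₛᵗ G(x) dx`, where
`G(x) = g₂(x) exp(−∫₀ˣ g₁)`. -/
theorem dsm_cauchy_estimate
    {H : Type*} [NormedAddCommGroup H] [InnerProductSpace ℝ H] [CompleteSpace H]
    (F : H → H) (F' : H → H →L[ℝ] H)
    (hF : ∀ u : H, HasFDerivAt F (F' u) u)
    (hF'cont : Continuous F')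
    (u₀ : H) (R : ℝ) (hR : 0 < R)
    (B : Set H) (hB : B = {u : H | ‖u - u₀‖ ≤ R})
    (g₁ g₂ : ℝ → ℝ)
    (hg₁pos : ∀ t ≥ (0:ℝ), 0 < g₁ t)
    (hg₁loc : ∀ t ≥ (0:ℝ), IntervalIntegrable g₁ volume 0 t)
    (hg₂pos : ∀ t ≥ (0:ℝ), 0 < g₂ t)
    (hg₂cont : ContinuousOn g₂ (Set.Ici (0:ℝ)))
    (T : ℝ) (hT : 0 ≤ T)
    (Φ : ℝ → H → H)
    (u : ℝ → H) (hu0 : u 0 = u₀)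
    (huB : ∀ t ∈ Set.Icc (0:ℝ) T, u t ∈ B)
    (hu' : ∀ t ∈ Set.Icc (0:ℝ) T, HasDerivAt u (Φ t (u t)) t)
    (h12 : ∀ t ∈ Set.Icc (0:ℝ) T, ∀ v ∈ B, ⟪F' v (Φ t v), F v⟫ ≤ -(g₁ t) * ‖F v‖ ^ 2)
    (h13 : ∀ t ∈ Set.Icc (0:ℝ) T, ∀ v ∈ B, ‖Φ t v‖ ≤ g₂ t * ‖F v‖)
    (G : ℝ → ℝ) (hG : G = fun x => g₂ x * Real.exp (-∫ z in (0:ℝ)..x, g₁ z)) :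
    ∀ s t : ℝ, 0 ≤ s → s ≤ t → t ≤ T →
      ‖u t - u s‖ ≤ ‖F u₀‖ * ∫ x in s..t, G x := by
  have hd : ∀ t ∈ Set.Icc (0:ℝ) T, HasDerivAt (fun t => ‖F (u t)‖ ^ 2)
      (2 * ⟪F (u t), F' (u t) (Φ t (u t))⟫) t := by
    intro t ht
    exact ((hF (u t)).comp_hasDerivAt t (hu' t ht)).norm_sq
  have hdle : ∀ t ∈ Set.Icc (0:ℝ) T,
      2 * ⟪F (u t), F' (u t) (Φ t (u t))⟫ ≤ -2 * g₁ t * ‖F (u t)‖ ^ 2 := by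
    intro t ht
    have := h12 t ht (u t) (huB t ht)
    rw [real_inner_comm]
    linarith
  have hanti : AntitoneOn (fun t => ‖F (u t)‖ ^ 2) (Set.Icc 0 T) := by
    refine antitoneOn_of_hasDerivWithinAt_nonpos (convex_Icc _ _)
      (f' := fun t => 2 * ⟪F (u t), F' (u t) (Φ t (u t))⟫)
      (fun t ht => (hd t ht).continuousAt.continuousWithinAt)
      (fun t ht => (hd t (interior_subset ht)).hasDerivWithinAt) ?_
    intro t ht
    have ht' := interior_subset ht
    refine (hdle t ht').trans ?_
    have h1 := hg₁pos t ht'.1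
    have : 0 ≤ g₁ t * ‖F (u t)‖ ^ 2 := by positivity
    linarith
  have hdecay : ∀ t ∈ Set.Icc (0:ℝ) T,
      ‖F (u t)‖ ≤ ‖F u₀‖ * Real.exp (-∫ z in (0:ℝ)..t, g₁ z) := by
    intro t ht
    by_cases h0 : ‖F (u t)‖ = 0
    · rw [h0]; positivity
    have hsub : ∀ x ∈ Set.Icc (0:ℝ) t, x ∈ Set.Icc (0:ℝ) T := fun x hx =>
      ⟨hx.1, hx.2.trans ht.2⟩
    have hpos2 : ∀ x ∈ Set.Icc (0:ℝ) t, 0 < ‖F (u x)‖ ^ 2 := by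
      intro x hx
      have h1 : ‖F (u t)‖ ^ 2 ≤ ‖F (u x)‖ ^ 2 := hanti (hsub x hx) ht hx.2
      have : 0 < ‖F (u t)‖ ^ 2 := by positivity
      linarith
    have hlog : ∀ x ∈ Set.Icc (0:ℝ) t, HasDerivAt (fun x => Real.log (‖F (u x)‖ ^ 2))
        ((2 * ⟪F (u x), F' (u x) (Φ x (u x))⟫) / ‖F (u x)‖ ^ 2) x := fun x hx =>
      (hd x (hsub x hx)).log (hpos2 x hx).ne'
    have hkey := intervalIntegral.sub_le_integral_of_hasDeriv_right_of_le (a := 0) (b := t)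
      (φ := fun x => -2 * g₁ x) ht.1
      (fun x hx => (hlog x hx).continuousAt.continuousWithinAt)
      (fun x hx => (hlog x (Set.Ioo_subset_Icc_self hx)).hasDerivWithinAt)
      (((intervalIntegrable_iff_integrableOn_Icc_of_le ht.1).1 (hg₁loc t ht.1)).const_mul (-2))
      (fun x hx => by
        have hx' := Set.Ioo_subset_Icc_self hx
        rw [div_le_iff₀ (hpos2 x hx')]
        exact hdle x (hsub x hx'))
    rw [intervalIntegral.integral_const_mul, hu0] at hkey
    simp only [Real.log_pow] at hkey
    have p0 : 0 < ‖F u₀‖ := by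
      have := hpos2 0 ⟨le_rfl, ht.1⟩
      rw [hu0] at this
      exact lt_of_le_of_ne (norm_nonneg _) (fun h => by rw [← h] at this; norm_num at this)
    have pt : 0 < ‖F (u t)‖ := lt_of_le_of_ne (norm_nonneg _) (Ne.symm h0)
    rw [← Real.log_le_log_iff pt (by positivity), Real.log_mul p0.ne' (Real.exp_ne_zero _),
      Real.log_exp]
    push_cast at hkey
    linarith
  have hGc : ContinuousOn G (Set.Icc 0 T) := by
    rw [hG]
    refine (hg₂cont.mono (fun x hx => hx.1)).mul ?_
    refine Real.continuous_exp.comp_continuousOn (ContinuousOn.neg ?_)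
    have := intervalIntegral.continuousOn_primitive_interval' (a := 0) (hg₁loc T hT)
      Set.left_mem_uIcc
    rwa [Set.uIcc_of_le hT] at this
  intro s t hs hst htT
  have hsub : Set.Icc s t ⊆ Set.Icc 0 T := Set.Icc_subset_Icc hs htT
  rw [← intervalIntegral.integral_const_mul]
  refine norm_sub_le_integral_of_norm_deriv_le_of_le hst
    (fun x hx => (hu' x (hsub hx)).continuousAt.continuousWithinAt)
    (fun x hx => (hu' x (hsub (Set.Ioo_subset_Icc_self hx))).differentiableAt.differentiableWithinAt)
    (Eventually.of_forall fun x hx => ?_) ?_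
  · have hx' := hsub (Set.Ioo_subset_Icc_self hx)
    rw [(hu' x hx').deriv, hG]
    calc _ ≤ g₂ x * ‖F (u x)‖ := h13 x hx' _ (huB x hx')
      _ ≤ g₂ x * (‖F u₀‖ * Real.exp (-∫ z in (0:ℝ)..x, g₁ z)) :=
        mul_le_mul_of_nonneg_left (hdecay x hx') (hg₂pos x hx'.1).le
      _ = _ := by ring
  · refine (ContinuousOn.intervalIntegrable ?_).const_mul _
    rw [Set.uIcc_of_le hst]
    exact hGc.mono hsub
end

section
/- Let g : [0,∞) → [0,∞) be differentiable, let g₁ : [0,∞) → (0,∞) be continuous, and let 0 < a < 2. Suppose g(t)·g′(t) ≤ −g₁(t)·g(t)^a for all t ≥ 0. Then for every t ≥ 0: g(t)^{2−a} ≤ max(0, g(0)^{2−a} − (2−a)·∫₀ᵗ g₁(s) ds). In particular, if T > 0 satisfies g(0)^{2−a} − (2−a)·∫₀^T g₁(s) ds = 0, then g(t) = 0 for all t ≥ T. -/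
open MeasureTheory Filter

/-- Inequality (2.3)–(2.4): if `g ≥ 0` satisfies `g g′ ≤ −g₁ gᵃ` with `0 < a < 2`
and `g₁ > 0` continuous, then `g(t)^{2−a} ≤ max(0, g(0)^{2−a} − (2−a)∫₀ᵗ g₁)`;
in particular `g ≡ 0` past the time `T` at which the right side vanishes. -/
theorem differential_inequality_finite_extinction
    (g g' g₁ : ℝ → ℝ)
    (hg : ∀ t ≥ (0:ℝ), HasDerivAt g (g' t) t)
    (hgnn : ∀ t ≥ (0:ℝ), 0 ≤ g t)
    (hg₁pos : ∀ t ≥ (0:ℝ), 0 < g₁ t)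
    (hg₁cont : ContinuousOn g₁ (Set.Ici (0:ℝ)))
    (a : ℝ) (ha : 0 < a) (ha2 : a < 2)
    (hineq : ∀ t ≥ (0:ℝ), g t * g' t ≤ -(g₁ t) * g t ^ a) :
    (∀ t ≥ (0:ℝ), g t ^ (2 - a) ≤ max 0 (g 0 ^ (2 - a) - (2 - a) * ∫ s in (0:ℝ)..t, g₁ s))
      ∧ ∀ T > (0:ℝ), g 0 ^ (2 - a) - (2 - a) * (∫ s in (0:ℝ)..T, g₁ s) = 0 →
          ∀ t ≥ T, g t = 0 := by
  have hp : 0 < 2 - a := by linarith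
  have hanti : AntitoneOn (fun t => g t ^ 2) (Set.Ici (0:ℝ)) := by
    apply antitoneOn_of_hasDerivWithinAt_nonpos (f' := fun t => 2 * (g t * g' t)) (convex_Ici 0)
    · intro x hx
      exact ((hg x hx).continuousAt.pow 2).continuousWithinAt
    · intro x hx
      rw [interior_Ici] at hx
      have := (hg x (le_of_lt hx)).pow 2
      refine (HasDerivAt.hasDerivWithinAt ?_)
      exact this.congr_deriv (by push_cast; ring)
    · intro x hx
      rw [interior_Ici] at hx
      have h0 : (0:ℝ) ≤ x := le_of_lt hx
      have h1 := hineq x h0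
      have h2 := mul_nonneg (hg₁pos x h0).le (Real.rpow_nonneg (hgnn x h0) a)
      show 2 * (g x * g' x) ≤ 0
      linarith
  obtain ⟨h, hh⟩ : ∃ h : ℝ → ℝ, h = fun s => g₁ (max s 0) := ⟨_, rfl⟩
  have hcont : Continuous h := by
    rw [hh]
    exact hg₁cont.comp_continuous (by fun_prop) (fun x => Set.mem_Ici.2 (le_max_right _ _))
  have hheq : ∀ s ≥ (0:ℝ), h s = g₁ s := by
    intro s hs
    rw [hh]
    simp [max_eq_left hs]
  have hint : ∀ t ≥ (0:ℝ), ∫ s in (0:ℝ)..t, g₁ s = ∫ s in (0:ℝ)..t, h s := by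
    intro t ht
    apply intervalIntegral.integral_congr
    intro s hs
    rw [Set.uIcc_of_le ht] at hs
    exact (hheq s hs.1).symm
  have main : ∀ t ≥ (0:ℝ),
      g t ^ (2 - a) ≤ max 0 (g 0 ^ (2 - a) - (2 - a) * ∫ s in (0:ℝ)..t, g₁ s) := by
    intro t ht
    rcases (hgnn t ht).eq_or_lt with h0 | hpos
    · rw [← h0, Real.zero_rpow hp.ne']
      exact le_max_left _ _
    · refine le_trans ?_ (le_max_right _ _)
      have gpos : ∀ s ∈ Set.Icc (0:ℝ) t, 0 < g s := by
        intro s hs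
        have h1 : g t ^ 2 ≤ g s ^ 2 := hanti hs.1 ht hs.2
        have h2 := hgnn s hs.1
        nlinarith
      have hder : ∀ s ∈ Set.Icc (0:ℝ) t,
          HasDerivAt (fun s => g s ^ (2 - a) + (2 - a) * ∫ u in (0:ℝ)..s, h u)
            (g' s * (2 - a) * g s ^ (2 - a - 1) + (2 - a) * h s) s := by
        intro s hs
        exact ((hg s hs.1).rpow_const (Or.inl (gpos s hs).ne')).add
          ((hcont.integral_hasStrictDerivAt 0 s).hasDerivAt.const_mul _)
      have hF : AntitoneOn (fun s => g s ^ (2 - a) + (2 - a) * ∫ u in (0:ℝ)..s, h u)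
          (Set.Icc (0:ℝ) t) := by
        apply antitoneOn_of_hasDerivWithinAt_nonpos (convex_Icc 0 t)
          (f' := fun s => g' s * (2 - a) * g s ^ (2 - a - 1) + (2 - a) * h s)
        · intro s hs
          exact (hder s hs).continuousAt.continuousWithinAt
        · intro s hs
          exact (hder s (interior_subset hs)).hasDerivWithinAt
        · intro s hs
          have hs := interior_subset hs
          have gp := gpos s hs
          have e : g s ^ (2 - a - 1) = g s * g s ^ (-a) := by
            rw [show 2 - a - 1 = 1 + -a by ring, Real.rpow_add gp, Real.rpow_one]
          have e2 : g s ^ a * g s ^ (-a) = 1 := by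
            rw [← Real.rpow_add gp]; simp
          have k := mul_le_mul_of_nonneg_right (hineq s hs.1) (Real.rpow_nonneg gp.le (-a))
          rw [mul_assoc (-(g₁ s)), e2] at k
          show g' s * (2 - a) * g s ^ (2 - a - 1) + (2 - a) * h s ≤ 0
          rw [e, hheq s hs.1]
          have : (2 - a) * (g s * g' s * g s ^ (-a) + g₁ s) ≤ 0 :=
            mul_nonpos_of_nonneg_of_nonpos hp.le (by linarith)
          linarith
      have := hF (Set.left_mem_Icc.2 ht) (Set.right_mem_Icc.2 ht) ht
      simp only [intervalIntegral.integral_same] at this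
      rw [hint t ht]
      linarith
  refine ⟨main, ?_⟩
  intro T hT hT0 t ht
  have ht0 : 0 ≤ t := hT.le.trans ht
  have m := main t ht0
  rw [hint t ht0] at m
  rw [hint T hT.le] at hT0
  have hadd := intervalIntegral.integral_add_adjacent_intervals
    (hcont.intervalIntegrable (μ := volume) 0 T) (hcont.intervalIntegrable T t)
  have hnn : 0 ≤ ∫ s in T..t, h s := by
    apply intervalIntegral.integral_nonneg ht
    intro s hs
    have : 0 ≤ s := hT.le.trans hs.1
    rw [hheq s this]
    exact (hg₁pos s this).le
  have := mul_nonneg hp.le hnn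
  rw [← hadd, max_eq_left (by linarith)] at m
  by_contra hne
  have := Real.rpow_pos_of_pos (lt_of_le_of_ne (hgnn t ht0) (Ne.symm hne)) (2 - a)
  linarith
end

section
/- Let H be a real Hilbert space, F : H → H Fréchet differentiable, u₀ ∈ H with F(u₀) ≠ 0, R > 0, B := {u ∈ H : ‖u − u₀‖ ≤ R}. Let Φ : [0,∞) × H → H be continuous in t and Lipschitz in u on B, let g₁, g₂ be positive functions on [0,∞) with g₂ continuous and g₁ locally integrable, and let a > 2. Define h(t) := [‖F(u₀)‖^{−(a−2)} + (a−2)·∫₀ᵗ g₁(s) ds]^{−1/(a−2)}. Assume: (i) ⟨F′(u)Φ(t,u), F(u)⟩ ≤ −g₁(t)‖F(u)‖^a for all u ∈ B and t ≥ 0; (ii) ‖Φ(t,u)‖ ≤ g₂(t)‖F(u)‖ for all u ∈ B and t ≥ 0; (iii) ∫₀^∞ g₁(t) dt = +∞; (iv) ∫₀^∞ g₂(s)·h(s) ds ≤ R. Then the Cauchy problem u̇(t) = Φ(t,u(t)), u(0) = u₀ has a global solution u with u(t) ∈ B for all t ≥ 0, the strong limit y := lim_{t→∞} u(t) exists, y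 ∈ B, and F(y) = 0. -/
open MeasureTheory Filter
open scoped RealInnerProductSpace

lemma exists_retraction {H : Type*} [NormedAddCommGroup H] [InnerProductSpace ℝ H] [CompleteSpace H]
    (B : Set H) (hne : B.Nonempty) (hc : IsClosed B) (hconv : Convex ℝ B) :
    ∃ P : H → H, LipschitzWith 1 P ∧ (∀ x, P x ∈ B) ∧ ∀ x ∈ B, P x = x := by
  choose P hPB hP using exists_norm_eq_iInf_of_complete_convex hne hc.isComplete hconv
  have hP' : ∀ x, ∀ w ∈ B, ⟪x - P x, w - P x⟫ ≤ 0 := fun x =>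
    (norm_eq_iInf_iff_real_inner_le_zero hconv (hPB x)).1 (hP x)
  refine ⟨P, ?_, hPB, ?_⟩
  · refine LipschitzWith.of_dist_le_mul fun x y => ?_
    simp only [NNReal.coe_one, one_mul, dist_eq_norm]
    have h1 := hP' x _ (hPB y)
    have h2 := hP' y _ (hPB x)
    have h3 : ‖P x - P y‖ * ‖P x - P y‖ ≤ ⟪x - y, P x - P y⟫ := by
      rw [← real_inner_self_eq_norm_mul_norm]
      simp only [inner_sub_left, inner_sub_right] at *
      linarith
    have h4 := real_inner_le_norm (x - y) (P x - P y)
    by_contra! hlt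
    have : 0 < ‖P x - P y‖ := (norm_nonneg _).trans_lt hlt
    nlinarith
  · intro x hx
    have := hP' x x hx
    rw [real_inner_self_eq_norm_sq] at this
    have h0 : ‖x - P x‖ = 0 := by nlinarith [norm_nonneg (x - P x)]
    exact (sub_eq_zero.1 (norm_eq_zero.1 h0)).symm

lemma exists_global {H : Type*} [NormedAddCommGroup H] [NormedSpace ℝ H] [CompleteSpace H]
    (v : ℝ → H → H) (K : NNReal) (hlip : ∀ t, LipschitzWith K (v t))
    (hcont : ∀ x, Continuous fun t => v t x)
    (hbdd : ∀ T : ℝ, ∃ C : ℝ, ∀ t ∈ Set.Icc (-T) T, ∀ x, ‖v t x‖ ≤ C) (x₀ : H) :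
    ∃ u : ℝ → H, u 0 = x₀ ∧ ∀ t, HasDerivAt u (v t (u t)) t := by
  have key : ∀ n : ℕ, ∃ α : ℝ → H, α 0 = x₀ ∧
      ∀ t ∈ Set.Ioo (-((n:ℝ)+1)) (n+1), HasDerivAt α (v t (α t)) t := by
    intro n
    have hn : (0:ℝ) < n + 1 := by positivity
    obtain ⟨C, hC⟩ := hbdd (n+1)
    have hpl : IsPicardLindelof v (tmin := -((n:ℝ)+1)) (tmax := n+1)
        ⟨0, by constructor <;> linarith⟩ x₀ (C.toNNReal * (n+1)) 0 C.toNNReal K := by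
      refine ⟨fun t _ => (hlip t).lipschitzOnWith, fun x _ => (hcont x).continuousOn,
        fun t ht x _ => (hC t ht x).trans (Real.le_coe_toNNReal C), ?_⟩
      simp
    obtain ⟨α, h0, hα⟩ := hpl.exists_eq_forall_mem_Icc_hasDerivWithinAt₀
    exact ⟨α, h0, fun t ht => (hα t (Set.Ioo_subset_Icc_self ht)).hasDerivAt (Icc_mem_nhds ht.1 ht.2)⟩
  choose α h0 hα using key
  have huniq : ∀ n m : ℕ, n ≤ m → Set.EqOn (α n) (α m) (Set.Ioo (-((n:ℝ)+1)) (n+1)) := by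
    intro n m hnm
    have hn : (0:ℝ) < n + 1 := by positivity
    have hnm' : (n:ℝ) ≤ m := by exact_mod_cast hnm
    refine ODE_solution_unique_of_mem_Ioo (v := v) (K := K) (s := fun _ => Set.univ) (t₀ := 0)
      (fun t _ => (hlip t).lipschitzOnWith) ⟨by linarith, hn⟩ (fun t ht => ⟨hα n t ht, trivial⟩)
      (fun t ht => ⟨hα m t ⟨by linarith [ht.1], by linarith [ht.2]⟩, trivial⟩) (by rw [h0, h0])
  have hmem : ∀ t : ℝ, t ∈ Set.Ioo (-((⌈|t|⌉₊:ℝ)+1)) (⌈|t|⌉₊+1) := by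
    intro t
    have := Nat.le_ceil |t|
    have h1 := le_abs_self t
    have h2 := neg_abs_le t
    constructor <;> linarith
  refine ⟨fun t => α ⌈|t|⌉₊ t, by simp [h0], fun t => ?_⟩
  have hd := hα _ t (hmem t)
  refine hd.congr_of_eventuallyEq ?_
  filter_upwards [isOpen_Ioo.mem_nhds (hmem t)] with s hs
  rcases le_total ⌈|s|⌉₊ ⌈|t|⌉₊ with hle | hle
  · exact huniq _ _ hle (hmem s)
  · exact (huniq _ _ hle hs).symm

/-- Decay estimate for `‖F u‖` along the flow. -/
lemma decay (q q' g₁ : ℝ → ℝ) (a T : ℝ) (ha : 2 < a) (hT : 0 ≤ T)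
    (hq : ∀ t ∈ Set.Icc 0 T, HasDerivAt (fun t => q t ^ 2) (2 * q' t) t)
    (hq0 : ∀ t, 0 ≤ q t) (hqc : ContinuousOn q (Set.Icc 0 T)) (hpos0 : 0 < q 0)
    (hg : ∀ t ≥ (0:ℝ), 0 < g₁ t) (hint : IntervalIntegrable g₁ volume 0 T)
    (hle : ∀ t ∈ Set.Icc 0 T, q' t ≤ -(g₁ t) * q t ^ a) :
    q T ≤ (q 0 ^ (-(a - 2)) + (a - 2) * ∫ s in (0:ℝ)..T, g₁ s) ^ (-(1 / (a - 2))) := by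
  have ha2 : 0 < a - 2 := by linarith
  have hI : 0 ≤ ∫ s in (0:ℝ)..T, g₁ s :=
    intervalIntegral.integral_nonneg hT fun t ht => (hg t ht.1).le
  have hA : 0 < q 0 ^ (-(a - 2)) + (a - 2) * ∫ s in (0:ℝ)..T, g₁ s := by
    have := Real.rpow_pos_of_pos hpos0 (-(a-2))
    positivity
  rcases (hq0 T).eq_or_lt with hz | hTpos
  · rw [← hz]; positivity
  have hanti : AntitoneOn (fun t => q t ^ 2) (Set.Icc 0 T) := by
    refine antitoneOn_of_hasDerivWithinAt_nonpos (convex_Icc 0 T) (hqc.pow 2)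
      (f' := fun t => 2 * q' t) (fun t ht => (hq t (interior_subset ht)).hasDerivWithinAt) ?_
    intro t ht
    have ht := interior_subset ht
    have h1 := hle t ht
    have h2 := mul_nonneg (hg t ht.1).le (Real.rpow_nonneg (hq0 t) a)
    linarith
  have hqpos : ∀ t ∈ Set.Icc 0 T, 0 < q t := by
    intro t ht
    have h1 : q T ^ 2 ≤ q t ^ 2 := hanti ht ⟨hT, le_rfl⟩ ht.2
    have h2 := hq0 t
    exact hTpos.trans_le ((sq_le_sq₀ hTpos.le h2).1 h1)
  have hw : ∀ t ∈ Set.Icc 0 T, HasDerivAt (fun t => (q t ^ 2) ^ (-((a-2)/2)))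
      (2 * q' t * (-((a-2)/2)) * (q t ^ 2) ^ (-((a-2)/2) - 1)) t := fun t ht =>
    (hq t ht).rpow_const (Or.inl (pow_pos (hqpos t ht) 2).ne')
  have hpw : ∀ t ∈ Set.Icc 0 T, ∀ b : ℝ, (q t ^ 2) ^ b = q t ^ (2 * b) := fun t ht b => by
    rw [← Real.rpow_natCast, ← Real.rpow_mul (hq0 t)]; norm_num
  have hmain := intervalIntegral.integral_le_sub_of_hasDeriv_right_of_le (φ := fun t => (a-2) * g₁ t) hT
    (fun t ht => (hw t ht).continuousAt.continuousWithinAt)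
    (fun t ht => (hw t (Set.Ioo_subset_Icc_self ht)).hasDerivWithinAt)
    ((integrableOn_Icc_iff_integrableOn_Ioc).2 ((intervalIntegrable_iff_integrableOn_Ioc_of_le hT).1 (hint.const_mul (a-2))))
    (by
      intro t ht
      have ht := Set.Ioo_subset_Icc_self ht
      rw [hpw t ht]
      have h1 := hle t ht
      have hp := hqpos t ht
      have h2 : q t ^ a * q t ^ (2 * (-((a-2)/2) - 1)) = 1 := by
        rw [← Real.rpow_add hp]
        ring_nf
        simp
      have h3 := Real.rpow_pos_of_pos hp (2 * (-((a-2)/2) - 1))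
      have h4 := mul_le_mul_of_nonneg_right h1 (mul_pos h3 ha2).le
      have h5 : -(g₁ t) * q t ^ a * (q t ^ (2 * (-((a-2)/2) - 1)) * (a-2)) = - ((a-2) * g₁ t) := by
        linear_combination (-(g₁ t) * (a-2)) * h2
      rw [h5] at h4
      linarith)
  rw [hpw T ⟨hT, le_rfl⟩, hpw 0 ⟨le_rfl, hT⟩, intervalIntegral.integral_const_mul,
    show 2 * (-((a-2)/2)) = -(a-2) by ring] at hmain
  have h6 : q 0 ^ (-(a - 2)) + (a - 2) * ∫ s in (0:ℝ)..T, g₁ s ≤ q T ^ (-(a-2)) := by linarith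
  have h7 := Real.rpow_le_rpow_of_nonpos hA h6 (z := -(1/(a-2))) (by
    have : 0 < 1 / (a-2) := by positivity
    linarith)
  rw [← Real.rpow_mul hTpos.le, show -(a-2) * -(1/(a-2)) = 1 by field_simp, Real.rpow_one] at h7
  exact h7

theorem dsm_theorem_three
    {H : Type*} [NormedAddCommGroup H] [InnerProductSpace ℝ H] [CompleteSpace H]
    (F : H → H) (F' : H → H →L[ℝ] H)
    (hF : ∀ u : H, HasFDerivAt F (F' u) u)
    (u₀ : H) (hFu₀ : F u₀ ≠ 0) (R : ℝ) (hR : 0 < R)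
    (B : Set H) (hB : B = {u : H | ‖u - u₀‖ ≤ R})
    (Φ : ℝ → H → H)
    (hΦcont : ∀ u ∈ B, ContinuousOn (fun t => Φ t u) (Set.Ici (0:ℝ)))
    (L : NNReal) (hΦlip : ∀ t ∈ Set.Ici (0:ℝ), LipschitzOnWith L (Φ t) B)
    (g₁ g₂ : ℝ → ℝ)
    (hg₁pos : ∀ t ≥ (0:ℝ), 0 < g₁ t)
    (hg₂pos : ∀ t ≥ (0:ℝ), 0 < g₂ t)
    (hg₂cont : ContinuousOn g₂ (Set.Ici (0:ℝ)))
    (hg₁loc : ∀ t ≥ (0:ℝ), IntervalIntegrable g₁ volume 0 t)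
    (a : ℝ) (ha : 2 < a)
    (h : ℝ → ℝ)
    (hh : h = fun t =>
      (‖F u₀‖ ^ (-(a - 2)) + (a - 2) * ∫ s in (0:ℝ)..t, g₁ s) ^ (-(1 / (a - 2))))
    (h22 : ∀ t ≥ (0:ℝ), ∀ u ∈ B, ⟪F' u (Φ t u), F u⟫ ≤ -(g₁ t) * ‖F u‖ ^ a)
    (h13 : ∀ t ≥ (0:ℝ), ∀ u ∈ B, ‖Φ t u‖ ≤ g₂ t * ‖F u‖)
    (h14 : Tendsto (fun t => ∫ s in (0:ℝ)..t, g₁ s) atTop atTop)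
    (h26int : IntegrableOn (fun s => g₂ s * h s) (Set.Ici (0:ℝ)))
    (h26 : ∫ s in Set.Ioi (0:ℝ), g₂ s * h s ≤ R) :
    ∃ u : ℝ → H, u 0 = u₀ ∧
      (∀ t ≥ (0:ℝ), HasDerivAt u (Φ t (u t)) t) ∧
      (∀ t ≥ (0:ℝ), u t ∈ B) ∧
      ∃ y : H, Tendsto u atTop (nhds y) ∧ y ∈ B ∧ F y = 0 := by
  have hB' : B = Metric.closedBall u₀ R := by
    rw [hB]; ext x; simp [dist_eq_norm]
  have hBc : IsClosed B := hB' ▸ Metric.isClosed_closedBall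
  have hu₀B : u₀ ∈ B := hB' ▸ Metric.mem_closedBall_self hR.le
  obtain ⟨P, hPlip, hPB, hPid⟩ := exists_retraction B ⟨u₀, hu₀B⟩ hBc
    (hB' ▸ convex_closedBall u₀ R)
  set v : ℝ → H → H := fun t x => Φ (max t 0) (P x) with hv
  have hvlip : ∀ t, LipschitzWith L (v t) := by
    intro t
    have := (hΦlip (max t 0) (Set.mem_Ici.2 (le_max_right _ _))).comp (s := Set.univ) hPlip.lipschitzOnWith
      (fun x _ => hPB x)
    rw [mul_one, lipschitzOnWith_univ] at this
    exact this
  have hvcont : ∀ x, Continuous fun t => v t x := fun x =>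
    (hΦcont (P x) (hPB x)).comp_continuous (by fun_prop) (fun t => Set.mem_Ici.2 (le_max_right _ _))
  have hvid : ∀ t ≥ (0:ℝ), ∀ x ∈ B, v t x = Φ t x := fun t ht x hx => by
    simp only [hv, max_eq_left ht, hPid x hx]
  obtain ⟨u, hu0, hu⟩ := exists_global v L hvlip hvcont (by
    intro T
    obtain ⟨C, hC⟩ := (isCompact_Icc (a := -T) (b := T)).exists_bound_of_continuousOn
      (hvcont u₀).continuousOn
    refine ⟨C + L * R, fun t ht x => ?_⟩
    have h1 := hC t ht
    have h2 := (hΦlip (max t 0) (Set.mem_Ici.2 (le_max_right _ _))).dist_le_mul _ (hPB x) _ (hPB u₀)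
    have h3 : dist (P x) (P u₀) ≤ R := by
      rw [hPid u₀ hu₀B]
      have := hPB x
      rw [hB'] at this
      exact this
    have h4 : dist (Φ (max t 0) (P x)) (Φ (max t 0) (P u₀)) ≤ L * R :=
      h2.trans (by gcongr)
    rw [dist_eq_norm] at h4
    have h5 := norm_le_norm_add_norm_sub' (Φ (max t 0) (P x)) (Φ (max t 0) (P u₀))
    simp only [hv] at h1 ⊢
    linarith) u₀
  have huc : Continuous u := continuous_iff_continuousAt.2 fun t => (hu t).continuousAt
  have hvc : Continuous fun t => v t (u t) :=
    (continuous_prod_of_continuous_lipschitzWith' (fun p : ℝ × H => v p.1 p.2) L hvlip hvcont).comp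
      (continuous_id.prodMk huc)
  have hh0 : ∀ t ≥ (0:ℝ), 0 < h t := by
    intro t ht
    rw [hh]
    have hI : 0 ≤ ∫ s in (0:ℝ)..t, g₁ s :=
      intervalIntegral.integral_nonneg ht fun s hs => (hg₁pos s hs.1).le
    have h1 := Real.rpow_pos_of_pos (norm_pos_iff.2 hFu₀) (-(a-2))
    have ha2 : 0 < a - 2 := by linarith
    exact Real.rpow_pos_of_pos (by positivity) _
  -- decay while in the ball
  have hdecay : ∀ T ≥ (0:ℝ), (∀ t ∈ Set.Icc 0 T, u t ∈ B) → ‖F (u T)‖ ≤ h T := by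
    intro T hT hin
    rw [hh]
    have hFu : ∀ t, HasDerivAt (fun t => F (u t)) (F' (u t) (v t (u t))) t := fun t =>
      (hF (u t)).comp_hasDerivAt t (hu t)
    have := decay (fun t => ‖F (u t)‖) (fun t => ⟪F' (u t) (v t (u t)), F (u t)⟫) g₁ a T ha hT
      (fun t _ => by
        have := (hFu t).norm_sq
        rwa [real_inner_comm] at this) (fun t => norm_nonneg _)
      (fun t _ => (hFu t).continuousAt.norm.continuousWithinAt)
      (by simpa [hu0] using hFu₀) hg₁pos (hg₁loc T hT)
      (fun t ht => by
        rw [hvid t ht.1 _ (hin t ht)]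
        exact h22 t ht.1 _ (hin t ht))
    simpa only [hu0] using this
  have hbound : ∀ T ≥ (0:ℝ), (∀ t ∈ Set.Icc 0 T, u t ∈ B) → ‖v T (u T)‖ ≤ g₂ T * h T := by
    intro T hT hin
    have hm := hin T ⟨hT, le_rfl⟩
    rw [hvid T hT _ hm]
    exact (h13 T hT _ hm).trans (mul_le_mul_of_nonneg_left (hdecay T hT hin) (hg₂pos T hT).le)
  have hgh : ∀ t ≥ (0:ℝ), 0 < g₂ t * h t := fun t ht => mul_pos (hg₂pos t ht) (hh0 t ht)
  have h26int' : IntegrableOn (fun s => g₂ s * h s) (Set.Ioi (0:ℝ)) :=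
    h26int.mono_set Set.Ioi_subset_Ici_self
  have hstrict : ∀ T ≥ (0:ℝ), (∀ t ∈ Set.Icc 0 T, u t ∈ B) → ‖u T - u₀‖ < R := by
    intro T hT hin
    have hii : IntervalIntegrable (fun s => g₂ s * h s) volume 0 T :=
      (intervalIntegrable_iff_integrableOn_Ioc_of_le hT).2
        (h26int'.mono_set Set.Ioc_subset_Ioi_self)
    have h1 : ∫ s in (0:ℝ)..T, v s (u s) = u T - u₀ := by
      rw [intervalIntegral.integral_eq_sub_of_hasDerivAt (fun t _ => hu t)
        (hvc.intervalIntegrable _ _), hu0]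
    rw [← h1]
    have h2 : ‖∫ s in (0:ℝ)..T, v s (u s)‖ ≤ ∫ s in (0:ℝ)..T, g₂ s * h s :=
      intervalIntegral.norm_integral_le_of_norm_le hT (ae_of_all _ fun t ht =>
        hbound t ht.1.le fun s hs => hin s ⟨hs.1, hs.2.trans ht.2⟩) hii
    have h3 : (∫ s in (0:ℝ)..T, g₂ s * h s) + ∫ s in Set.Ioi T, g₂ s * h s
        = ∫ s in Set.Ioi (0:ℝ), g₂ s * h s := by
      exact intervalIntegral.integral_interval_add_Ioi h26int'
        (h26int'.mono_set (Set.Ioi_subset_Ioi hT))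
    have h4 : 0 < ∫ s in Set.Ioi T, g₂ s * h s := by
      rw [setIntegral_pos_iff_support_of_nonneg_ae]
      · have : Set.Ioi T ⊆ (Function.support fun s => g₂ s * h s) ∩ Set.Ioi T := fun s hs =>
          ⟨(hgh s (hT.trans (le_of_lt hs))).ne', hs⟩
        refine lt_of_lt_of_le ?_ (measure_mono this)
        simp
      · filter_upwards [ae_restrict_mem measurableSet_Ioi] with s hs
        exact (hgh s (hT.trans (le_of_lt hs))).le
      · exact h26int'.mono_set (Set.Ioi_subset_Ioi hT)
    linarith
  have hball : ∀ t ≥ (0:ℝ), u t ∈ B := by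
    by_contra! hcon
    set S : Set ℝ := {t | 0 ≤ t ∧ R ≤ ‖u t - u₀‖} with hS
    have hSc : IsClosed S :=
      (isClosed_le continuous_const continuous_id).inter
        (isClosed_le continuous_const ((huc.sub continuous_const).norm))
    have hSne : S.Nonempty := by
      obtain ⟨t, ht, htB⟩ := hcon
      rw [hB, Set.mem_setOf_eq, not_le] at htB
      exact ⟨t, ht, htB.le⟩
    have hSb : BddBelow S := ⟨0, fun t ht => ht.1⟩
    have hT := hSc.csInf_mem hSne hSb
    have hlt : ∀ t, 0 ≤ t → t < sInf S → ‖u t - u₀‖ < R := by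
      intro t ht htS
      by_contra! hc
      exact absurd (csInf_le hSb ⟨ht, hc⟩) (not_le.2 htS)
    rcases hT.1.eq_or_lt with h0 | h0
    · have := hT.2
      rw [← h0, hu0] at this
      simp at this
      linarith
    have hin : ∀ t ∈ Set.Icc 0 (sInf S), u t ∈ B := by
      have hcl : closure (Set.Ico 0 (sInf S)) = Set.Icc 0 (sInf S) := closure_Ico h0.ne
      rw [← hcl]
      refine fun t ht => (hBc.preimage huc).closure_subset_iff.2 ?_ ht
      intro s hs
      have := hlt s hs.1 hs.2
      rw [Set.mem_preimage, hB]
      exact this.le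
    exact absurd hT.2 (not_le.2 (hstrict _ hT.1 hin))
  refine ⟨u, hu0, fun t ht => hvid t ht _ (hball t ht) ▸ hu t, hball, ?_⟩
  have hint : IntegrableOn (fun t => v t (u t)) (Set.Ioi 0) := by
    refine h26int'.mono' hvc.aestronglyMeasurable ?_
    filter_upwards [ae_restrict_mem measurableSet_Ioi] with t ht
    exact hbound t (le_of_lt ht) fun s hs => hball s hs.1
  have hlim := tendsto_limUnder_of_hasDerivAt_of_integrableOn_Ioi (fun t _ => hu t) hint
  refine ⟨_, hlim, hBc.mem_of_tendsto hlim ?_, ?_⟩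
  · filter_upwards [eventually_ge_atTop 0] with t ht using hball t ht
  have hFl := ((hF (limUnder atTop u)).continuousAt.tendsto.comp hlim)
  refine tendsto_nhds_unique hFl ?_
  have hht : Tendsto h atTop (nhds 0) := by
    rw [hh]
    have ha2 : 0 < a - 2 := by linarith
    exact (tendsto_rpow_neg_atTop (y := 1/(a-2)) (by positivity)).comp
      (tendsto_atTop_add_const_left _ _ (h14.const_mul_atTop ha2))
  refine squeeze_zero_norm' ?_ hht
  filter_upwards [eventually_ge_atTop 0] with t ht
  exact hdecay t ht fun s hs => hball s hs.1
end

section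
/- Let g : [0,∞) → [0,∞) be differentiable with g(0) > 0, let g₁ : [0,∞) → (0,∞) be continuous, and let a > 2. Suppose g(t)·g′(t) ≤ −g₁(t)·g(t)^a for all t ≥ 0. Then for every t ≥ 0: g(t) ≤ [g(0)^{−(a−2)} + (a−2)·∫₀ᵗ g₁(s) ds]^{−1/(a−2)}. Moreover, if ∫₀^∞ g₁(s) ds = +∞, then g(t) → 0 as t → ∞. -/
open MeasureTheory Filter

/-- Inequality (2.5): if `g ≥ 0`, `g(0) > 0`, satisfies `g g′ ≤ −g₁ gᵃ` with
`a > 2` and `g₁ > 0` continuous, then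
`g(t) ≤ [g(0)^{−(a−2)} + (a−2)∫₀ᵗ g₁]^{−1/(a−2)}`, and `g(t) → 0` if
`∫₀^∞ g₁ = ∞`. -/
theorem differential_inequality_decay
    (g g' g₁ : ℝ → ℝ)
    (hg : ∀ t ≥ (0:ℝ), HasDerivAt g (g' t) t)
    (hgnn : ∀ t ≥ (0:ℝ), 0 ≤ g t)
    (hg0 : 0 < g 0)
    (hg₁pos : ∀ t ≥ (0:ℝ), 0 < g₁ t)
    (hg₁cont : ContinuousOn g₁ (Set.Ici (0:ℝ)))
    (a : ℝ) (ha : 2 < a)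
    (hineq : ∀ t ≥ (0:ℝ), g t * g' t ≤ -(g₁ t) * g t ^ a) :
    (∀ t ≥ (0:ℝ),
        g t ≤ (g 0 ^ (-(a - 2)) + (a - 2) * ∫ s in (0:ℝ)..t, g₁ s) ^ (-(1 / (a - 2))))
      ∧ (Tendsto (fun t => ∫ s in (0:ℝ)..t, g₁ s) atTop atTop →
          Tendsto g atTop (nhds 0)) := by
  have hb : 0 < a - 2 := by linarith
  have hanti : AntitoneOn g (Set.Ici 0) := by
    apply antitoneOn_of_deriv_nonpos (convex_Ici 0)
    · exact fun x hx => (hg x hx).continuousAt.continuousWithinAt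
    · intro x hx
      rw [interior_Ici] at hx
      exact (hg x (le_of_lt hx)).differentiableAt.differentiableWithinAt
    · intro x hx
      rw [interior_Ici] at hx
      have hx0 : 0 < x := hx
      rcases (hgnn x hx0.le).eq_or_lt with h | h
      · have hm : IsLocalMin g x := by
          filter_upwards [lt_mem_nhds hx0] with y hy
          rw [← h]
          exact hgnn y hy.le
        exact hm.deriv_eq_zero.le
      · rw [(hg x hx0.le).deriv]
        have h1 := hineq x hx0.le
        have h2 := mul_pos (hg₁pos x hx0.le) (Real.rpow_pos_of_pos h a)
        by_contra hc
        push Not at hc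
        have := mul_pos h hc
        linarith
  have hI0 : ∀ t ≥ (0:ℝ), 0 ≤ ∫ s in (0:ℝ)..t, g₁ s := fun t ht =>
    intervalIntegral.integral_nonneg ht (fun u hu => (hg₁pos u hu.1).le)
  have hB0 : ∀ t ≥ (0:ℝ), 0 < g 0 ^ (-(a - 2)) + (a - 2) * ∫ s in (0:ℝ)..t, g₁ s := by
    intro t ht
    have := Real.rpow_pos_of_pos hg0 (-(a-2))
    have := mul_nonneg hb.le (hI0 t ht)
    linarith
  have key : ∀ t ≥ (0:ℝ),
      g t ≤ (g 0 ^ (-(a - 2)) + (a - 2) * ∫ s in (0:ℝ)..t, g₁ s) ^ (-(1 / (a - 2))) := by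
    intro t ht
    rcases (hgnn t ht).eq_or_lt with h | h
    · rw [← h]
      exact Real.rpow_nonneg (hB0 t ht).le _
    have hpos : ∀ s ∈ Set.Icc 0 t, 0 < g s := fun s hs =>
      lt_of_lt_of_le h (hanti hs.1 ht hs.2)
    let G : ℝ → ℝ := fun s => g₁ (max s 0)
    have hG : Continuous G := by
      apply hg₁cont.comp_continuous (by fun_prop)
      intro x
      exact le_max_right x 0
    have hGI : ∫ s in (0:ℝ)..t, g₁ s = ∫ s in (0:ℝ)..t, G s := by
      apply intervalIntegral.integral_congr
      intro s hs
      rw [Set.uIcc_of_le ht] at hs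
      simp only [G, max_eq_left hs.1]
    have hd : ∀ s ∈ Set.Icc 0 t, HasDerivAt
        (fun s => g s ^ (-(a - 2)) - (a - 2) * ∫ u in (0:ℝ)..s, G u)
        (g' s * (-(a - 2)) * g s ^ (-(a - 2) - 1) - (a - 2) * G s) s := by
      intro s hs
      exact ((hg s hs.1).rpow_const (Or.inl (hpos s hs).ne')).sub
        ((hG.integral_hasStrictDerivAt 0 s).hasDerivAt.const_mul (a - 2))
    have hmono : MonotoneOn
        (fun s => g s ^ (-(a - 2)) - (a - 2) * ∫ u in (0:ℝ)..s, G u) (Set.Icc 0 t) := by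
      apply monotoneOn_of_deriv_nonneg (convex_Icc 0 t)
      · exact fun s hs => (hd s hs).continuousAt.continuousWithinAt
      · exact fun s hs =>
          (hd s (interior_subset hs)).differentiableAt.differentiableWithinAt
      · intro s hs
        have hs := interior_subset hs
        rw [(hd s hs).deriv]
        have hp := hpos s hs
        have e1 : G s = g₁ s := by simp only [G, max_eq_left hs.1]
        rw [e1]
        have h1 := mul_le_mul_of_nonneg_right (hineq s hs.1)
          (Real.rpow_pos_of_pos hp (-a)).le
        have e2 : g s ^ a * g s ^ (-a) = 1 := by
          rw [← Real.rpow_add hp]; simp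
        have e3 : g s ^ (-(a - 2) - 1) = g s * g s ^ (-a) := by
          rw [show -(a - 2) - 1 = 1 + -a by ring, Real.rpow_add hp, Real.rpow_one]
        rw [e3]
        have h2 : g s * g' s * g s ^ (-a) ≤ - g₁ s := by
          calc _ ≤ _ := h1
            _ = - g₁ s * (g s ^ a * g s ^ (-a)) := by ring
            _ = _ := by rw [e2, mul_one]
        nlinarith [mul_le_mul_of_nonneg_left h2 hb.le]
    have h3 := hmono (Set.left_mem_Icc.2 ht) (Set.right_mem_Icc.2 ht) ht
    simp only [intervalIntegral.integral_same, mul_zero, sub_zero] at h3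
    rw [← hGI] at h3
    have h4 : g 0 ^ (-(a - 2)) + (a - 2) * ∫ s in (0:ℝ)..t, g₁ s ≤ g t ^ (-(a - 2)) := by
      linarith
    have h5 := Real.rpow_le_rpow_of_nonpos (hB0 t ht) h4
      (show -(1 / (a - 2)) ≤ 0 by have := one_div_pos.2 hb; linarith)
    rw [← Real.rpow_mul h.le] at h5
    have e : -(a - 2) * -(1 / (a - 2)) = 1 := by field_simp
    rwa [e, Real.rpow_one] at h5
  refine ⟨key, fun hT => ?_⟩
  have hlim := (tendsto_rpow_neg_atTop (one_div_pos.2 hb)).comp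
    (tendsto_atTop_add_const_left atTop (g 0 ^ (-(a - 2))) (hT.const_mul_atTop hb))
  refine tendsto_of_tendsto_of_tendsto_of_le_of_le' tendsto_const_nhds hlim ?_ ?_
  · filter_upwards [eventually_ge_atTop 0] with t ht using hgnn t ht
  · filter_upwards [eventually_ge_atTop 0] with t ht using key t ht
end

section
/- Continuous Newton method. Let H be a real Hilbert space, u₀ ∈ H, R > 0, B := {u ∈ H : ‖u − u₀‖ ≤ R}, and let F : H → H be twice Fréchet differentiable with ‖F″(u)‖ ≤ M₂ for all u ∈ B. Assume that F′(u) is boundedly invertible with ‖[F′(u)]^{−1}‖ ≤ m₁ for all u ∈ B, and that m₁·‖F(u₀)‖ ≤ R. Then the Cauchy problem u̇(t) = −[F′(u(t))]^{−1}F(u(t)), u(0) = u₀ has a global solution u with u(t) ∈ B for all t ≥ 0; the strong limit y := lim_{t→∞} u(t) exists; F(y) = 0; and for all t ≥ 0: ‖F(u(t))‖ ≤ ‖F(u₀)‖·e^{−t} and ‖u(t) − y‖ ≤ m₁·‖F(u₀)‖·e^{−t}. -/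
open MeasureTheory Filter
open scoped RealInnerProductSpace

/-- Picard–Lindelöf, keeping track of the ball in which the solution lives. -/
theorem picard_in_ball {E : Type*} [NormedAddCommGroup E] [NormedSpace ℝ E] [CompleteSpace E]
    {f : ℝ → E → E} {tmin tmax : ℝ} {t₀ : Set.Icc tmin tmax} {x₀ : E} {a L K : NNReal}
    (hf : IsPicardLindelof f t₀ x₀ a 0 L K) :
    ∃ α : ℝ → E, α t₀ = x₀ ∧ (∀ t, α t ∈ Metric.closedBall x₀ a) ∧
      ∀ t ∈ Set.Icc tmin tmax, HasDerivWithinAt α (f t (α t)) (Set.Icc tmin tmax) t := by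
  have hx : x₀ ∈ Metric.closedBall x₀ ((0 : NNReal) : ℝ) := Metric.mem_closedBall_self le_rfl
  obtain ⟨α, hα⟩ := ODE.FunSpace.exists_isFixedPt_next hf hx
  refine ⟨α.compProj, by rw [ODE.FunSpace.compProj_val, ← hα, ODE.FunSpace.next_apply₀],
    fun t => α.compProj_mem_closedBall hf.mul_max_le, fun t ht ↦ ?_⟩
  apply ODE.hasDerivWithinAt_picard_Icc t₀.2 hf.continuousOn_uncurry
    α.continuous_compProj.continuousOn (fun _ ht' ↦ α.compProj_mem_closedBall hf.mul_max_le)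
    x₀ ht |>.congr_of_mem _ ht
  intro t' ht'
  nth_rw 1 [← hα]
  rw [ODE.FunSpace.compProj_of_mem ht', ODE.FunSpace.next_apply]

/-- **Example 1: continuous Newton-type method.** If `‖[F′(u)]⁻¹‖ ≤ m₁` on `B`,
`‖F″(u)‖ ≤ M₂` on `B`, and `m₁‖F(u₀)‖ ≤ R`, then `u̇ = −[F′(u)]⁻¹F(u)`,
`u(0) = u₀` has a global solution in `B` converging to a zero `y` of `F`, with
`‖F(u(t))‖ ≤ ‖F(u₀)‖e^{−t}` and `‖u(t) − y‖ ≤ m₁‖F(u₀)‖e^{−t}`. -/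
theorem continuous_newton_method
    {H : Type*} [NormedAddCommGroup H] [InnerProductSpace ℝ H] [CompleteSpace H]
    (F : H → H) (F' : H → H →L[ℝ] H) (F'' : H → H →L[ℝ] H →L[ℝ] H)
    (hF' : ∀ u : H, HasFDerivAt F (F' u) u)
    (hF'' : ∀ u : H, HasFDerivAt F' (F'' u) u)
    (u₀ : H) (R M₂ m₁ : ℝ) (hR : 0 < R)
    (B : Set H) (hB : B = {u : H | ‖u - u₀‖ ≤ R})
    (hM₂ : ∀ u ∈ B, ‖F'' u‖ ≤ M₂)
    (Finv : H → H →L[ℝ] H)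
    (hinv₁ : ∀ u ∈ B, (F' u).comp (Finv u) = ContinuousLinearMap.id ℝ H)
    (hinv₂ : ∀ u ∈ B, (Finv u).comp (F' u) = ContinuousLinearMap.id ℝ H)
    (hm₁ : ∀ u ∈ B, ‖Finv u‖ ≤ m₁)
    (hsmall : m₁ * ‖F u₀‖ ≤ R) :
    ∃ u : ℝ → H, u 0 = u₀ ∧
      (∀ t ≥ (0:ℝ), HasDerivAt u (-(Finv (u t) (F (u t)))) t) ∧
      (∀ t ≥ (0:ℝ), u t ∈ B) ∧
      ∃ y : H, Tendsto u atTop (nhds y) ∧ F y = 0 ∧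
        (∀ t ≥ (0:ℝ), ‖F (u t)‖ ≤ ‖F u₀‖ * Real.exp (-t)) ∧
        (∀ t ≥ (0:ℝ), ‖u t - y‖ ≤ m₁ * ‖F u₀‖ * Real.exp (-t)) := by
  have hBball : B = Metric.closedBall u₀ R := by
    rw [hB]; ext x; simp [dist_eq_norm]
  have hu₀ : u₀ ∈ B := by rw [hB]; simp [hR.le]
  have hm₁0 : 0 ≤ m₁ := (norm_nonneg _).trans (hm₁ u₀ hu₀)
  have hM₂0 : 0 ≤ M₂ := (norm_nonneg (F'' u₀)).trans (hM₂ u₀ hu₀)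
  have hBc : Convex ℝ B := hBball ▸ convex_closedBall u₀ R
  -- Lipschitz continuity of the inverse
  have hlip : ∀ x ∈ B, ∀ z ∈ B, ‖Finv x - Finv z‖ ≤ m₁ * (M₂ * ‖x - z‖) * m₁ := by
    intro x hx z hz
    have h1 : ‖F' z - F' x‖ ≤ M₂ * ‖x - z‖ := by
      rw [norm_sub_rev x z]
      exact hBc.norm_image_sub_le_of_norm_hasFDerivWithin_le
        (fun v _ => (hF'' v).hasFDerivWithinAt) hM₂ hx hz
    have h2 : Finv x - Finv z = (Finv x).comp ((F' z - F' x).comp (Finv z)) := by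
      rw [ContinuousLinearMap.sub_comp, hinv₁ z hz, ContinuousLinearMap.comp_sub,
        ← ContinuousLinearMap.comp_assoc, hinv₂ x hx]
      simp
    rw [h2]
    calc _ ≤ ‖Finv x‖ * ‖(F' z - F' x).comp (Finv z)‖ := ContinuousLinearMap.opNorm_comp_le _ _
      _ ≤ ‖Finv x‖ * (‖F' z - F' x‖ * ‖Finv z‖) := by
        gcongr; exact ContinuousLinearMap.opNorm_comp_le _ _
      _ ≤ m₁ * ((M₂ * ‖x - z‖) * m₁) := by
        gcongr
        · exact hm₁ x hx
        · exact hm₁ z hz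
      _ = _ := by ring
  have hbd : ∀ x ∈ B, ‖-(Finv x (F u₀))‖ ≤ m₁ * ‖F u₀‖ := by
    intro x hx
    rw [norm_neg]
    exact (Finv x).le_of_opNorm_le (hm₁ x hx) _
  let a : NNReal := ⟨R, hR.le⟩
  let L : NNReal := ⟨m₁ * ‖F u₀‖, by positivity⟩
  let K : NNReal := ⟨m₁ * M₂ * m₁ * ‖F u₀‖, by positivity⟩
  let t₀ : Set.Icc (-1 : ℝ) 1 := ⟨0, by norm_num, by norm_num⟩
  have hPL : IsPicardLindelof (fun _ x => -(Finv x (F u₀))) t₀ u₀ a 0 L K := by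
    refine ⟨fun t _ => ?_, fun x _ => continuousOn_const, fun t _ x hx => ?_, ?_⟩
    · rw [lipschitzOnWith_iff_norm_sub_le]
      intro x hx z hz
      have hx' : x ∈ B := hBball ▸ hx
      have hz' : z ∈ B := hBball ▸ hz
      have h3 : -(Finv x (F u₀)) - -(Finv z (F u₀)) = -((Finv x - Finv z) (F u₀)) := by
        simp only [sub_apply]; abel
      rw [h3, norm_neg]
      refine ((Finv x - Finv z).le_of_opNorm_le (hlip x hx' z hz') _).trans (le_of_eq ?_)
      change _ = (m₁ * M₂ * m₁ * ‖F u₀‖) * _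
      ring
    · exact hbd x (hBball ▸ hx)
    · change (m₁ * ‖F u₀‖) * max ((1:ℝ) - 0) (0 - (-1)) ≤ R - 0
      norm_num
      exact hsmall
  obtain ⟨w, hw0, hwB', hw⟩ := picard_in_ball hPL
  have hw0 : w 0 = u₀ := hw0
  have hwB : ∀ t, w t ∈ B := fun t => hBball ▸ hwB' t
  have h0mem : (0:ℝ) ∈ Set.Icc (-1:ℝ) 1 := t₀.2
  have h1mem : (1:ℝ) ∈ Set.Icc (-1:ℝ) 1 := by constructor <;> norm_num
  have hF : ∀ s ∈ Set.Icc (-1:ℝ) 1, F (w s) = (1 - s) • F u₀ := by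
    intro s hs
    have hd : ∀ s ∈ Set.Icc (-1:ℝ) 1,
        HasDerivWithinAt (fun s => F (w s) + s • F u₀) 0 (Set.Icc (-1:ℝ) 1) s := by
      intro s hs
      have h1 := (hF' (w s)).comp_hasDerivWithinAt s (hw s hs)
      have h2 := (hasDerivWithinAt_id s (Set.Icc (-1:ℝ) 1)).smul_const (F u₀)
      have h3 := h1.add h2
      have h4 : F' (w s) (Finv (w s) (F u₀)) = F u₀ := by
        have := congrArg (fun T : H →L[ℝ] H => T (F u₀)) (hinv₁ (w s) (hwB s))
        simpa using this
      have h5 : F' (w s) (-(Finv (w s) (F u₀))) + (1:ℝ) • F u₀ = 0 := by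
        rw [map_neg, h4, one_smul, neg_add_cancel]
      rw [h5] at h3
      exact h3
    have h := (convex_Icc (-1:ℝ) 1).norm_image_sub_le_of_norm_hasDerivWithin_le (C := 0) hd
      (fun _ _ => by simp) h0mem hs
    rw [zero_mul, norm_le_zero_iff, hw0, zero_smul, add_zero, sub_eq_zero] at h
    rw [sub_smul, one_smul]
    exact eq_sub_of_add_eq h
  have hs : ∀ t ≥ (0:ℝ), 0 ≤ 1 - Real.exp (-t) ∧ 1 - Real.exp (-t) < 1 := by
    intro t ht
    have := Real.exp_pos (-t)
    have : Real.exp (-t) ≤ 1 := Real.exp_le_one_iff.mpr (by linarith)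
    constructor <;> linarith
  have hmem : ∀ t ≥ (0:ℝ), 1 - Real.exp (-t) ∈ Set.Icc (-1:ℝ) 1 := fun t ht =>
    ⟨by linarith [(hs t ht).1], (hs t ht).2.le⟩
  have hFu : ∀ t ≥ (0:ℝ), F (w (1 - Real.exp (-t))) = Real.exp (-t) • F u₀ := by
    intro t ht
    rw [hF _ (hmem t ht), sub_sub_cancel]
  have hy : ∀ t ≥ (0:ℝ),
      ‖w (1 - Real.exp (-t)) - w 1‖ ≤ m₁ * ‖F u₀‖ * Real.exp (-t) := by
    intro t ht
    have h := (convex_Icc (-1:ℝ) 1).norm_image_sub_le_of_norm_hasDerivWithin_le hw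
      (fun s _ => hbd (w s) (hwB s)) h1mem (hmem t ht)
    refine h.trans (le_of_eq ?_)
    rw [show 1 - Real.exp (-t) - 1 = -Real.exp (-t) by ring, norm_neg, Real.norm_eq_abs,
      abs_of_pos (Real.exp_pos _)]
  refine ⟨fun t => w (1 - Real.exp (-t)), by simp [hw0], ?_, fun t _ => hwB _, w 1, ?_, ?_, ?_, hy⟩
  · intro t ht
    have h1 : HasDerivAt w (-(Finv (w (1 - Real.exp (-t))) (F u₀))) (1 - Real.exp (-t)) :=
      (hw _ (hmem t ht)).hasDerivAt (Icc_mem_nhds (by linarith [(hs t ht).1]) (hs t ht).2)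
    have h2 : HasDerivAt (fun t : ℝ => 1 - Real.exp (-t)) (Real.exp (-t)) t := by
      have := ((hasDerivAt_neg t).exp).const_sub 1
      simpa using this
    have h3 := h1.scomp t h2
    have h4 : -(Finv (w (1 - Real.exp (-t))) (F (w (1 - Real.exp (-t)))))
        = Real.exp (-t) • -(Finv (w (1 - Real.exp (-t))) (F u₀)) := by
      rw [hFu t ht, map_smul, smul_neg]
    change HasDerivAt _ (-(Finv (w (1 - Real.exp (-t))) (F (w (1 - Real.exp (-t)))))) t
    rw [h4]
    exact h3
  · rw [tendsto_iff_norm_sub_tendsto_zero]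
    have hlim : Tendsto (fun t : ℝ => m₁ * ‖F u₀‖ * Real.exp (-t)) atTop (nhds 0) := by
      simpa using Real.tendsto_exp_neg_atTop_nhds_zero.const_mul (m₁ * ‖F u₀‖)
    refine squeeze_zero' (Eventually.of_forall fun _ => norm_nonneg _) ?_ hlim
    filter_upwards [eventually_ge_atTop (0:ℝ)] with t ht using hy t ht
  · rw [hF 1 h1mem]; simp
  · intro t ht
    change ‖F (w (1 - Real.exp (-t)))‖ ≤ _
    rw [hFu t ht, norm_smul, Real.norm_eq_abs, abs_of_pos (Real.exp_pos _), mul_comm]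
end

section
/- Continuous simple iterations method. Let H be a real Hilbert space, u₀ ∈ H, R > 0, B := {u ∈ H : ‖u − u₀‖ ≤ R}, and let F : H → H be twice Fréchet differentiable with ‖F″(u)‖ ≤ M₂ for all u ∈ B. Assume there is a constant c₁ > 0 such that ⟨F′(u)h, h⟩ ≥ c₁‖h‖² for all u ∈ B and all h ∈ H, and that c₁^{−1}·‖F(u₀)‖ ≤ R. Then the Cauchy problem u̇(t) = −F(u(t)), u(0) = u₀ has a global solution u with u(t) ∈ B for all t ≥ 0; the strong limit y := lim_{t→∞} u(t) exists; F(y) = 0; and for all t ≥ 0: ‖F(u(t))‖ ≤ ‖F(u₀)‖·e^{−c₁ t} and ‖u(t) − y‖ ≤ c₁^{−1}·‖F(u₀)‖·e^{−c₁ t}. -/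
open MeasureTheory Filter
open scoped RealInnerProductSpace

theorem csim_global_ode {E : Type*} [NormedAddCommGroup E] [NormedSpace ℝ E] [CompleteSpace E]
    (f : E → E) (K L : NNReal) (hK : LipschitzWith K f) (hL : ∀ x, ‖f x‖ ≤ L) (x₀ : E) :
    ∃ u : ℝ → E, u 0 = x₀ ∧ ∀ t, HasDerivAt u (f (u t)) t := by
  have hloc : ∀ n : ℕ, ∃ α : ℝ → E, α 0 = x₀ ∧
      ∀ t ∈ Set.Ioo (-((n:ℝ) + 1)) ((n:ℝ) + 1), HasDerivAt α (f (α t)) t := by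
    intro n
    have hn : (0:ℝ) ≤ (n:ℝ) + 1 := by positivity
    have hp : IsPicardLindelof (fun _ : ℝ => f) (tmin := -((n:ℝ) + 1)) (tmax := (n:ℝ) + 1)
        ⟨0, by constructor <;> linarith⟩ x₀ (L * (n + 1)) 0 L K :=
      { lipschitzOnWith := fun t _ => hK.lipschitzOnWith
        continuousOn := fun x _ => continuousOn_const
        norm_le := fun t _ x _ => hL x
        mul_max_le := by simp }
    obtain ⟨α, h0, h⟩ := hp.exists_eq_forall_mem_Icc_hasDerivWithinAt₀
    exact ⟨α, h0, fun t ht => (h t (Set.Ioo_subset_Icc_self ht)).hasDerivAt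
      (Icc_mem_nhds ht.1 ht.2)⟩
  choose α h0 h using hloc
  have huniq : ∀ m n : ℕ, m ≤ n → ∀ t ∈ Set.Ioo (-((m:ℝ) + 1)) ((m:ℝ) + 1), α m t = α n t := by
    intro m n hmn
    have hmn' : (m:ℝ) ≤ n := by exact_mod_cast hmn
    have hm : (0:ℝ) ≤ m := by positivity
    refine ODE_solution_unique_of_mem_Ioo (v := fun _ => f) (s := fun _ => Set.univ) (t₀ := 0)
      (K := K) (fun t _ => hK.lipschitzOnWith) ⟨by linarith, by linarith⟩
      (fun t ht => ⟨h m t ht, trivial⟩)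
      (fun t ht => ⟨h n t ⟨by linarith [ht.1], by linarith [ht.2]⟩, trivial⟩) ?_
    rw [h0, h0]
  have heq : ∀ n : ℕ, ∀ t ∈ Set.Ioo (-((n:ℝ) + 1)) ((n:ℝ) + 1), α ⌈|t|⌉₊ t = α n t := by
    intro n t ht
    have h1 : |t| ≤ (⌈|t|⌉₊ : ℝ) := Nat.le_ceil _
    have h2 := abs_le.1 h1
    rcases le_total n ⌈|t|⌉₊ with hh | hh
    · exact (huniq _ _ hh t ht).symm
    · exact huniq _ _ hh t ⟨by linarith [h2.1], by linarith [h2.2]⟩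
  refine ⟨fun t => α ⌈|t|⌉₊ t, by simp [h0], fun t => ?_⟩
  have h1 := abs_le.1 (Nat.le_ceil |t|)
  have ht : t ∈ Set.Ioo (-((⌈|t|⌉₊:ℝ) + 1)) ((⌈|t|⌉₊:ℝ) + 1) :=
    ⟨by linarith [h1.1], by linarith [h1.2]⟩
  refine (h _ t ht).congr_of_eventuallyEq ?_
  filter_upwards [Ioo_mem_nhds ht.1 ht.2] with s hs
  exact heq _ s hs

theorem csim_radial_lip {H : Type*} [NormedAddCommGroup H] [NormedSpace ℝ H]
    (R : ℝ) (hR : 0 < R) (v w : H) :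
    ‖(R / max R ‖v‖) • v - (R / max R ‖w‖) • w‖ ≤ 2 * ‖v - w‖ := by
  have hv : 0 < max R ‖v‖ := lt_max_of_lt_left hR
  have hw : 0 < max R ‖w‖ := lt_max_of_lt_left hR
  have e : (R / max R ‖v‖) • v - (R / max R ‖w‖) • w =
      (R / max R ‖v‖) • (v - w) + (R / max R ‖v‖ - R / max R ‖w‖) • w := by
    module
  have h1 : ‖(R / max R ‖v‖) • (v - w)‖ ≤ ‖v - w‖ := by
    rw [norm_smul, Real.norm_of_nonneg (by positivity)]
    have : R / max R ‖v‖ ≤ 1 := (div_le_one hv).2 (le_max_left _ _)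
    nlinarith [norm_nonneg (v - w)]
  have h2 : ‖(R / max R ‖v‖ - R / max R ‖w‖) • w‖ ≤ ‖v - w‖ := by
    have e2 : R / max R ‖v‖ - R / max R ‖w‖ =
        (R / max R ‖v‖) * ((max R ‖w‖ - max R ‖v‖) / max R ‖w‖) := by field_simp
    rw [norm_smul, e2, norm_mul, Real.norm_of_nonneg (by positivity : 0 ≤ R / max R ‖v‖),
      norm_div, Real.norm_of_nonneg hw.le]
    have a1 : R / max R ‖v‖ ≤ 1 := (div_le_one hv).2 (le_max_left _ _)
    have a2 : ‖w‖ / max R ‖w‖ ≤ 1 := (div_le_one hw).2 (le_max_right _ _)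
    have a3 : ‖max R ‖w‖ - max R ‖v‖‖ ≤ ‖v - w‖ := by
      rw [Real.norm_eq_abs]
      have := abs_max_sub_max_le_max R ‖w‖ R ‖v‖
      have h4 := abs_norm_sub_norm_le w v
      rw [norm_sub_rev] at h4
      simpa using this.trans (max_le (by simp) h4)
    calc R / max R ‖v‖ * (‖max R ‖w‖ - max R ‖v‖‖ / max R ‖w‖) * ‖w‖
        = (R / max R ‖v‖) * (‖w‖ / max R ‖w‖) * ‖max R ‖w‖ - max R ‖v‖‖ := by ring
      _ ≤ 1 * 1 * ‖v - w‖ := by gcongr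
      _ = ‖v - w‖ := by ring
  rw [e]
  linarith [norm_add_le ((R / max R ‖v‖) • (v - w)) ((R / max R ‖v‖ - R / max R ‖w‖) • w)]

theorem csim_strong_mono {H : Type*} [NormedAddCommGroup H] [InnerProductSpace ℝ H]
    (F : H → H) (F' : H → H →L[ℝ] H) (hF' : ∀ u : H, HasFDerivAt F (F' u) u)
    (u₀ : H) (R c₁ : ℝ)
    (hmono : ∀ u : H, ‖u - u₀‖ ≤ R → ∀ h : H, c₁ * ‖h‖ ^ 2 ≤ ⟪F' u h, h⟫)
    (w : H) (hw : ‖w - u₀‖ ≤ R) :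
    c₁ * ‖w - u₀‖ ^ 2 ≤ ⟪F w - F u₀, w - u₀⟫ := by
  set h := w - u₀ with hh
  have hd : ∀ s : ℝ, HasDerivAt (fun s : ℝ => ⟪F (u₀ + s • h), h⟫) ⟪F' (u₀ + s • h) h, h⟫ s := by
    intro s
    have h1 : HasDerivAt (fun s : ℝ => u₀ + s • h) h s := by
      simpa using ((hasDerivAt_id s).smul_const h).const_add u₀
    have h2 := (hF' (u₀ + s • h)).comp_hasDerivAt s h1
    simpa using h2.inner ℝ (hasDerivAt_const s h)
  obtain ⟨s, hs, he⟩ := exists_hasDerivAt_eq_slope _ _ (zero_lt_one (α := ℝ))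
    (fun s _ => (hd s).continuousAt.continuousWithinAt) (fun s _ => hd s)
  have hs' : ‖(u₀ + s • h) - u₀‖ ≤ R := by
    rw [add_sub_cancel_left, norm_smul, Real.norm_of_nonneg hs.1.le]
    nlinarith [norm_nonneg h, hs.2]
  have := hmono _ hs' h
  rw [he] at this
  have e : u₀ + h = w := by rw [hh]; abel
  simpa [e, inner_sub_left] using this

theorem csim_sq {a b : ℝ} (h : a ^ 2 ≤ b ^ 2) (hb : 0 ≤ b) : a ≤ b := abs_le_of_sq_le_sq' h hb |>.2

/-- **Example 2: continuous simple iterations method.** If `⟨F′(u)h, h⟩ ≥ c₁‖h‖²`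
on `B`, `‖F″(u)‖ ≤ M₂` on `B`, and `c₁⁻¹‖F(u₀)‖ ≤ R`, then `u̇ = −F(u)`,
`u(0) = u₀` has a global solution in `B` converging to a zero `y` of `F`, with
`‖F(u(t))‖ ≤ ‖F(u₀)‖e^{−c₁t}` and `‖u(t) − y‖ ≤ c₁⁻¹‖F(u₀)‖e^{−c₁t}`. -/
theorem continuous_simple_iterations_method
    {H : Type*} [NormedAddCommGroup H] [InnerProductSpace ℝ H] [CompleteSpace H]
    (F : H → H) (F' : H → H →L[ℝ] H) (F'' : H → H →L[ℝ] H →L[ℝ] H)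
    (hF' : ∀ u : H, HasFDerivAt F (F' u) u)
    (hF'' : ∀ u : H, HasFDerivAt F' (F'' u) u)
    (u₀ : H) (R M₂ c₁ : ℝ) (hR : 0 < R) (hc₁ : 0 < c₁)
    (B : Set H) (hB : B = {u : H | ‖u - u₀‖ ≤ R})
    (hM₂ : ∀ u ∈ B, ‖F'' u‖ ≤ M₂)
    (hmono : ∀ u ∈ B, ∀ h : H, ⟪F' u h, h⟫ ≥ c₁ * ‖h‖ ^ 2)
    (hsmall : c₁⁻¹ * ‖F u₀‖ ≤ R) :
    ∃ u : ℝ → H, u 0 = u₀ ∧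
      (∀ t ≥ (0:ℝ), HasDerivAt u (-F (u t)) t) ∧
      (∀ t ≥ (0:ℝ), u t ∈ B) ∧
      ∃ y : H, Tendsto u atTop (nhds y) ∧ F y = 0 ∧
        (∀ t ≥ (0:ℝ), ‖F (u t)‖ ≤ ‖F u₀‖ * Real.exp (-(c₁ * t))) ∧
        (∀ t ≥ (0:ℝ), ‖u t - y‖ ≤ c₁⁻¹ * ‖F u₀‖ * Real.exp (-(c₁ * t))) := by
  have hB' : ∀ u, u ∈ B ↔ ‖u - u₀‖ ≤ R := by intro u; rw [hB]; rfl
  have hBc : Convex ℝ B := by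
    have : B = Metric.closedBall u₀ R := by
      ext u; rw [hB', mem_closedBall_iff_norm]
    rw [this]; exact convex_closedBall _ _
  have hu₀ : u₀ ∈ B := by rw [hB']; simpa using hR.le
  have hM0 : 0 ≤ M₂ := (norm_nonneg (F'' u₀)).trans (hM₂ u₀ hu₀)
  have hF'b : ∀ u ∈ B, ‖F' u‖ ≤ ‖F' u₀‖ + M₂ * R := by
    intro u hu
    have h1 := hBc.norm_image_sub_le_of_norm_hasFDerivWithin_le
      (fun x _ => (hF'' x).hasFDerivWithinAt) hM₂ hu₀ hu
    have h2 : M₂ * ‖u - u₀‖ ≤ M₂ * R := mul_le_mul_of_nonneg_left ((hB' u).1 hu) hM0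
    have h3 := norm_sub_norm_le (F' u) (F' u₀)
    linarith
  set L : ℝ := ‖F' u₀‖ + M₂ * R with hL
  have hL0 : 0 ≤ L := by positivity
  have hFlip : ∀ x ∈ B, ∀ y ∈ B, ‖F y - F x‖ ≤ L * ‖y - x‖ := fun x hx y hy =>
    hBc.norm_image_sub_le_of_norm_hasFDerivWithin_le
      (fun x _ => (hF' x).hasFDerivWithinAt) hF'b hx hy
  let P : H → H := fun u => u₀ + (R / max R ‖u - u₀‖) • (u - u₀)
  have hmax : ∀ u, 0 < max R ‖u - u₀‖ := fun u => lt_max_of_lt_left hR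
  have hPn : ∀ u, ‖P u - u₀‖ = R * (‖u - u₀‖ / max R ‖u - u₀‖) := by
    intro u
    simp only [P]
    rw [add_sub_cancel_left, norm_smul, Real.norm_of_nonneg (by have := hmax u; positivity)]
    ring
  have hPB : ∀ u, P u ∈ B := by
    intro u
    rw [hB', hPn]
    have : ‖u - u₀‖ / max R ‖u - u₀‖ ≤ 1 := (div_le_one (hmax u)).2 (le_max_right _ _)
    nlinarith
  have hPid : ∀ u ∈ B, P u = u := by
    intro u hu
    simp only [P]
    rw [max_eq_left ((hB' u).1 hu), div_self hR.ne']
    simp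
  have hPlip : ∀ u v, ‖P u - P v‖ ≤ 2 * ‖u - v‖ := by
    intro u v
    have := csim_radial_lip R hR (u - u₀) (v - u₀)
    simpa [P] using this
  let G : H → H := fun u => -F (P u)
  have hGlip : LipschitzWith (L * 2).toNNReal G := by
    refine LipschitzWith.of_dist_le_mul fun u v => ?_
    rw [Real.coe_toNNReal _ (by positivity), dist_eq_norm, dist_eq_norm]
    have h1 := hFlip _ (hPB u) _ (hPB v)
    have h2 := mul_le_mul_of_nonneg_left (hPlip v u) hL0
    have h3 : G u - G v = F (P v) - F (P u) := by simp only [G]; abel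
    rw [h3, norm_sub_rev u v]
    linarith
  have hGb : ∀ u, ‖G u‖ ≤ (‖F u₀‖ + L * R).toNNReal := by
    intro u
    rw [Real.coe_toNNReal _ (by positivity)]
    simp only [G, norm_neg]
    have h1 := hFlip _ hu₀ _ (hPB u)
    have h2 := mul_le_mul_of_nonneg_left ((hB' _).1 (hPB u)) hL0
    have h3 := norm_sub_norm_le (F (P u)) (F u₀)
    linarith
  obtain ⟨u, hu0, hu⟩ := csim_global_ode G _ _ hGlip hGb u₀
  have hsm : ‖F u₀‖ ≤ c₁ * R := by
    rwa [inv_mul_le_iff₀ hc₁] at hsmall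
  have hin : ∀ v : H, R ^ 2 < ‖v - u₀‖ ^ 2 → ⟪v - u₀, G v⟫ ≤ 0 := by
    intro v hv
    have hv' : R < ‖v - u₀‖ := lt_of_pow_lt_pow_left₀ 2 (norm_nonneg _) hv
    have hpos : 0 < ‖v - u₀‖ := hR.trans hv'
    have hPv : ‖P v - u₀‖ = R := by
      rw [hPn, max_eq_right hv'.le, div_self hpos.ne', mul_one]
    have h1 := csim_strong_mono F F' hF' u₀ R c₁ (fun u hu h => hmono u ((hB' u).2 hu) h)
      (P v) hPv.le
    have h2 := (abs_le.1 (abs_real_inner_le_norm (F u₀) (P v - u₀))).1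
    rw [inner_sub_left] at h1
    rw [hPv] at h1 h2
    have h3 : 0 ≤ ⟪F (P v), P v - u₀⟫ := by nlinarith
    have h4 : P v - u₀ = (R / ‖v - u₀‖) • (v - u₀) := by
      simp only [P]; rw [max_eq_right hv'.le, add_sub_cancel_left]
    rw [h4, real_inner_smul_right] at h3
    have h5 : 0 ≤ ⟪F (P v), v - u₀⟫ := nonneg_of_mul_nonneg_right h3 (by positivity)
    simp only [G]
    rw [inner_neg_right, real_inner_comm]
    linarith
  have hgd : ∀ t, HasDerivAt (fun t => ‖u t - u₀‖ ^ 2) (2 * ⟪u t - u₀, G (u t)⟫) t :=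
    fun t => ((hu t).sub_const u₀).norm_sq
  have huB : ∀ t ≥ (0:ℝ), u t ∈ B := by
    intro t ht
    rw [hB']
    refine csim_sq ?_ hR.le
    refine le_of_forall_pos_le_add fun ε hε => ?_
    have hδ : 0 < ε / (t + 1) := by positivity
    have key := image_le_of_deriv_right_lt_deriv_boundary' (a := 0) (b := t)
      (f := fun t => ‖u t - u₀‖ ^ 2) (f' := fun t => 2 * ⟪u t - u₀, G (u t)⟫)
      (B := fun s => R ^ 2 + (ε / (t + 1)) * (s + 1)) (B' := fun _ => ε / (t + 1))
      (fun s _ => (hgd s).continuousAt.continuousWithinAt)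
      (fun s _ => (hgd s).hasDerivWithinAt)
      (by
        have : ‖u 0 - u₀‖ ^ 2 = 0 := by rw [hu0]; simp
        rw [this]; positivity)
      (by fun_prop)
      (fun s _ => by
        have := (((hasDerivAt_id s).add_const 1).const_mul (ε / (t + 1))).const_add (R ^ 2)
        simpa using this.hasDerivWithinAt)
      (fun s hs he => by
        have hlt : R ^ 2 < ‖u s - u₀‖ ^ 2 := by
          have : 0 < ε / (t + 1) * (s + 1) := mul_pos hδ (by linarith [hs.1])
          linarith
        have := hin _ hlt
        linarith)
      (Set.right_mem_Icc.2 ht)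
    have e : ε / (t + 1) * (t + 1) = ε := by field_simp
    simp only [e] at key
    exact key
  have hu' : ∀ t ≥ (0:ℝ), HasDerivAt u (-F (u t)) t := by
    intro t ht
    have := hu t
    simp only [G] at this
    rwa [hPid _ (huB t ht)] at this
  have hdec : ∀ t ≥ (0:ℝ), ‖F (u t)‖ ≤ ‖F u₀‖ * Real.exp (-(c₁ * t)) := by
    intro t ht
    have hd : ∀ s ≥ (0:ℝ), HasDerivAt (fun s => Real.exp (2 * c₁ * s) * ‖F (u s)‖ ^ 2)
        (Real.exp (2 * c₁ * s) * (2 * c₁) * ‖F (u s)‖ ^ 2 +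
          Real.exp (2 * c₁ * s) * (2 * ⟪F (u s), F' (u s) (-F (u s))⟫)) s := by
      intro s hs
      have h1 := (((hasDerivAt_id s).const_mul (2 * c₁)).exp)
      have h2 := ((hF' (u s)).comp_hasDerivAt s (hu' s hs)).norm_sq
      have h3 := h1.mul h2
      simp only [id, mul_one] at h3
      exact h3
    have hanti : AntitoneOn (fun s => Real.exp (2 * c₁ * s) * ‖F (u s)‖ ^ 2) (Set.Ici 0) := by
      refine antitoneOn_of_deriv_nonpos (convex_Ici 0)
        (fun s hs => (hd s hs).continuousAt.continuousWithinAt) ?_ ?_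
      · intro s hs
        rw [interior_Ici] at hs
        exact (hd s (le_of_lt hs)).differentiableAt.differentiableWithinAt
      · intro s hs
        rw [interior_Ici] at hs
        have hs0 : (0:ℝ) ≤ s := le_of_lt hs
        rw [(hd s hs0).deriv]
        have := hmono _ (huB s hs0) (F (u s))
        rw [map_neg, inner_neg_right, real_inner_comm]
        have he := Real.exp_pos (2 * c₁ * s)
        nlinarith
    have := hanti (Set.mem_Ici.2 le_rfl) (Set.mem_Ici.2 ht) ht
    simp only [mul_zero, Real.exp_zero, one_mul, hu0] at this
    have e : Real.exp (2 * c₁ * t) = Real.exp (c₁ * t) ^ 2 := by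
      rw [← Real.exp_nat_mul]; congr 1; push_cast; ring
    rw [e, ← mul_pow] at this
    have h3 := csim_sq this (norm_nonneg _)
    rw [Real.exp_neg, ← div_eq_mul_inv, le_div_iff₀ (Real.exp_pos _)]
    linarith
  have hcau : ∀ s ≥ (0:ℝ), ∀ t ≥ s, ‖u t - u s‖ ≤
      c₁⁻¹ * ‖F u₀‖ * (Real.exp (-(c₁ * s)) - Real.exp (-(c₁ * t))) := by
    intro s hs t hst
    refine image_norm_le_of_norm_deriv_right_le_deriv_boundary' (a := s) (b := t)
      (f := fun t => u t - u s) (f' := fun t => -F (u t))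
      (B := fun t => c₁⁻¹ * ‖F u₀‖ * (Real.exp (-(c₁ * s)) - Real.exp (-(c₁ * t))))
      (B' := fun t => ‖F u₀‖ * Real.exp (-(c₁ * t)))
      (fun r hr => ((hu' r (hs.trans hr.1)).sub_const _).continuousAt.continuousWithinAt)
      (fun r hr => ((hu' r (hs.trans hr.1)).sub_const _).hasDerivWithinAt)
      (by simp) (by fun_prop) (fun r _ => ?_)
      (fun r hr => by rw [norm_neg]; exact hdec r (hs.trans hr.1)) (Set.right_mem_Icc.2 hst)
    have h1 := (((((hasDerivAt_id r).const_mul c₁).neg).exp).const_sub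
      (Real.exp (-(c₁ * s)))).const_mul (c₁⁻¹ * ‖F u₀‖)
    refine HasDerivAt.hasDerivWithinAt ?_
    have e : ‖F u₀‖ * Real.exp (-(c₁ * r)) =
        c₁⁻¹ * ‖F u₀‖ * -(Real.exp (-(c₁ * r)) * -(c₁ * 1)) := by
      field_simp
    rw [e]
    exact h1
  have hexp : Tendsto (fun t : ℝ => Real.exp (-(c₁ * t))) atTop (nhds 0) :=
    Real.tendsto_exp_neg_atTop_nhds_zero.comp (tendsto_id.const_mul_atTop hc₁)
  have hC : 0 ≤ c₁⁻¹ * ‖F u₀‖ := by positivity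
  have hcau' : ∀ s ≥ (0:ℝ), ∀ t ≥ s, ‖u t - u s‖ ≤ c₁⁻¹ * ‖F u₀‖ * Real.exp (-(c₁ * s)) := by
    intro s hs t hst
    refine (hcau s hs t hst).trans (mul_le_mul_of_nonneg_left ?_ hC)
    linarith [Real.exp_pos (-(c₁ * t))]
  have hlim : ∃ y, Tendsto u atTop (nhds y) := by
    refine cauchySeq_tendsto_of_complete ?_
    rw [Metric.cauchySeq_iff']
    intro ε hε
    have h1 : Tendsto (fun t : ℝ => c₁⁻¹ * ‖F u₀‖ * Real.exp (-(c₁ * t))) atTop (nhds 0) := by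
      simpa using hexp.const_mul (c₁⁻¹ * ‖F u₀‖)
    obtain ⟨s, hs1, hs0⟩ := ((h1.eventually_lt_const hε).and (eventually_ge_atTop (0:ℝ))).exists
    refine ⟨s, fun t ht => ?_⟩
    rw [dist_eq_norm]
    exact (hcau' s hs0 t ht).trans_lt hs1
  obtain ⟨y, hy⟩ := hlim
  refine ⟨u, hu0, hu', huB, y, hy, ?_, hdec, ?_⟩
  · have h1 : Tendsto (fun t => F (u t)) atTop (nhds (F y)) :=
      ((hF' y).continuousAt.tendsto).comp hy
    have h2 : Tendsto (fun t => F (u t)) atTop (nhds 0) := by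
      refine squeeze_zero_norm' (a := fun t => ‖F u₀‖ * Real.exp (-(c₁ * t))) ?_ ?_
      · filter_upwards [eventually_ge_atTop (0:ℝ)] with t ht using hdec t ht
      · simpa using hexp.const_mul ‖F u₀‖
    exact tendsto_nhds_unique h1 h2
  · intro s hs
    have h1 : Tendsto (fun t => ‖u t - u s‖) atTop (nhds ‖y - u s‖) := (hy.sub_const _).norm
    rw [norm_sub_rev]
    refine le_of_tendsto h1 ?_
    filter_upwards [eventually_ge_atTop s] with t ht using hcau' s hs t ht
end

section
/- Continuous gradient method. Let H be a real Hilbert space, u₀ ∈ H, R > 0, B := {u ∈ H : ‖u − u₀‖ ≤ R}, and let F : H → H be twice Fréchet differentiable with ‖F″(u)‖ ≤ M₂ for all u ∈ B. Assume ‖F′(u)‖ ≤ M₁ for all u ∈ B, F′(u) is boundedly invertible with ‖[F′(u)]^{−1}‖ ≤ m₁ for all u ∈ B, and M₁·m₁²·‖F(u₀)‖ ≤ R. Then the Cauchy problem u̇(t) = −[F′(u(t))]*F(u(t)), u(0) = u₀ (where A* denotes the Hilbert adjoint) has a global solution u with u(t) ∈ B for all t ≥ 0; the strong limit y := lim_{t→∞}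 u(t) exists; F(y) = 0; and for all t ≥ 0: ‖F(u(t))‖ ≤ ‖F(u₀)‖·e^{−t/m₁²} and ‖u(t) − y‖ ≤ M₁·m₁²·‖F(u₀)‖·e^{−t/m₁²}. -/
open MeasureTheory Filter
open scoped RealInnerProductSpace

/-- Global solutions for bounded, globally Lipschitz autonomous fields. -/
theorem cgm_global_solution {E : Type*} [NormedAddCommGroup E] [NormedSpace ℝ E] [CompleteSpace E]
    (G : E → E) (K L : NNReal) (hK : LipschitzWith K G) (hL : ∀ x, ‖G x‖ ≤ L) (x₀ : E) :
    ∃ u : ℝ → E, u 0 = x₀ ∧ ∀ t, HasDerivAt u (G (u t)) t := by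
  have key : ∀ n : ℕ, ∃ α : ℝ → E, α 0 = x₀ ∧
      ∀ t ∈ Set.Ioo (-((n:ℝ)+1)) ((n:ℝ)+1), HasDerivAt α (G (α t)) t := by
    intro n
    have hn : (0:ℝ) ≤ (n:ℝ) + 1 := by positivity
    have hpl : IsPicardLindelof (fun _ ↦ G) (tmin := -((n:ℝ)+1)) (tmax := (n:ℝ)+1)
        ⟨0, by constructor <;> linarith⟩ x₀ (L * ((n:NNReal)+1)) 0 L K := by
      apply IsPicardLindelof.of_time_independent
      · exact fun x _ => hL x
      · exact hK.lipschitzOnWith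
      · simp
    obtain ⟨α, h0, hα⟩ := hpl.exists_eq_forall_mem_Icc_hasDerivWithinAt₀
    exact ⟨α, h0, fun t ht => (hα t (Set.Ioo_subset_Icc_self ht)).hasDerivAt
      (Icc_mem_nhds ht.1 ht.2)⟩
  choose α h0 hα using key
  have huniq : ∀ m n : ℕ, m ≤ n →
      Set.EqOn (α m) (α n) (Set.Ioo (-((m:ℝ)+1)) ((m:ℝ)+1)) := by
    intro m n hmn
    have hmn' : (m:ℝ) ≤ n := by exact_mod_cast hmn
    have hm : (0:ℝ) ≤ (m:ℝ) := by positivity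
    refine ODE_solution_unique_of_mem_Ioo (v := fun _ => G) (s := fun _ => Set.univ) (K := K)
      (t₀ := 0) (fun t _ => hK.lipschitzOnWith) ⟨by linarith, by linarith⟩
      (fun t ht => ⟨hα m t ht, trivial⟩)
      (fun t ht => ⟨hα n t ⟨by linarith [ht.1], by linarith [ht.2]⟩, trivial⟩) ?_
    rw [h0, h0]
  have hmem : ∀ t : ℝ, ∀ n : ℕ, |t| < (n:ℝ) + 1 → t ∈ Set.Ioo (-((n:ℝ)+1)) ((n:ℝ)+1) :=
    fun t n h => abs_lt.mp h
  let u : ℝ → E := fun t => α ⌈|t|⌉₊ t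
  have hu : ∀ t : ℝ, ∀ n : ℕ, |t| < (n:ℝ) + 1 → u t = α n t := by
    intro t n hn
    have h1 : |t| < (⌈|t|⌉₊:ℝ) + 1 := by linarith [Nat.le_ceil |t|]
    rcases le_total ⌈|t|⌉₊ n with h | h
    · exact huniq _ _ h (hmem t _ h1)
    · exact (huniq _ _ h (hmem t _ hn)).symm
  refine ⟨u, by rw [hu 0 0 (by simp)]; exact h0 0, fun t => ?_⟩
  have h1 : |t| < (⌈|t|⌉₊:ℝ) + 1 := by linarith [Nat.le_ceil |t|]
  have h2 := hα _ t (hmem t _ h1)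
  rw [← hu t _ h1] at h2
  refine h2.congr_of_eventuallyEq ?_
  have : ∀ᶠ s in nhds t, |s| < (⌈|t|⌉₊:ℝ) + 1 :=
    continuous_abs.continuousAt.eventually_lt continuousAt_const h1
  filter_upwards [this] with s hs
  exact hu s _ hs

/-- Radial retraction onto the ball. -/
theorem cgm_retraction {E : Type*} [NormedAddCommGroup E] [NormedSpace ℝ E] (u₀ : E) (R : ℝ)
    (hR : 0 < R) : ∃ ρ : E → E, (∀ x y, ‖ρ x - ρ y‖ ≤ 2 * ‖x - y‖) ∧ (∀ x, ‖ρ x - u₀‖ ≤ R) ∧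
      ∀ x, ‖x - u₀‖ ≤ R → ρ x = x := by
  refine ⟨fun x => u₀ + (R / max R ‖x - u₀‖) • (x - u₀), ?_, ?_, ?_⟩
  · intro x y
    have hx : 0 < max R ‖x - u₀‖ := lt_max_of_lt_left hR
    have hy : 0 < max R ‖y - u₀‖ := lt_max_of_lt_left hR
    have hxy : |max R ‖y - u₀‖ - max R ‖x - u₀‖| ≤ ‖x - y‖ := by
      refine (abs_max_sub_max_le_max _ _ _ _).trans ?_
      simp only [sub_self, abs_zero]
      refine max_le (norm_nonneg _) ?_
      refine (abs_norm_sub_norm_le _ _).trans ?_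
      rw [← norm_neg]; simp
    have e : (u₀ + (R / max R ‖x - u₀‖) • (x - u₀)) - (u₀ + (R / max R ‖y - u₀‖) • (y - u₀))
        = (R / max R ‖x - u₀‖) • (x - y)
          + (R / max R ‖x - u₀‖ - R / max R ‖y - u₀‖) • (y - u₀) := by
      module
    simp only
    rw [e]
    refine (norm_add_le _ _).trans ?_
    rw [norm_smul, norm_smul, two_mul]
    have hle1 : R / max R ‖x - u₀‖ ≤ 1 := (div_le_one hx).2 (le_max_left _ _)
    have h0 : 0 ≤ R / max R ‖x - u₀‖ := by positivity
    refine add_le_add ?_ ?_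
    · rw [Real.norm_eq_abs, abs_of_nonneg h0]
      exact mul_le_of_le_one_left (norm_nonneg _) hle1
    · have : R / max R ‖x - u₀‖ - R / max R ‖y - u₀‖ = (R / max R ‖x - u₀‖) *
        ((max R ‖y - u₀‖ - max R ‖x - u₀‖) / max R ‖y - u₀‖) := by
        field_simp
      rw [this, Real.norm_eq_abs, abs_mul, abs_of_nonneg h0, abs_div, abs_of_pos hy]
      have h3 : |max R ‖y - u₀‖ - max R ‖x - u₀‖| / max R ‖y - u₀‖ * ‖y - u₀‖ ≤ ‖x - y‖ := by
        rw [div_mul_eq_mul_div, div_le_iff₀ hy]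
        exact mul_le_mul hxy (le_max_right _ _) (norm_nonneg _) (norm_nonneg _)
      rw [mul_assoc]
      exact (mul_le_of_le_one_left (by positivity) hle1).trans h3
  · intro x
    have hx : 0 < max R ‖x - u₀‖ := lt_max_of_lt_left hR
    rw [add_sub_cancel_left, norm_smul, Real.norm_eq_abs, abs_of_nonneg (by positivity),
      div_mul_eq_mul_div, div_le_iff₀ hx]
    exact mul_le_mul_of_nonneg_left (le_max_right _ _) hR.le
  · intro x hx
    simp only
    rw [max_eq_left hx, div_self hR.ne', one_smul, add_sub_cancel]

/-- A priori estimates as long as the trajectory stays in the ball. -/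
theorem cgm_apriori
    {H : Type*} [NormedAddCommGroup H] [InnerProductSpace ℝ H] [CompleteSpace H]
    (F : H → H) (F' : H → H →L[ℝ] H)
    (hF' : ∀ u : H, HasFDerivAt F (F' u) u)
    (M₁ m₁ : ℝ) (hm : 0 < m₁) (hM : 0 ≤ M₁) (B : Set H)
    (hM₁ : ∀ u ∈ B, ‖F' u‖ ≤ M₁)
    (hcoer : ∀ u ∈ B, ∀ x, ‖x‖ ≤ m₁ * ‖ContinuousLinearMap.adjoint (F' u) x‖)
    (u v : ℝ → H) (hu : ∀ t, HasDerivAt u (v t) t) (T : ℝ)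
    (hv : ∀ t ∈ Set.Ico 0 T, u t ∈ B ∧ v t = -(ContinuousLinearMap.adjoint (F' (u t)) (F (u t)))) :
    (∀ t ∈ Set.Icc 0 T, ‖F (u t)‖ ≤ ‖F (u 0)‖ * Real.exp (-(t / m₁ ^ 2))) ∧
    (∀ r s, 0 ≤ r → r ≤ s → s ≤ T → ‖u s - u r‖ ≤ M₁ * m₁ ^ 2 * ‖F (u 0)‖ *
      (Real.exp (-(r / m₁ ^ 2)) - Real.exp (-(s / m₁ ^ 2)))) := by
  have hexp : ∀ c t : ℝ, HasDerivAt (fun s => Real.exp (c * s)) (c * Real.exp (c * t)) t := by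
    intro c t
    have := ((hasDerivAt_id t).const_mul c).exp
    simpa [mul_comm] using this
  have hFu : ∀ t, HasDerivAt (fun s => F (u s)) (F' (u t) (v t)) t := fun t =>
    (hF' (u t)).comp_hasDerivAt t (hu t)
  have hd : ∀ t, HasDerivAt (fun s => ‖F (u s)‖ ^ 2 * Real.exp (2 / m₁ ^ 2 * s))
      (2 * ⟪F (u t), F' (u t) (v t)⟫ * Real.exp (2 / m₁ ^ 2 * t) +
        ‖F (u t)‖ ^ 2 * (2 / m₁ ^ 2 * Real.exp (2 / m₁ ^ 2 * t))) t := fun t =>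
    (hFu t).norm_sq.mul (hexp _ t)
  have hanti : AntitoneOn (fun s => ‖F (u s)‖ ^ 2 * Real.exp (2 / m₁ ^ 2 * s)) (Set.Icc 0 T) := by
    refine antitoneOn_of_deriv_nonpos (convex_Icc 0 T)
      (fun t _ => (hd t).continuousAt.continuousWithinAt)
      (fun t _ => (hd t).differentiableAt.differentiableWithinAt) ?_
    intro t ht
    rw [interior_Icc] at ht
    obtain ⟨hB, hvt⟩ := hv t (Set.Ioo_subset_Ico_self ht)
    rw [(hd t).deriv, hvt, map_neg, inner_neg_right,
      ← ContinuousLinearMap.adjoint_inner_left, real_inner_self_eq_norm_sq]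
    have h1 := hcoer _ hB (F (u t))
    have h2 : ‖F (u t)‖ ^ 2 / m₁ ^ 2 ≤ ‖ContinuousLinearMap.adjoint (F' (u t)) (F (u t))‖ ^ 2 := by
      rw [div_le_iff₀ (by positivity), ← mul_pow, mul_comm]
      exact pow_le_pow_left₀ (norm_nonneg _) h1 2
    have h3 := Real.exp_pos (2 / m₁ ^ 2 * t)
    have : 2 * -‖ContinuousLinearMap.adjoint (F' (u t)) (F (u t))‖ ^ 2 * Real.exp (2 / m₁ ^ 2 * t) +
        ‖F (u t)‖ ^ 2 * (2 / m₁ ^ 2 * Real.exp (2 / m₁ ^ 2 * t)) =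
        2 * Real.exp (2 / m₁ ^ 2 * t) * (‖F (u t)‖ ^ 2 / m₁ ^ 2 -
          ‖ContinuousLinearMap.adjoint (F' (u t)) (F (u t))‖ ^ 2) := by ring
    rw [this]
    exact mul_nonpos_of_nonneg_of_nonpos (by positivity) (by linarith)
  have hdec : ∀ t ∈ Set.Icc 0 T, ‖F (u t)‖ ≤ ‖F (u 0)‖ * Real.exp (-(t / m₁ ^ 2)) := by
    intro t ht
    have h := hanti ⟨le_rfl, ht.1.trans ht.2⟩ ht ht.1
    simp only [mul_zero, Real.exp_zero, mul_one] at h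
    have e : Real.exp (2 / m₁ ^ 2 * t) = Real.exp (t / m₁ ^ 2) ^ 2 := by
      rw [← Real.exp_nat_mul]; congr 1; push_cast; ring
    rw [e, ← mul_pow] at h
    have h' := (pow_le_pow_iff_left₀ (by positivity) (norm_nonneg _) two_ne_zero).1 h
    rw [Real.exp_neg, ← div_eq_mul_inv, le_div_iff₀ (Real.exp_pos _)]
    exact h'
  refine ⟨hdec, fun r s hr hrs hsT => ?_⟩
  have hB : ∀ x, HasDerivAt (fun t => M₁ * m₁ ^ 2 * ‖F (u 0)‖ *
      (Real.exp (-(r / m₁ ^ 2)) - Real.exp (-(1 / m₁ ^ 2) * t)))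
      (M₁ * m₁ ^ 2 * ‖F (u 0)‖ * (- (-(1 / m₁ ^ 2) * Real.exp (-(1 / m₁ ^ 2) * x)))) x := fun x =>
    ((hexp _ x).const_sub _).const_mul _
  have e : ∀ t : ℝ, -(1 / m₁ ^ 2) * t = -(t / m₁ ^ 2) := fun t => by ring
  have := image_norm_le_of_norm_deriv_right_le_deriv_boundary (a := r) (b := s)
    (f := fun t => u t - u r) (f' := v)
    (fun t _ => ((hu t).sub_const _).continuousAt.continuousWithinAt)
    (fun t _ => ((hu t).sub_const _).hasDerivWithinAt) (by simp only [e, sub_self, norm_zero, mul_zero, le_refl]) hB ?_ ⟨hrs, le_rfl⟩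
  · simpa only [e] using this
  · intro x hx
    obtain ⟨hxB, hvx⟩ := hv x ⟨hr.trans hx.1, hx.2.trans_le hsT⟩
    have h1 := hdec x ⟨hr.trans hx.1, (hx.2.trans_le hsT).le⟩
    rw [hvx, norm_neg, e]
    calc _ ≤ ‖ContinuousLinearMap.adjoint (F' (u x))‖ * ‖F (u x)‖ :=
          ContinuousLinearMap.le_opNorm _ _
      _ ≤ M₁ * (‖F (u 0)‖ * Real.exp (-(x / m₁ ^ 2))) := by
          rw [LinearIsometryEquiv.norm_map]
          exact mul_le_mul (hM₁ _ hxB) h1 (norm_nonneg _) hM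
      _ = _ := by field_simp

/-- **Example 3: continuous gradient method.** If `‖F′(u)‖ ≤ M₁`,
`‖[F′(u)]⁻¹‖ ≤ m₁`, `‖F″(u)‖ ≤ M₂` on `B`, and `M₁m₁²‖F(u₀)‖ ≤ R`, then
`u̇ = −[F′(u)]*F(u)`, `u(0) = u₀` has a global solution in `B` converging to a
zero `y` of `F`, with `‖F(u(t))‖ ≤ ‖F(u₀)‖e^{−t/m₁²}` and
`‖u(t) − y‖ ≤ M₁m₁²‖F(u₀)‖e^{−t/m₁²}`. -/
theorem continuous_gradient_method
    {H : Type*} [NormedAddCommGroup H] [InnerProductSpace ℝ H] [CompleteSpace H]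
    (F : H → H) (F' : H → H →L[ℝ] H) (F'' : H → H →L[ℝ] H →L[ℝ] H)
    (hF' : ∀ u : H, HasFDerivAt F (F' u) u)
    (hF'' : ∀ u : H, HasFDerivAt F' (F'' u) u)
    (u₀ : H) (R M₁ M₂ m₁ : ℝ) (hR : 0 < R)
    (B : Set H) (hB : B = {u : H | ‖u - u₀‖ ≤ R})
    (hM₂ : ∀ u ∈ B, ‖F'' u‖ ≤ M₂)
    (hM₁ : ∀ u ∈ B, ‖F' u‖ ≤ M₁)
    (Finv : H → H →L[ℝ] H)
    (hinv₁ : ∀ u ∈ B, (F' u).comp (Finv u) = ContinuousLinearMap.id ℝ H)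
    (hinv₂ : ∀ u ∈ B, (Finv u).comp (F' u) = ContinuousLinearMap.id ℝ H)
    (hm₁ : ∀ u ∈ B, ‖Finv u‖ ≤ m₁)
    (hsmall : M₁ * m₁ ^ 2 * ‖F u₀‖ ≤ R) :
    ∃ u : ℝ → H, u 0 = u₀ ∧
      (∀ t ≥ (0:ℝ), HasDerivAt u (-(ContinuousLinearMap.adjoint (F' (u t)) (F (u t)))) t) ∧
      (∀ t ≥ (0:ℝ), u t ∈ B) ∧
      ∃ y : H, Tendsto u atTop (nhds y) ∧ F y = 0 ∧
        (∀ t ≥ (0:ℝ), ‖F (u t)‖ ≤ ‖F u₀‖ * Real.exp (-(t / m₁ ^ 2))) ∧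
        (∀ t ≥ (0:ℝ), ‖u t - y‖ ≤ M₁ * m₁ ^ 2 * ‖F u₀‖ * Real.exp (-(t / m₁ ^ 2))) := by
  subst hB
  have hu0B : u₀ ∈ {u : H | ‖u - u₀‖ ≤ R} := by simpa using hR.le
  have hM : 0 ≤ M₁ := (norm_nonneg _).trans (hM₁ _ hu0B)
  have hM2 : 0 ≤ M₂ := (norm_nonneg (F'' u₀)).trans (hM₂ _ hu0B)
  have hm0 : 0 ≤ m₁ := (norm_nonneg _).trans (hm₁ _ hu0B)
  have hcoer : ∀ u ∈ {u : H | ‖u - u₀‖ ≤ R}, ∀ x,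
      ‖x‖ ≤ m₁ * ‖ContinuousLinearMap.adjoint (F' u) x‖ := by
    intro u hu x
    have h1 := congrArg ContinuousLinearMap.adjoint (hinv₁ u hu)
    rw [ContinuousLinearMap.adjoint_comp, ContinuousLinearMap.adjoint_id] at h1
    have h2 : ContinuousLinearMap.adjoint (Finv u) (ContinuousLinearMap.adjoint (F' u) x) = x :=
      congrArg (fun A : H →L[ℝ] H => A x) h1
    calc ‖x‖ = _ := by rw [h2]
      _ ≤ _ := ContinuousLinearMap.le_opNorm (ContinuousLinearMap.adjoint (Finv u)) _
      _ ≤ _ := by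
        rw [LinearIsometryEquiv.norm_map]
        exact mul_le_mul_of_nonneg_right (hm₁ u hu) (norm_nonneg _)
  rcases hm0.eq_or_lt with hm | hm
  · have hz : ∀ x : H, x = 0 := fun x => by
      have := hcoer u₀ hu0B x
      rw [← hm, zero_mul] at this
      exact norm_le_zero_iff.1 this
    refine ⟨fun _ => u₀, rfl, fun t _ => ?_, fun t _ => hu0B, u₀, tendsto_const_nhds, hz _, ?_, ?_⟩
    · rw [hz (-_)]; exact hasDerivAt_const _ _
    · intro t _; rw [hz (F u₀)]; simp
    · intro t _; rw [hz (F u₀)]; simp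
  have hconv : Convex ℝ {u : H | ‖u - u₀‖ ≤ R} := by
    have : {u : H | ‖u - u₀‖ ≤ R} = Metric.closedBall u₀ R := by
      ext x; simp [dist_eq_norm]
    rw [this]; exact convex_closedBall _ _
  have hLF : ∀ x ∈ {u : H | ‖u - u₀‖ ≤ R}, ∀ y ∈ {u : H | ‖u - u₀‖ ≤ R},
      ‖F y - F x‖ ≤ M₁ * ‖y - x‖ := fun x hx y hy =>
    hconv.norm_image_sub_le_of_norm_hasFDerivWithin_le
      (fun z _ => (hF' z).hasFDerivWithinAt) hM₁ hx hy
  have hLF' : ∀ x ∈ {u : H | ‖u - u₀‖ ≤ R}, ∀ y ∈ {u : H | ‖u - u₀‖ ≤ R},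
      ‖F' y - F' x‖ ≤ M₂ * ‖y - x‖ := fun x hx y hy =>
    hconv.norm_image_sub_le_of_norm_hasFDerivWithin_le
      (fun z _ => (hF'' z).hasFDerivWithinAt) hM₂ hx hy
  have hFb : ∀ x ∈ {u : H | ‖u - u₀‖ ≤ R}, ‖F x‖ ≤ ‖F u₀‖ + M₁ * R := by
    intro x hx
    have h1 := hLF u₀ hu0B x hx
    have h2 : M₁ * ‖x - u₀‖ ≤ M₁ * R := mul_le_mul_of_nonneg_left hx hM
    have h3 := norm_sub_norm_le (F x) (F u₀)
    linarith
  obtain ⟨ρ, hρL, hρB, hρ⟩ := cgm_retraction u₀ R hR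
  let Φ : H → H := fun x => -(ContinuousLinearMap.adjoint (F' x) (F x))
  have hΦL : ∀ x ∈ {u : H | ‖u - u₀‖ ≤ R}, ∀ y ∈ {u : H | ‖u - u₀‖ ≤ R},
      ‖Φ x - Φ y‖ ≤ (M₂ * (‖F u₀‖ + M₁ * R) + M₁ * M₁) * ‖x - y‖ := by
    intro x hx y hy
    have e : Φ x - Φ y = -(ContinuousLinearMap.adjoint (F' x - F' y) (F x) +
        ContinuousLinearMap.adjoint (F' y) (F x - F y)) := by
      simp only [Φ, map_sub, ContinuousLinearMap.sub_apply]; abel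
    rw [e, norm_neg]
    have h1 : ‖ContinuousLinearMap.adjoint (F' x - F' y) (F x)‖ ≤
        (M₂ * ‖x - y‖) * (‖F u₀‖ + M₁ * R) := by
      refine (ContinuousLinearMap.le_opNorm _ _).trans ?_
      rw [LinearIsometryEquiv.norm_map]
      exact mul_le_mul (hLF' y hy x hx) (hFb x hx) (norm_nonneg _) (by positivity)
    have h2 : ‖ContinuousLinearMap.adjoint (F' y) (F x - F y)‖ ≤ M₁ * (M₁ * ‖x - y‖) := by
      refine (ContinuousLinearMap.le_opNorm _ _).trans ?_
      rw [LinearIsometryEquiv.norm_map]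
      exact mul_le_mul (hM₁ y hy) (hLF y hy x hx) (norm_nonneg _) hM
    refine (norm_add_le _ _).trans ((add_le_add h1 h2).trans (le_of_eq ?_))
    ring
  have hK0 : 0 ≤ (M₂ * (‖F u₀‖ + M₁ * R) + M₁ * M₁) * 2 := by positivity
  have hL0 : 0 ≤ M₁ * (‖F u₀‖ + M₁ * R) := by positivity
  obtain ⟨u, hu0, hu⟩ := cgm_global_solution (fun x => Φ (ρ x)) (NNReal.mk _ hK0) (NNReal.mk _ hL0)
    (LipschitzWith.of_dist_le_mul (by
      intro x y
      rw [dist_eq_norm, dist_eq_norm]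
      refine (hΦL _ (hρB x) _ (hρB y)).trans ?_
      rw [NNReal.coe_mk, mul_assoc]
      exact mul_le_mul_of_nonneg_left (hρL x y) (by positivity)))
    (by
      intro x
      simp only [Φ, norm_neg, NNReal.coe_mk]
      refine (ContinuousLinearMap.le_opNorm _ _).trans ?_
      rw [LinearIsometryEquiv.norm_map]
      exact mul_le_mul (hM₁ _ (hρB x)) (hFb _ (hρB x)) (norm_nonneg _) hM) u₀
  have hap := cgm_apriori F F' hF' M₁ m₁ hm hM {u : H | ‖u - u₀‖ ≤ R} hM₁ hcoer u _ hu
  have hcont : Continuous u := continuous_iff_continuousAt.2 fun t => (hu t).continuousAt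
  have hin : ∀ t ≥ (0:ℝ), ‖u t - u₀‖ ≤ R := by
    by_contra! hcon
    obtain ⟨T, hT0, hT⟩ := hcon
    have hcpt : IsCompact (Set.Icc 0 T ∩ {t | R ≤ ‖u t - u₀‖}) :=
      isCompact_Icc.inter_right (isClosed_le continuous_const (by fun_prop))
    obtain ⟨τ, ⟨⟨hτ0, hτT⟩, hτR⟩, hτmin⟩ := hcpt.exists_isLeast ⟨T, ⟨hT0, le_rfl⟩, hT.le⟩
    have hlt : ∀ t ∈ Set.Ico 0 τ, ‖u t - u₀‖ ≤ R := by
      intro t ht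
      by_contra! h
      exact absurd (hτmin ⟨⟨ht.1, ht.2.le.trans hτT⟩, h.le⟩) (not_le.2 ht.2)
    have h1 := (hap τ (fun t ht => ⟨hlt t ht, by rw [hρ _ (hlt t ht)]⟩)).2 0 τ le_rfl hτ0 le_rfl
    rw [hu0] at h1
    simp only [zero_div, neg_zero, Real.exp_zero] at h1
    have hE := Real.exp_pos (-(τ / m₁ ^ 2))
    have hE1 : Real.exp (-(τ / m₁ ^ 2)) ≤ 1 := Real.exp_le_one_iff.2 (by
      have : 0 ≤ τ / m₁ ^ 2 := by positivity
      linarith)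
    have hτR' : R ≤ ‖u τ - u₀‖ := hτR
    have h2 := mul_le_mul_of_nonneg_right hsmall (sub_nonneg.2 hE1)
    nlinarith
  have hap' := fun T => hap T (fun t ht => ⟨hin t ht.1, by rw [hρ _ (hin t ht.1)]⟩)
  rw [hu0] at hap'
  have hdec : ∀ t ≥ (0:ℝ), ‖F (u t)‖ ≤ ‖F u₀‖ * Real.exp (-(t / m₁ ^ 2)) := fun t ht =>
    (hap' t).1 t ⟨ht, le_rfl⟩
  have hdist : ∀ r s, 0 ≤ r → r ≤ s →
      ‖u s - u r‖ ≤ M₁ * m₁ ^ 2 * ‖F u₀‖ * Real.exp (-(r / m₁ ^ 2)) := by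
    intro r s hr hrs
    refine ((hap' s).2 r s hr hrs le_rfl).trans ?_
    refine mul_le_mul_of_nonneg_left ?_ (by positivity)
    linarith [Real.exp_pos (-(s / m₁ ^ 2))]
  have hexp0 : Tendsto (fun t : ℝ => Real.exp (-(t / m₁ ^ 2))) atTop (nhds 0) := by
    refine Real.tendsto_exp_neg_atTop_nhds_zero.comp ?_
    exact tendsto_id.atTop_div_const (by positivity)
  have hC0 : Tendsto (fun t : ℝ => M₁ * m₁ ^ 2 * ‖F u₀‖ * Real.exp (-(t / m₁ ^ 2))) atTop
      (nhds 0) := by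
    simpa using hexp0.const_mul (M₁ * m₁ ^ 2 * ‖F u₀‖)
  have hF0 : Tendsto (fun t : ℝ => ‖F u₀‖ * Real.exp (-(t / m₁ ^ 2))) atTop (nhds 0) := by
    simpa using hexp0.const_mul (‖F u₀‖)
  have hcauchy : CauchySeq u := by
    rw [Metric.cauchySeq_iff']
    intro ε hε
    obtain ⟨N, hN0, hN⟩ := ((eventually_ge_atTop (0:ℝ)).and (hC0.eventually_lt_const hε)).exists
    refine ⟨N, fun n hn => ?_⟩
    rw [dist_eq_norm]
    exact (hdist N n hN0 hn).trans_lt hN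
  obtain ⟨y, hy⟩ := cauchySeq_tendsto_of_complete hcauchy
  refine ⟨u, hu0, fun t ht => ?_, hin, y, hy, ?_, hdec, fun t ht => ?_⟩
  · have := hu t
    simp only [hρ _ (hin t ht)] at this
    exact this
  · have h1 : Tendsto (fun t => F (u t)) atTop (nhds (F y)) :=
      (hF' y).continuousAt.tendsto.comp hy
    have h2 : Tendsto (fun t => F (u t)) atTop (nhds 0) :=
      squeeze_zero_norm' ((eventually_ge_atTop (0:ℝ)).mono fun t ht => hdec t ht) hF0
    exact tendsto_nhds_unique h1 h2
  · have h1 : Tendsto (fun s => ‖u s - u t‖) atTop (nhds ‖y - u t‖) :=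
      (hy.sub_const _).norm
    rw [norm_sub_rev]
    exact le_of_tendsto h1 ((eventually_ge_atTop t).mono fun s hs => hdist t s ht hs)
end

section
/- Continuous Gauss–Newton method. Let H be a real Hilbert space, u₀ ∈ H, R > 0, B := {u ∈ H : ‖u − u₀‖ ≤ R}, and let F : H → H be twice Fréchet differentiable with ‖F″(u)‖ ≤ M₂ for all u ∈ B. Assume ‖F′(u)‖ ≤ M₁ for all u ∈ B, F′(u) is boundedly invertible with ‖[F′(u)]^{−1}‖ ≤ m₁ for all u ∈ B, and M₁·m₁²·‖F(u₀)‖ ≤ R. Then the Cauchy problem u̇(t) = −([F′(u)]*F′(u))^{−1}[F′(u)]*F(u), u(0) = u₀ (where A* denotes the Hilbert adjoint) has a global solution u with u(t) ∈ B for all t ≥ 0; the strong limit y := lim_{t→∞} u(t) exists; F(y) = 0; and for all t ≥ 0: ‖F(u(t))‖ ≤ ‖F(u₀)‖·e^{−t} and ‖u(t) − y‖ ≤ M₁·m₁²·‖F(u₀)‖·e^{−t}. -/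
open MeasureTheory Filter
open scoped RealInnerProductSpace

open Set Metric NNReal in
theorem aux_picard {E : Type*} [NormedAddCommGroup E] [NormedSpace ℝ E] [CompleteSpace E]
    {f : ℝ → E → E} {tmin tmax : ℝ} {t₀ : Icc tmin tmax} {x₀ x : E} {a r L K : ℝ≥0}
    (hf : IsPicardLindelof f t₀ x₀ a r L K) (hx : x ∈ closedBall x₀ r) :
    ∃ α : ℝ → E, α t₀ = x ∧ (∀ t, α t ∈ closedBall x₀ a) ∧
      ∀ t ∈ Icc tmin tmax, HasDerivWithinAt α (f t (α t)) (Icc tmin tmax) t := by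
  obtain ⟨α, hα⟩ := ODE.FunSpace.exists_isFixedPt_next hf hx
  refine ⟨α.compProj, by rw [ODE.FunSpace.compProj_val, ← hα, ODE.FunSpace.next_apply₀],
    fun t => α.compProj_mem_closedBall hf.mul_max_le, fun t ht ↦ ?_⟩
  apply ODE.hasDerivWithinAt_picard_Icc t₀.2 hf.continuousOn_uncurry
    α.continuous_compProj.continuousOn (fun _ ht' ↦ α.compProj_mem_closedBall hf.mul_max_le)
    x ht |>.congr_of_mem _ ht
  intro t' ht'
  nth_rw 1 [← hα]
  rw [ODE.FunSpace.compProj_of_mem ht', ODE.FunSpace.next_apply]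

/-- **Example 4: continuous Gauss–Newton method.** If `‖F′(u)‖ ≤ M₁`,
`‖[F′(u)]⁻¹‖ ≤ m₁`, `‖F″(u)‖ ≤ M₂` on `B`, and `M₁m₁²‖F(u₀)‖ ≤ R`, then
`u̇ = −([F′(u)]*F′(u))⁻¹[F′(u)]*F(u)`, `u(0) = u₀` has a global solution in `B`
converging to a zero `y` of `F`, with `‖F(u(t))‖ ≤ ‖F(u₀)‖e^{−t}` and
`‖u(t) − y‖ ≤ M₁m₁²‖F(u₀)‖e^{−t}`. -/
theorem continuous_gauss_newton_method
    {H : Type*} [NormedAddCommGroup H] [InnerProductSpace ℝ H] [CompleteSpace H]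
    (F : H → H) (F' : H → H →L[ℝ] H) (F'' : H → H →L[ℝ] H →L[ℝ] H)
    (hF' : ∀ u : H, HasFDerivAt F (F' u) u)
    (hF'' : ∀ u : H, HasFDerivAt F' (F'' u) u)
    (u₀ : H) (R M₁ M₂ m₁ : ℝ) (hR : 0 < R)
    (B : Set H) (hB : B = {u : H | ‖u - u₀‖ ≤ R})
    (hM₂ : ∀ u ∈ B, ‖F'' u‖ ≤ M₂)
    (hM₁ : ∀ u ∈ B, ‖F' u‖ ≤ M₁)
    (Finv : H → H →L[ℝ] H)
    (hinv₁ : ∀ u ∈ B, (F' u).comp (Finv u) = ContinuousLinearMap.id ℝ H)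
    (hinv₂ : ∀ u ∈ B, (Finv u).comp (F' u) = ContinuousLinearMap.id ℝ H)
    (hm₁ : ∀ u ∈ B, ‖Finv u‖ ≤ m₁)
    (Ginv : H → H →L[ℝ] H)
    (hGinv₁ : ∀ u ∈ B,
      ((ContinuousLinearMap.adjoint (F' u)).comp (F' u)).comp (Ginv u) =
        ContinuousLinearMap.id ℝ H)
    (hGinv₂ : ∀ u ∈ B,
      (Ginv u).comp ((ContinuousLinearMap.adjoint (F' u)).comp (F' u)) =
        ContinuousLinearMap.id ℝ H)
    (hsmall : M₁ * m₁ ^ 2 * ‖F u₀‖ ≤ R) :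
    ∃ u : ℝ → H, u 0 = u₀ ∧
      (∀ t ≥ (0:ℝ), HasDerivAt u
        (-(Ginv (u t) (ContinuousLinearMap.adjoint (F' (u t)) (F (u t))))) t) ∧
      (∀ t ≥ (0:ℝ), u t ∈ B) ∧
      ∃ y : H, Tendsto u atTop (nhds y) ∧ F y = 0 ∧
        (∀ t ≥ (0:ℝ), ‖F (u t)‖ ≤ ‖F u₀‖ * Real.exp (-t)) ∧
        (∀ t ≥ (0:ℝ), ‖u t - y‖ ≤ M₁ * m₁ ^ 2 * ‖F u₀‖ * Real.exp (-t)) := by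
  have hu₀ : u₀ ∈ B := by simp [hB, hR.le]
  have hm0 : 0 ≤ m₁ := (norm_nonneg _).trans (hm₁ u₀ hu₀)
  have hM0 : 0 ≤ M₁ := (norm_nonneg _).trans (hM₁ u₀ hu₀)
  have hM20 : 0 ≤ M₂ := (norm_nonneg (F'' u₀)).trans (hM₂ u₀ hu₀)
  have hBb : B = Metric.closedBall u₀ R := by
    ext u; simp [hB, dist_eq_norm]
  have hconv : Convex ℝ B := hBb ▸ convex_closedBall u₀ R
  have hr : ∀ u ∈ B, ∀ x, F' u (Finv u x) = x := fun u hu x => by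
    simpa using congrArg (fun T : H →L[ℝ] H => T x) (hinv₁ u hu)
  have hl : ∀ u ∈ B, ∀ x, Finv u (F' u x) = x := fun u hu x => by
    simpa using congrArg (fun T : H →L[ℝ] H => T x) (hinv₂ u hu)
  have hG : ∀ u ∈ B, ∀ x, Ginv u (ContinuousLinearMap.adjoint (F' u) x) = Finv u x := by
    intro u hu x
    have := congrArg (fun T : H →L[ℝ] H => T (Finv u x)) (hGinv₂ u hu)
    simpa [hr u hu] using this
  have hLle : m₁ * ‖F u₀‖ ≤ M₁ * m₁ ^ 2 * ‖F u₀‖ := by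
    have h1 : ‖F u₀‖ ≤ M₁ * (m₁ * ‖F u₀‖) := by
      calc ‖F u₀‖ = ‖F' u₀ (Finv u₀ (F u₀))‖ := by rw [hr u₀ hu₀]
        _ ≤ M₁ * ‖Finv u₀ (F u₀)‖ := (F' u₀).le_of_opNorm_le (hM₁ u₀ hu₀) _
        _ ≤ _ := by
          gcongr
          exact (Finv u₀).le_of_opNorm_le (hm₁ u₀ hu₀) _
    nlinarith [mul_le_mul_of_nonneg_left h1 hm0]
  have hL0 : 0 ≤ m₁ * ‖F u₀‖ := by positivity
  have hbd : ∀ u ∈ B, ‖-(Finv u (F u₀))‖ ≤ m₁ * ‖F u₀‖ := fun u hu => by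
    rw [norm_neg]
    exact (Finv u).le_of_opNorm_le (hm₁ u hu) _
  have hlip : ∀ x ∈ B, ∀ y ∈ B, ‖-(Finv x (F u₀)) - -(Finv y (F u₀))‖
      ≤ (m₁ * M₂ * (m₁ * ‖F u₀‖)) * ‖x - y‖ := by
    intro x hx y hy
    have e : -(Finv x (F u₀)) - -(Finv y (F u₀))
        = Finv x ((F' x - F' y) (Finv y (F u₀))) := by
      rw [sub_apply, hr y hy, map_sub, hl x hx]
      abel
    have h2 : ‖F' x - F' y‖ ≤ M₂ * ‖x - y‖ :=
      hconv.norm_image_sub_le_of_norm_hasFDerivWithin_le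
        (fun u _ => (hF'' u).hasFDerivWithinAt) hM₂ hy hx
    rw [e]
    calc _ ≤ m₁ * ‖(F' x - F' y) (Finv y (F u₀))‖ := (Finv x).le_of_opNorm_le (hm₁ x hx) _
      _ ≤ m₁ * ((M₂ * ‖x - y‖) * ‖Finv y (F u₀)‖) := by
        gcongr
        exact (F' x - F' y).le_of_opNorm_le h2 _
      _ ≤ m₁ * ((M₂ * ‖x - y‖) * (m₁ * ‖F u₀‖)) := by
        gcongr
        exact (Finv y).le_of_opNorm_le (hm₁ y hy) _
      _ = _ := by ring
  have hPL : IsPicardLindelof (fun _ u => -(Finv u (F u₀))) (tmin := -1) (tmax := 1)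
      ⟨0, by norm_num, by norm_num⟩ u₀ (.mk R hR.le) 0 (.mk (m₁ * ‖F u₀‖) hL0)
      (.mk (m₁ * M₂ * (m₁ * ‖F u₀‖)) (by positivity)) := by
    apply IsPicardLindelof.of_time_independent
    · intro x hx
      exact hbd x (by rw [hBb]; exact hx)
    · rw [lipschitzOnWith_iff_norm_sub_le]
      intro x hx y hy
      exact hlip x (by rw [hBb]; exact hx) y (by rw [hBb]; exact hy)
    · simpa using hLle.trans hsmall
  obtain ⟨v, hv0, hvB, hv⟩ := aux_picard hPL (Metric.mem_closedBall_self le_rfl)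
  replace hvB : ∀ t, v t ∈ B := fun t => by rw [hBb]; exact hvB t
  replace hv0 : v 0 = u₀ := hv0
  have hLip : ∀ s ∈ Set.Icc (-1:ℝ) 1, ∀ t ∈ Set.Icc (-1:ℝ) 1,
      ‖v t - v s‖ ≤ (m₁ * ‖F u₀‖) * ‖t - s‖ := fun s hs t ht =>
    (convex_Icc (-1:ℝ) 1).norm_image_sub_le_of_norm_hasDerivWithin_le hv
      (fun x _ => hbd _ (hvB x)) hs ht
  have hFv : ∀ s ∈ Set.Icc (-1:ℝ) 1, F (v s) = (1 - s) • F u₀ := by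
    intro s hs
    have hd : ∀ x ∈ Set.Icc (-1:ℝ) 1,
        HasDerivWithinAt (fun s => F (v s) + s • F u₀) 0 (Set.Icc (-1:ℝ) 1) x := by
      intro x hx
      have h1 := (hF' (v x)).comp_hasDerivWithinAt x (hv x hx)
      have h2 := h1.add ((hasDerivWithinAt_id x (Set.Icc (-1:ℝ) 1)).smul_const (F u₀))
      refine h2.congr_deriv ?_
      rw [map_neg, hr _ (hvB x)]
      simp
    have h := (convex_Icc (-1:ℝ) 1).norm_image_sub_le_of_norm_hasDerivWithin_le (C := 0) hd
      (fun x _ => by simp) (x := 0) (y := s) (by norm_num) hs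
    simp only [zero_mul, norm_le_zero_iff, hv0, zero_smul, add_zero, sub_eq_zero] at h
    rw [sub_smul, one_smul]
    exact eq_sub_of_add_eq h
  have hexp : ∀ t ≥ (0:ℝ), 0 < Real.exp (-t) ∧ Real.exp (-t) ≤ 1 := fun t ht =>
    ⟨Real.exp_pos _, by simpa using ht⟩
  have hmem : ∀ t ≥ (0:ℝ), 1 - Real.exp (-t) ∈ Set.Icc (-1:ℝ) 1 := fun t ht => by
    have := hexp t ht
    constructor <;> linarith
  have hFu : ∀ t ≥ (0:ℝ), F (v (1 - Real.exp (-t))) = Real.exp (-t) • F u₀ := fun t ht => by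
    rw [hFv _ (hmem t ht), sub_sub_cancel]
  have hest : ∀ t ≥ (0:ℝ), ‖v (1 - Real.exp (-t)) - v 1‖ ≤
      M₁ * m₁ ^ 2 * ‖F u₀‖ * Real.exp (-t) := fun t ht => by
    have h := hLip 1 (by norm_num) _ (hmem t ht)
    have e : ‖1 - Real.exp (-t) - 1‖ = Real.exp (-t) := by
      rw [sub_sub_cancel_left, norm_neg, Real.norm_eq_abs, abs_of_pos (Real.exp_pos _)]
    rw [e] at h
    exact h.trans (mul_le_mul_of_nonneg_right hLle (Real.exp_pos _).le)
  refine ⟨fun t => v (1 - Real.exp (-t)), by simp [hv0], ?_, fun t _ => hvB _, v 1, ?_, ?_, ?_,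
    hest⟩
  · intro t ht
    have hs := hexp t ht
    have hvd : HasDerivAt v (-(Finv (v (1 - Real.exp (-t))) (F u₀))) (1 - Real.exp (-t)) :=
      (hv _ (hmem t ht)).hasDerivAt (Icc_mem_nhds (by linarith) (by linarith))
    have he : HasDerivAt (fun t : ℝ => 1 - Real.exp (-t)) (Real.exp (-t)) t := by
      have := ((hasDerivAt_neg t).exp).const_sub 1
      simpa using this
    have h := hvd.scomp t he
    refine h.congr_deriv ?_
    rw [hG _ (hvB _), hFu t ht, map_smul, smul_neg]
  · rw [tendsto_iff_norm_sub_tendsto_zero]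
    have hlim : Tendsto (fun t : ℝ => M₁ * m₁ ^ 2 * ‖F u₀‖ * Real.exp (-t)) atTop (nhds 0) := by
      simpa using (Real.tendsto_exp_neg_atTop_nhds_zero).const_mul (M₁ * m₁ ^ 2 * ‖F u₀‖)
    refine squeeze_zero' (Eventually.of_forall fun _ => norm_nonneg _) ?_ hlim
    filter_upwards [eventually_ge_atTop 0] with t ht using hest t ht
  · simpa using hFv 1 (by norm_num)
  · intro t ht
    simp only []
    rw [hFu t ht, norm_smul, Real.norm_eq_abs, abs_of_pos (Real.exp_pos _), mul_comm]
end

section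
/- Continuous modified Newton method. Let H be a real Hilbert space, u₀ ∈ H, and let F : H → H be twice Fréchet differentiable. Assume F′(u₀) is boundedly invertible with ‖[F′(u₀)]^{−1}‖ ≤ m₀, set R := (2M₂m₀)^{−1} and B := {u ∈ H : ‖u − u₀‖ ≤ R}, where M₂ > 0 satisfies ‖F″(u)‖ ≤ M₂ for all u ∈ B. If 4·m₀²·M₂·‖F(u₀)‖ ≤ 1, then the Cauchy problem u̇(t) = −[F′(u₀)]^{−1}F(u(t)), u(0) = u₀ has a global solution u with u(t) ∈ B for all t ≥ 0; the strong limit y := lim_{t→∞} u(t) exists; F(y) = 0; and for all t ≥ 0: ‖F(u(t))‖ ≤ ‖F(u₀)‖·e^{−t/2} and ‖u(t) − y‖ ≤ 2m₀·‖F(u₀)‖·e^{−t/2}. -/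
open MeasureTheory Filter
open scoped RealInnerProductSpace

/-- Metric projection onto a closed convex set: identity on the set and nonexpansive. -/
theorem cmn_exists_proj {H : Type*} [NormedAddCommGroup H] [InnerProductSpace ℝ H]
    [CompleteSpace H] (S : Set H) (hne : S.Nonempty) (hc : IsClosed S) (hconv : Convex ℝ S) :
    ∃ P : H → H, (∀ x, P x ∈ S) ∧ (∀ x ∈ S, P x = x) ∧ LipschitzWith 1 P := by
  choose P hPS hP using exists_norm_eq_iInf_of_complete_convex hne hc.isComplete hconv
  have key : ∀ x, ∀ w ∈ S, ⟪x - P x, w - P x⟫ ≤ 0 := fun x =>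
    (norm_eq_iInf_iff_real_inner_le_zero hconv (hPS x)).1 (hP x)
  refine ⟨P, hPS, ?_, ?_⟩
  · intro x hx
    have h := key x x hx
    rw [real_inner_self_eq_norm_sq] at h
    have h0 : ‖x - P x‖ = 0 := by nlinarith [norm_nonneg (x - P x)]
    exact (sub_eq_zero.1 (norm_eq_zero.1 h0)).symm
  · refine LipschitzWith.of_dist_le_mul fun x y => ?_
    rw [dist_eq_norm, dist_eq_norm, NNReal.coe_one, one_mul]
    have h1 := key x (P y) (hPS y)
    have h2 := key y (P x) (hPS x)
    have h3 : ‖P x - P y‖ ^ 2 = ⟪x - y, P x - P y⟫ + ⟪x - P x, P y - P x⟫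
        + ⟪y - P y, P x - P y⟫ := by
      rw [← real_inner_self_eq_norm_sq]
      simp only [inner_sub_left, inner_sub_right]
      ring
    have h4 := real_inner_le_norm (x - y) (P x - P y)
    by_contra hcon
    push Not at hcon
    nlinarith [norm_nonneg (P x - P y), norm_nonneg (x - y)]

/-- Global solution of an autonomous ODE with a bounded Lipschitz right-hand side. -/
theorem cmn_exists_global {E : Type*} [NormedAddCommGroup E] [NormedSpace ℝ E]
    [CompleteSpace E] (v : E → E) (K L : NNReal) (hv : LipschitzWith K v)
    (hL : ∀ x, ‖v x‖ ≤ L) (x₀ : E) :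
    ∃ u : ℝ → E, u 0 = x₀ ∧ ∀ t, HasDerivAt u (v (u t)) t := by
  have loc : ∀ n : ℕ, ∃ α : ℝ → E, α 0 = x₀ ∧
      ∀ t ∈ Set.Ioo (-(n + 1 : ℝ)) (n + 1), HasDerivAt α (v (α t)) t := by
    intro n
    have hpos : (0:ℝ) < n + 1 := by positivity
    have hpl : IsPicardLindelof (fun _ => v) (tmin := -(n + 1 : ℝ)) (tmax := n + 1)
        ⟨0, by constructor <;> linarith⟩ x₀ (L * (n + 1)) 0 L K := by
      apply IsPicardLindelof.of_time_independent
      · intro x _; exact hL x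
      · exact hv.lipschitzOnWith
      · simp
    obtain ⟨α, h0, hα⟩ := hpl.exists_eq_forall_mem_Icc_hasDerivWithinAt₀
    exact ⟨α, h0, fun t ht => (hα t (Set.Ioo_subset_Icc_self ht)).hasDerivAt
      (Icc_mem_nhds ht.1 ht.2)⟩
  choose α hα0 hα using loc
  have agree : ∀ n m : ℕ, n ≤ m → Set.EqOn (α n) (α m) (Set.Ioo (-(n + 1 : ℝ)) (n + 1)) := by
    intro n m hnm
    have hnm' : (n : ℝ) ≤ m := by exact_mod_cast hnm
    have hpos : (0:ℝ) < n + 1 := by positivity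
    refine ODE_solution_unique_of_mem_Ioo (v := fun _ => v) (s := fun _ => Set.univ) (K := K)
      (t₀ := 0) (fun t _ => hv.lipschitzOnWith) ⟨by linarith, by linarith⟩
      (fun t ht => ⟨hα n t ht, trivial⟩)
      (fun t ht => ⟨hα m t ⟨by linarith [ht.1], by linarith [ht.2]⟩, trivial⟩) ?_
    rw [hα0, hα0]
  have hmem : ∀ (t : ℝ), t ∈ Set.Ioo (-((⌈|t|⌉₊ : ℝ) + 1)) ((⌈|t|⌉₊ : ℝ) + 1) := by
    intro t
    have h1 := Nat.le_ceil |t|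
    have h2 := abs_le.1 h1
    exact ⟨by linarith [h2.1], by linarith [h2.2]⟩
  have heq : ∀ (n : ℕ) (t : ℝ), t ∈ Set.Ioo (-(n + 1 : ℝ)) (n + 1) → α ⌈|t|⌉₊ t = α n t := by
    intro n t ht
    rcases le_total n ⌈|t|⌉₊ with h | h
    · exact (agree _ _ h ht).symm
    · exact agree _ _ h (hmem t)
  refine ⟨fun t => α ⌈|t|⌉₊ t, by simp [hα0], fun t => ?_⟩
  refine (hα ⌈|t|⌉₊ t (hmem t)).congr_of_eventuallyEq ?_
  filter_upwards [Ioo_mem_nhds (hmem t).1 (hmem t).2] with s hs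
  exact heq _ s hs

/-- A priori estimates for the modified Newton flow while it stays in the ball. -/
theorem cmn_apriori {H : Type*} [NormedAddCommGroup H] [InnerProductSpace ℝ H]
    (F : H → H) (F' : H → H →L[ℝ] H) (hF' : ∀ u : H, HasFDerivAt F (F' u) u)
    (u₀ : H) (m₀ : ℝ) (hm₀pos : 0 < m₀) (A : H →L[ℝ] H)
    (hinv₁ : (F' u₀).comp A = ContinuousLinearMap.id ℝ H) (hm₀ : ‖A‖ ≤ m₀)
    (B : Set H) (hB : ∀ x ∈ B, ‖F' x - F' u₀‖ * m₀ ≤ 1 / 2)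
    (u : ℝ → H) (hu0 : u 0 = u₀) (hc : Continuous u) (T : ℝ)
    (hd : ∀ t ∈ Set.Ico 0 T, HasDerivAt u (-(A (F (u t)))) t)
    (huB : ∀ t ∈ Set.Ico 0 T, u t ∈ B) :
    (∀ t ∈ Set.Icc 0 T, ‖F (u t)‖ ≤ ‖F u₀‖ * Real.exp (-(t / 2))) ∧
    (∀ s t, 0 ≤ s → s ≤ t → t ≤ T →
      ‖u t - u s‖ ≤ 2 * m₀ * ‖F u₀‖ * (Real.exp (-(s / 2)) - Real.exp (-(t / 2)))) := by
  have hFc : Continuous F := continuous_iff_continuousAt.2 fun x => (hF' x).continuousAt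
  have h1 : ∀ t ∈ Set.Icc 0 T, ‖F (u t)‖ ≤ ‖F u₀‖ * Real.exp (-(t / 2)) := by
    have hg := norm_le_gronwallBound_of_norm_deriv_right_le
      (f := fun t => Real.exp t • F (u t))
      (f' := fun t => Real.exp t • (F' (u t)) (-(A (F (u t)))) + Real.exp t • F (u t))
      (δ := ‖F u₀‖) (K := 1 / 2) (ε := 0) (a := 0) (b := T)
      (Real.continuous_exp.smul (hFc.comp hc)).continuousOn
      (fun t ht => ((Real.hasDerivAt_exp t).smul
        ((hF' (u t)).comp_hasDerivAt t (hd t ht))).hasDerivWithinAt)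
      (by simp [hu0])
      (by
        intro t ht
        have e : Real.exp t • (F' (u t)) (-(A (F (u t)))) + Real.exp t • F (u t)
            = -(Real.exp t • (F' (u t) - F' u₀) (A (F (u t)))) := by
          have := congrArg (fun G : H →L[ℝ] H => G (F (u t))) hinv₁
          simp only [ContinuousLinearMap.comp_apply, ContinuousLinearMap.id_apply] at this
          simp only [map_neg, sub_apply, this, smul_sub, smul_neg]
          abel
        rw [e, norm_neg, norm_smul, norm_smul, add_zero]
        have b1 := (F' (u t) - F' u₀).le_opNorm (A (F (u t)))
        have b2 := A.le_opNorm (F (u t))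
        have b3 := hB _ (huB t ht)
        have b4 : ‖A (F (u t))‖ ≤ m₀ * ‖F (u t)‖ := b2.trans (by gcongr)
        have b5 : ‖(F' (u t) - F' u₀) (A (F (u t)))‖ ≤ 1 / 2 * ‖F (u t)‖ :=
          calc _ ≤ ‖F' (u t) - F' u₀‖ * (m₀ * ‖F (u t)‖) := b1.trans (by gcongr)
            _ = (‖F' (u t) - F' u₀‖ * m₀) * ‖F (u t)‖ := by ring
            _ ≤ _ := by gcongr
        calc _ ≤ ‖Real.exp t‖ * (1 / 2 * ‖F (u t)‖) := by gcongr
          _ = _ := by ring)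
    intro t ht
    have := hg t ht
    rw [gronwallBound_ε0, norm_smul, Real.norm_of_nonneg (Real.exp_pos t).le, sub_zero] at this
    have e : Real.exp (1 / 2 * t) = Real.exp t * Real.exp (-(t / 2)) := by
      rw [← Real.exp_add]; congr 1; ring
    rw [e] at this
    have hp := Real.exp_pos t
    refine le_of_mul_le_mul_left (this.trans (le_of_eq ?_)) hp
    ring
  refine ⟨h1, ?_⟩
  intro s t hs hst htT
  have hBd : ∀ x : ℝ, HasDerivAt
      (fun x => 2 * m₀ * ‖F u₀‖ * (Real.exp (-(s / 2)) - Real.exp (-(x / 2))))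
      (m₀ * (‖F u₀‖ * Real.exp (-(x / 2)))) x := by
    intro x
    have h := ((((hasDerivAt_id x).div_const 2).neg.exp).const_sub
      (Real.exp (-(s / 2)))).const_mul (2 * m₀ * ‖F u₀‖)
    refine HasDerivAt.congr_deriv h ?_
    change 2 * m₀ * ‖F u₀‖ * (-(Real.exp (-(x / 2)) * (-(1 / 2)))) = _
    ring
  refine image_norm_le_of_norm_deriv_right_le_deriv_boundary (a := s) (b := t)
    (f := fun x => u x - u s) (f' := fun x => -(A (F (u x))))
    (hc.sub continuous_const).continuousOn
    (fun x hx => ((hd x ⟨hs.trans hx.1, hx.2.trans_le htT⟩).sub_const _).hasDerivWithinAt)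
    (by simp) hBd ?_ ⟨hst, le_rfl⟩
  intro x hx
  rw [norm_neg]
  refine (A.le_opNorm _).trans ?_
  have := h1 x ⟨hs.trans hx.1, hx.2.le.trans htT⟩
  gcongr

/-- **Example 5: continuous modified Newton method.** With
`R = (2M₂m₀)⁻¹`, `‖[F′(u₀)]⁻¹‖ ≤ m₀`, `‖F″(u)‖ ≤ M₂` on `B`, and
`4m₀²M₂‖F(u₀)‖ ≤ 1`, the problem `u̇ = −[F′(u₀)]⁻¹F(u)`, `u(0) = u₀` has a
global solution in `B` converging to a zero `y` of `F`, with
`‖F(u(t))‖ ≤ ‖F(u₀)‖e^{−t/2}` and `‖u(t) − y‖ ≤ 2m₀‖F(u₀)‖e^{−t/2}`. -/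
theorem continuous_modified_newton_method
    {H : Type*} [NormedAddCommGroup H] [InnerProductSpace ℝ H] [CompleteSpace H]
    (F : H → H) (F' : H → H →L[ℝ] H) (F'' : H → H →L[ℝ] H →L[ℝ] H)
    (hF' : ∀ u : H, HasFDerivAt F (F' u) u)
    (hF'' : ∀ u : H, HasFDerivAt F' (F'' u) u)
    (u₀ : H) (M₂ m₀ R : ℝ) (hM₂pos : 0 < M₂) (hm₀pos : 0 < m₀)
    (hR : R = (2 * M₂ * m₀)⁻¹)
    (B : Set H) (hB : B = {u : H | ‖u - u₀‖ ≤ R})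
    (hM₂ : ∀ u ∈ B, ‖F'' u‖ ≤ M₂)
    (Finv₀ : H →L[ℝ] H)
    (hinv₁ : (F' u₀).comp Finv₀ = ContinuousLinearMap.id ℝ H)
    (hinv₂ : Finv₀.comp (F' u₀) = ContinuousLinearMap.id ℝ H)
    (hm₀ : ‖Finv₀‖ ≤ m₀)
    (hsmall : 4 * m₀ ^ 2 * M₂ * ‖F u₀‖ ≤ 1) :
    ∃ u : ℝ → H, u 0 = u₀ ∧
      (∀ t ≥ (0:ℝ), HasDerivAt u (-(Finv₀ (F (u t)))) t) ∧
      (∀ t ≥ (0:ℝ), u t ∈ B) ∧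
      ∃ y : H, Tendsto u atTop (nhds y) ∧ F y = 0 ∧
        (∀ t ≥ (0:ℝ), ‖F (u t)‖ ≤ ‖F u₀‖ * Real.exp (-(t / 2))) ∧
        (∀ t ≥ (0:ℝ), ‖u t - y‖ ≤ 2 * m₀ * ‖F u₀‖ * Real.exp (-(t / 2))) := by
  have hRpos : 0 < R := by rw [hR]; positivity
  have hBball : B = Metric.closedBall u₀ R := by
    rw [hB]; ext x; simp [dist_eq_norm]
  have hconv : Convex ℝ B := hBball ▸ convex_closedBall u₀ R
  have hclosed : IsClosed B := hBball ▸ Metric.isClosed_closedBall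
  have hu₀B : u₀ ∈ B := by rw [hB]; simp [hRpos.le]
  have hRm : M₂ * R * m₀ = 1 / 2 := by rw [hR]; field_simp
  have hder : ∀ x ∈ B, ‖F' x - F' u₀‖ ≤ M₂ * R := by
    intro x hx
    have h := hconv.norm_image_sub_le_of_norm_hasFDerivWithin_le
      (fun z _ => (hF'' z).hasFDerivWithinAt) hM₂ hu₀B hx
    have hx' : ‖x - u₀‖ ≤ R := by rw [hB] at hx; exact hx
    exact h.trans (by gcongr)
  have hderB : ∀ x ∈ B, ‖F' x - F' u₀‖ * m₀ ≤ 1 / 2 := by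
    intro x hx
    rw [← hRm]
    have := hder x hx
    gcongr
  obtain ⟨P, hPB, hPid, hPlip⟩ := cmn_exists_proj B ⟨u₀, hu₀B⟩ hclosed hconv
  -- Lipschitz and bounded on `B`
  have hFlip : ∀ x ∈ B, ∀ y ∈ B, ‖F y - F x‖ ≤ (‖F' u₀‖ + M₂ * R) * ‖y - x‖ := by
    intro x hx y hy
    refine hconv.norm_image_sub_le_of_norm_hasFDerivWithin_le
      (fun z _ => (hF' z).hasFDerivWithinAt) (fun z hz => ?_) hx hy
    have := norm_add_le (F' u₀) (F' z - F' u₀)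
    rw [add_sub_cancel] at this
    linarith [hder z hz]
  have hFbd : ∀ x ∈ B, ‖F x‖ ≤ ‖F u₀‖ + (‖F' u₀‖ + M₂ * R) * R := by
    intro x hx
    have h := hFlip u₀ hu₀B x hx
    have hx' : ‖x - u₀‖ ≤ R := by rw [hB] at hx; exact hx
    have h2 : (‖F' u₀‖ + M₂ * R) * ‖x - u₀‖ ≤ (‖F' u₀‖ + M₂ * R) * R := by gcongr
    have := norm_add_le (F u₀) (F x - F u₀)
    rw [add_sub_cancel] at this
    linarith
  let K : NNReal := ⟨m₀ * (‖F' u₀‖ + M₂ * R), by positivity⟩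
  let L : NNReal := ⟨m₀ * (‖F u₀‖ + (‖F' u₀‖ + M₂ * R) * R), by positivity⟩
  obtain ⟨u, hu0, hud⟩ := cmn_exists_global (fun x => -(Finv₀ (F (P x)))) K L
    (by
      refine LipschitzWith.of_dist_le_mul fun x y => ?_
      have h1 := hPlip.dist_le_mul x y
      rw [dist_eq_norm, dist_eq_norm, NNReal.coe_one, one_mul] at h1
      have h2 := hFlip (P y) (hPB y) (P x) (hPB x)
      rw [dist_neg_neg, dist_eq_norm, dist_eq_norm, ← map_sub]
      calc _ ≤ ‖Finv₀‖ * ‖F (P x) - F (P y)‖ := Finv₀.le_opNorm _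
        _ ≤ m₀ * ((‖F' u₀‖ + M₂ * R) * ‖P x - P y‖) := by gcongr
        _ ≤ m₀ * ((‖F' u₀‖ + M₂ * R) * ‖x - y‖) := by gcongr
        _ = m₀ * (‖F' u₀‖ + M₂ * R) * ‖x - y‖ := by ring)
    (by
      intro x
      have h2 := hFbd (P x) (hPB x)
      rw [norm_neg]
      calc _ ≤ ‖Finv₀‖ * ‖F (P x)‖ := Finv₀.le_opNorm _
        _ ≤ m₀ * (‖F u₀‖ + (‖F' u₀‖ + M₂ * R) * R) := by gcongr) u₀
  have huc : Continuous u := continuous_iff_continuousAt.2 fun t => (hud t).continuousAt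
  have hud' : ∀ t, u t ∈ B → HasDerivAt u (-(Finv₀ (F (u t)))) t := by
    intro t ht
    have := hud t
    rwa [hPid _ ht] at this
  have hsmallR : 2 * m₀ * ‖F u₀‖ ≤ R := by
    rw [hR, ← one_div, le_div_iff₀ (by positivity)]
    nlinarith
  have hmain : ∀ T ≥ (0:ℝ), (∀ t ∈ Set.Ico 0 T, u t ∈ B) → _ := fun T _ h =>
    cmn_apriori F F' hF' u₀ m₀ hm₀pos Finv₀ hinv₁ hm₀ B hderB u hu0 huc T
      (fun t ht => hud' t (h t ht)) h
  have hstrict : ∀ T ≥ (0:ℝ), ‖u T - u₀‖ < R := by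
    intro T hT
    by_contra hcon
    push Not at hcon
    have hcpt : IsCompact (Set.Icc 0 T ∩ {t | R ≤ ‖u t - u₀‖}) :=
      isCompact_Icc.inter_right
        (isClosed_le continuous_const (huc.sub continuous_const).norm)
    obtain ⟨τ, ⟨hτ, hτR⟩, hleast⟩ := hcpt.exists_isLeast ⟨T, ⟨hT, le_rfl⟩, hcon⟩
    have hin : ∀ t ∈ Set.Ico 0 τ, u t ∈ B := by
      intro t ht
      rw [hB]
      by_contra hn
      have hn' : R < ‖u t - u₀‖ := not_le.1 hn
      exact absurd (hleast ⟨⟨ht.1, ht.2.le.trans hτ.2⟩, hn'.le⟩) (not_le.2 ht.2)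
    have h := (hmain τ hτ.1 hin).2 0 τ le_rfl hτ.1 le_rfl
    rw [hu0] at h
    simp only [zero_div, neg_zero, Real.exp_zero] at h
    have hp := Real.exp_pos (-(τ / 2))
    have hle : Real.exp (-(τ / 2)) ≤ 1 := Real.exp_le_one_iff.2 (by linarith [hτ.1])
    have hτR' : R ≤ ‖u τ - u₀‖ := hτR
    nlinarith [mul_le_mul_of_nonneg_right hsmallR (sub_nonneg.2 hle)]
  have huB : ∀ t ≥ (0:ℝ), u t ∈ B := by
    intro t ht
    rw [hB]
    exact (hstrict t ht).le
  have hFdec : ∀ t ≥ (0:ℝ), ‖F (u t)‖ ≤ ‖F u₀‖ * Real.exp (-(t / 2)) := fun t ht =>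
    (hmain t ht fun s hs => huB s hs.1).1 t ⟨ht, le_rfl⟩
  have hinc : ∀ s t : ℝ, 0 ≤ s → s ≤ t →
      ‖u t - u s‖ ≤ 2 * m₀ * ‖F u₀‖ * Real.exp (-(s / 2)) := by
    intro s t hs hst
    refine ((hmain t (hs.trans hst) fun r hr => huB r hr.1).2 s t hs hst le_rfl).trans ?_
    have hp := Real.exp_pos (-(t / 2))
    gcongr
    linarith
  have hexp : Tendsto (fun t : ℝ => Real.exp (-(t / 2))) atTop (nhds 0) :=
    Real.tendsto_exp_neg_atTop_nhds_zero.comp (tendsto_id.atTop_div_const (by norm_num))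
  have hlim : ∃ y, Tendsto u atTop (nhds y) := by
    refine cauchy_map_iff_exists_tendsto.1 ?_
    have hE : Tendsto (fun t : ℝ => 2 * m₀ * ‖F u₀‖ * Real.exp (-(t / 2))) atTop (nhds 0) := by
      simpa using hexp.const_mul (2 * m₀ * ‖F u₀‖)
    refine Metric.cauchy_iff.2 ⟨inferInstance, fun ε hε => ?_⟩
    obtain ⟨N, hN, hN0⟩ := ((hE.eventually (gt_mem_nhds (half_pos hε))).and
      (eventually_ge_atTop 0)).exists
    refine ⟨u '' Set.Ici N, image_mem_map (Ici_mem_atTop N), ?_⟩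
    rintro _ ⟨a, ha, rfl⟩ _ ⟨b, hb, rfl⟩
    have h1 := hinc N a hN0 ha
    have h2 := hinc N b hN0 hb
    rw [← dist_eq_norm] at h1 h2
    have h3 := dist_triangle_right (u a) (u b) (u N)
    linarith
  obtain ⟨y, hy⟩ := hlim
  refine ⟨u, hu0, fun t ht => hud' t (huB t ht), huB, y, hy, ?_, hFdec, ?_⟩
  · have h1 : Tendsto (fun t => ‖F (u t)‖) atTop (nhds ‖F y‖) :=
      ((hF' y).continuousAt.tendsto.comp hy).norm
    have h2 : Tendsto (fun t : ℝ => ‖F u₀‖ * Real.exp (-(t / 2))) atTop (nhds 0) := by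
      simpa using hexp.const_mul ‖F u₀‖
    have h3 : ‖F y‖ ≤ 0 := le_of_tendsto_of_tendsto h1 h2
      ((eventually_ge_atTop 0).mono fun t ht => hFdec t ht)
    exact norm_le_zero_iff.1 h3
  · intro s hs
    have h1 : Tendsto (fun t => ‖u t - u s‖) atTop (nhds ‖y - u s‖) :=
      (hy.sub tendsto_const_nhds).norm
    rw [norm_sub_rev]
    exact le_of_tendsto h1 ((eventually_ge_atTop s).mono fun t ht => hinc s t hs ht)
end

section
/- Let H be a real Hilbert space, u₀ ∈ H, R > 0, B := {u ∈ H : ‖u − u₀‖ ≤ R}, and let F : H → H be twice Fréchet differentiable with ‖F″(v)‖ ≤ M₂ for all v ∈ B. Assume F′(u₀) is boundedly invertible with ‖[F′(u₀)]^{−1}‖ ≤ m₀, and that M₂·R·m₀ ≤ 1/2. Then for every u ∈ B: ⟨F′(u)[F′(u₀)]^{−1}F(u), F(u)⟩ ≥ (1/2)·‖F(u)‖². -/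
open MeasureTheory Filter
open scoped RealInnerProductSpace

/-- The key estimate of Example 5: if `‖F″(v)‖ ≤ M₂` on `B`,
`‖[F′(u₀)]⁻¹‖ ≤ m₀`, and `M₂ R m₀ ≤ 1/2`, then for every `u ∈ B`:
`⟨F′(u)[F′(u₀)]⁻¹F(u), F(u)⟩ ≥ (1/2)‖F(u)‖²`. -/
theorem modified_newton_coercivity
    {H : Type*} [NormedAddCommGroup H] [InnerProductSpace ℝ H] [CompleteSpace H]
    (F : H → H) (F' : H → H →L[ℝ] H) (F'' : H → H →L[ℝ] H →L[ℝ] H)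
    (hF' : ∀ u : H, HasFDerivAt F (F' u) u)
    (hF'' : ∀ u : H, HasFDerivAt F' (F'' u) u)
    (u₀ : H) (R M₂ m₀ : ℝ) (hR : 0 < R)
    (B : Set H) (hB : B = {u : H | ‖u - u₀‖ ≤ R})
    (hM₂ : ∀ v ∈ B, ‖F'' v‖ ≤ M₂)
    (Finv₀ : H →L[ℝ] H)
    (hinv₁ : (F' u₀).comp Finv₀ = ContinuousLinearMap.id ℝ H)
    (hinv₂ : Finv₀.comp (F' u₀) = ContinuousLinearMap.id ℝ H)
    (hm₀ : ‖Finv₀‖ ≤ m₀)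
    (hsmall : M₂ * R * m₀ ≤ 1 / 2) :
    ∀ u ∈ B, ⟪F' u (Finv₀ (F u)), F u⟫ ≥ (1 / 2) * ‖F u‖ ^ 2 := by
  intro u hu
  have hu₀ : u₀ ∈ B := by
    rw [hB]
    simp [hR.le]
  have huR : ‖u - u₀‖ ≤ R := by
    rw [hB] at hu
    exact hu
  have hconv : Convex ℝ B := by
    have h : B = Metric.closedBall u₀ R := by
      rw [hB]
      ext x
      simp [dist_eq_norm]
    rw [h]
    exact convex_closedBall u₀ R
  have hM0 : 0 ≤ M₂ := (norm_nonneg (F'' u₀)).trans (hM₂ u₀ hu₀)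
  have h1 : ‖F' u - F' u₀‖ ≤ M₂ * ‖u - u₀‖ :=
    hconv.norm_image_sub_le_of_norm_hasFDerivWithin_le
      (fun x _ => (hF'' x).hasFDerivWithinAt) hM₂ hu₀ hu
  have h2 : ‖F' u - F' u₀‖ ≤ M₂ * R :=
    h1.trans (mul_le_mul_of_nonneg_left huR hM0)
  have hid : F' u₀ (Finv₀ (F u)) = F u := by
    have h := congrArg (fun T : H →L[ℝ] H => T (F u)) hinv₁
    simpa using h
  have h3 : ‖(F' u - F' u₀) (Finv₀ (F u))‖ ≤ 1 / 2 * ‖F u‖ := by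
    calc ‖(F' u - F' u₀) (Finv₀ (F u))‖
        ≤ ‖F' u - F' u₀‖ * ‖Finv₀ (F u)‖ := ContinuousLinearMap.le_opNorm _ _
      _ ≤ (M₂ * R) * (m₀ * ‖F u‖) := by
          apply mul_le_mul h2 _ (norm_nonneg _) (mul_nonneg hM0 hR.le)
          exact (Finv₀.le_opNorm _).trans
            (mul_le_mul_of_nonneg_right hm₀ (norm_nonneg _))
      _ = (M₂ * R * m₀) * ‖F u‖ := by ring
      _ ≤ 1 / 2 * ‖F u‖ := mul_le_mul_of_nonneg_right hsmall (norm_nonneg _)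
  have hsplit : F' u (Finv₀ (F u)) = F u + (F' u - F' u₀) (Finv₀ (F u)) := by
    rw [ContinuousLinearMap.sub_apply, hid]
    abel
  have h4 := (abs_le.mp (abs_real_inner_le_norm ((F' u - F' u₀) (Finv₀ (F u))) (F u))).1
  have h5 := mul_le_mul_of_nonneg_right h3 (norm_nonneg (F u))
  rw [hsplit, inner_add_left, real_inner_self_eq_norm_sq]
  nlinarith
end

section
/- Descent methods. Let H be a real Hilbert space, let f : H → [0,∞) be Fréchet differentiable, and let b, c₂ > 0 be constants. Suppose u : [0,∞) → H is differentiable, u(0) = u₀, and for all t ≥ 0: ⟨f′(u(t)), u̇(t)⟩ = −f(u(t)) and ‖u̇(t)‖ ≤ c₂·f(u(t))^b. Then f(u(t)) = f(u₀)·e^{−t} for all t ≥ 0; the strong limit u(∞) := lim_{t→∞} u(t) exists; f(u(∞)) = 0; and ‖u(∞) − u(t)‖ ≤ (c₂·f(u₀)^b / b)·e^{−bt} for all t ≥ 0. -/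
open MeasureTheory Filter
open scoped RealInnerProductSpace

/-- **Example 6: descent methods.** If `f ≥ 0` is differentiable with gradient
`f′`, and `u` satisfies `⟨f′(u(t)), u̇(t)⟩ = −f(u(t))` and `‖u̇(t)‖ ≤ c₂ f(u(t))ᵇ`,
then `f(u(t)) = f(u₀)e^{−t}`, the limit `u(∞)` exists, `f(u(∞)) = 0`, and
`‖u(∞) − u(t)‖ ≤ (c₂ f(u₀)ᵇ / b) e^{−bt}`. -/
theorem descent_method
    {H : Type*} [NormedAddCommGroup H] [InnerProductSpace ℝ H] [CompleteSpace H]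
    (f : H → ℝ) (hfnn : ∀ x : H, 0 ≤ f x)
    (f' : H → H) (hf' : ∀ x : H, HasGradientAt f (f' x) x)
    (b c₂ : ℝ) (hb : 0 < b) (hc₂ : 0 < c₂)
    (u₀ : H) (u : ℝ → H) (u' : ℝ → H)
    (hu0 : u 0 = u₀)
    (hu' : ∀ t ≥ (0:ℝ), HasDerivAt u (u' t) t)
    (hdesc : ∀ t ≥ (0:ℝ), ⟪f' (u t), u' t⟫ = -f (u t))
    (hbound : ∀ t ≥ (0:ℝ), ‖u' t‖ ≤ c₂ * f (u t) ^ b) :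
    (∀ t ≥ (0:ℝ), f (u t) = f u₀ * Real.exp (-t)) ∧
      ∃ y : H, Tendsto u atTop (nhds y) ∧ f y = 0 ∧
        ∀ t ≥ (0:ℝ), ‖y - u t‖ ≤ c₂ * f u₀ ^ b / b * Real.exp (-(b * t)) := by
  have hder : ∀ t ≥ (0:ℝ), HasDerivAt (fun t => f (u t)) (-f (u t)) t := by
    intro t ht
    have h := (hf' (u t)).hasFDerivAt.comp_hasDerivAt t (hu' t ht)
    rw [InnerProductSpace.toDual_apply_apply, hdesc t ht] at h
    exact h
  have hexp : ∀ t ≥ (0:ℝ), f (u t) = f u₀ * Real.exp (-t) := by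
    intro t ht
    have hd : ∀ x ≥ (0:ℝ), HasDerivAt (fun t => f (u t) * Real.exp t) 0 x := by
      intro x hx
      have h := (hder x hx).mul (Real.hasDerivAt_exp x)
      have e : -f (u x) * Real.exp x + f (u x) * Real.exp x = 0 := by ring
      rw [e] at h
      exact h
    have h := constant_of_has_deriv_right_zero (a := 0) (b := t)
      (fun x hx => (hd x hx.1).continuousAt.continuousWithinAt)
      (fun x hx => (hd x hx.1).hasDerivWithinAt) t ⟨ht, le_rfl⟩
    simp only [Real.exp_zero, mul_one, hu0] at h
    rw [← h, mul_assoc, ← Real.exp_add]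
    simp
  refine ⟨hexp, ?_⟩
  set C : ℝ := c₂ * f u₀ ^ b / b with hC
  have hC0 : 0 ≤ C := by
    have := Real.rpow_nonneg (hfnn u₀) b
    positivity
  have hkey : ∀ s ≥ (0:ℝ), ∀ t ≥ s,
      ‖u t - u s‖ ≤ C * Real.exp (-(b * s)) - C * Real.exp (-(b * t)) := by
    intro s hs t hst
    have hBd : ∀ x : ℝ, HasDerivAt
        (fun x => C * Real.exp (-(b * s)) - C * Real.exp (-(b * x)))
        (c₂ * f u₀ ^ b * Real.exp (-(b * x))) x := by
      intro x
      have h1 : HasDerivAt (fun x : ℝ => -(b * x)) (-b) x := by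
        have h := ((hasDerivAt_id x).const_mul b).neg
        rw [mul_one] at h
        exact h
      have h2 := (h1.exp.const_mul C).const_sub (C * Real.exp (-(b * s)))
      have e : -(C * (Real.exp (-(b * x)) * -b)) = c₂ * f u₀ ^ b * Real.exp (-(b * x)) := by
        rw [hC]
        field_simp
      rw [e] at h2
      exact h2
    refine image_norm_le_of_norm_deriv_right_le_deriv_boundary' (a := s) (b := t)
      (f := fun x => u x - u s) (f' := u')
      (B := fun x => C * Real.exp (-(b * s)) - C * Real.exp (-(b * x)))
      (B' := fun x => c₂ * f u₀ ^ b * Real.exp (-(b * x)))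
      ?_ ?_ ?_ ?_ ?_ ?_ ⟨hst, le_rfl⟩
    · intro x hx
      exact ((hu' x (hs.le.trans hx.1)).sub_const (u s)).continuousAt.continuousWithinAt
    · intro x hx
      exact ((hu' x (hs.le.trans hx.1)).sub_const (u s)).hasDerivWithinAt
    · simp
    · intro x hx
      exact (hBd x).continuousAt.continuousWithinAt
    · intro x hx
      exact (hBd x).hasDerivWithinAt
    · intro x hx
      have hx0 : 0 ≤ x := hs.le.trans hx.1
      refine (hbound x hx0).trans (le_of_eq ?_)
      rw [hexp x hx0, Real.mul_rpow (hfnn _) (Real.exp_pos _).le, ← Real.exp_mul, mul_assoc]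
      congr 3
      ring_nf
  have hkey2 : ∀ s ≥ (0:ℝ), ∀ t ≥ s, ‖u t - u s‖ ≤ C * Real.exp (-(b * s)) := by
    intro s hs t hst
    have h := hkey s hs t hst
    have : 0 ≤ C * Real.exp (-(b * t)) := by positivity
    linarith
  have hlim0 : Tendsto (fun s : ℝ => C * Real.exp (-(b * s))) atTop (nhds 0) := by
    have h := (Real.tendsto_exp_neg_atTop_nhds_zero.comp
      (tendsto_id.const_mul_atTop hb)).const_mul C
    simpa using h
  have hcau : Cauchy (map u atTop) := by
    refine Metric.cauchy_iff.2 ⟨inferInstance, ?_⟩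
    intro ε hε
    obtain ⟨s, hs1, hs0⟩ := ((hlim0.eventually (gt_mem_nhds (half_pos hε))).and
      (eventually_ge_atTop (0:ℝ))).exists
    refine ⟨u '' Set.Ici s, image_mem_map (Ici_mem_atTop s), ?_⟩
    rintro _ ⟨x, hx, rfl⟩ _ ⟨y, hy, rfl⟩
    have h1 := hkey2 s hs0 x hx
    have h2 := hkey2 s hs0 y hy
    have h3 := dist_triangle_right (u x) (u y) (u s)
    rw [dist_eq_norm (u x) (u s), dist_eq_norm (u y) (u s)] at h3
    linarith
  obtain ⟨y, hy⟩ := CompleteSpace.complete hcau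
  have hy : Tendsto u atTop (nhds y) := hy
  refine ⟨y, hy, ?_, ?_⟩
  · have h1 : Tendsto (fun t => f (u t)) atTop (nhds (f y)) :=
      (hf' y).hasFDerivAt.continuousAt.tendsto.comp hy
    have h2 : Tendsto (fun t => f (u t)) atTop (nhds 0) := by
      have h := Real.tendsto_exp_neg_atTop_nhds_zero.const_mul (f u₀)
      rw [mul_zero] at h
      refine h.congr' ?_
      filter_upwards [eventually_ge_atTop (0:ℝ)] with t ht
      exact (hexp t ht).symm
    exact tendsto_nhds_unique h1 h2
  · intro t ht
    refine le_of_tendsto (hy.sub_const (u t)).norm ?_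
    filter_upwards [eventually_ge_atTop t] with x hx
    exact hkey2 t ht x hx
end

section
/- Let H be a real Hilbert space and let A : H → H be a bounded selfadjoint linear operator with ⟨Au, u⟩ ≥ 0 for all u ∈ H. Let f ∈ H and suppose there exists y ∈ H with Ay = f. Let P be the orthogonal projection of H onto the null-space N := ker A, let u₀ ∈ H, and let u : [0,∞) → H be the solution of u̇(t) = −Au(t) + f, u(0) = u₀ (explicitly, u(t) = e^{−tA}u₀ + ∫₀ᵗ e^{−(t−s)A} f ds). Then u(t) converges strongly as t → ∞ to u(∞) = y − Py + Pu₀, and A(u(∞)) = f. -/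
open MeasureTheory Filter
open scoped RealInnerProductSpace

/-- A function on `[0,∞)` with nonpositive derivative stays below its initial value. -/
lemma le_init_of_deriv_nonpos (g g' : ℝ → ℝ) (hg : ∀ t ≥ (0:ℝ), HasDerivAt g (g' t) t)
    (hn : ∀ t ≥ (0:ℝ), g' t ≤ 0) (t : ℝ) (ht : 0 ≤ t) : g t ≤ g 0 := by
  have hanti : AntitoneOn g (Set.Ici 0) := by
    apply antitoneOn_of_deriv_nonpos (convex_Ici 0)
    · intro x hx
      exact (hg x hx).continuousAt.continuousWithinAt
    · intro x hx
      rw [interior_Ici] at hx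
      exact (hg x (le_of_lt hx)).differentiableAt.differentiableWithinAt
    · intro x hx
      rw [interior_Ici] at hx
      rw [(hg x (le_of_lt hx)).deriv]
      exact hn x (le_of_lt hx)
  exact hanti (Set.mem_Ici.2 le_rfl) (Set.mem_Ici.2 ht) ht

section helpers

variable {H : Type*} [NormedAddCommGroup H] [InnerProductSpace ℝ H]

lemma flow_norm_le (A : H →L[ℝ] H) (hAnn : ∀ x : H, 0 ≤ ⟪A x, x⟫) (z : ℝ → H)
    (hz : ∀ t ≥ (0:ℝ), HasDerivAt z (-(A (z t))) t) (t : ℝ) (ht : 0 ≤ t) :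
    ‖z t‖ ≤ ‖z 0‖ := by
  have h := le_init_of_deriv_nonpos (fun t => ⟪z t, z t⟫)
    (fun t => ⟪z t, -(A (z t))⟫ + ⟪-(A (z t)), z t⟫)
    (fun t ht => (hz t ht).inner ℝ (hz t ht))
    (fun t ht => by
      have := hAnn (z t)
      simp only [inner_neg_right, inner_neg_left, real_inner_comm (A (z t)) (z t)] at *
      linarith) t ht
  simp only [real_inner_self_eq_norm_sq] at h
  exact le_of_sq_le_sq h (norm_nonneg _)

lemma flow_decay (A : H →L[ℝ] H)
    (hAsa : ∀ x y : H, ⟪A x, y⟫ = ⟪x, A y⟫) (hAnn : ∀ x : H, 0 ≤ ⟪A x, x⟫) (z : ℝ → H)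
    (hz : ∀ t ≥ (0:ℝ), HasDerivAt z (-(A (z t))) t) (t : ℝ) (ht : 0 ≤ t) :
    t * ‖A (z t)‖ ≤ ‖z 0‖ := by
  have hAz : ∀ t ≥ (0:ℝ), HasDerivAt (fun t => A (z t)) (A (-(A (z t)))) t := fun t ht =>
    A.hasFDerivAt.comp_hasDerivAt t (hz t ht)
  have h := le_init_of_deriv_nonpos
    (fun t => ⟪z t, z t⟫ + ((2 * t) * ⟪A (z t), z t⟫ + (2 * t ^ 2) * ⟪A (z t), A (z t)⟫)) _
    (fun t ht => ((hz t ht).inner ℝ (hz t ht)).add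
      ((((hasDerivAt_id t).const_mul 2).mul ((hAz t ht).inner ℝ (hz t ht))).add
        ((((hasDerivAt_id t).pow 2).const_mul 2).mul ((hAz t ht).inner ℝ (hAz t ht)))))
    (fun t ht => by
      have h1 := hAnn (A (z t))
      have h2 : ⟪A (A (z t)), z t⟫ = ⟪A (z t), A (z t)⟫ := hAsa _ _
      have h3 := real_inner_comm (A (z t)) (z t)
      have h4 := real_inner_comm (A (A (z t))) (A (z t))
      have h5 := mul_nonneg (sq_nonneg t) h1
      simp only [map_neg, inner_neg_right, inner_neg_left, id, h2, h3, h4]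
      simp
      nlinarith) t ht
  have h6 := mul_nonneg ht (hAnn (z t))
  simp only [real_inner_self_eq_norm_sq] at h
  refine le_of_sq_le_sq ?_ (norm_nonneg _)
  have h7 : 0 ≤ t ^ 2 * ‖A (z t)‖ ^ 2 := by positivity
  rw [mul_pow]
  nlinarith

lemma exists_flow [CompleteSpace H] (A : H →L[ℝ] H) (v : H) :
    ∃ z : ℝ → H, z 0 = v ∧ ∀ t, HasDerivAt z (-(A (z t))) t := by
  refine ⟨fun t => NormedSpace.exp (t • (-A)) v, by simp, fun t => ?_⟩
  have h := hasDerivAt_exp_smul_const' (𝕂 := ℝ) (-A) t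
  have h2 := h.clm_apply (hasDerivAt_const t v)
  simpa using h2

lemma mem_closure_range [CompleteSpace H] (A : H →L[ℝ] H)
    (hAsa : ∀ x y : H, ⟪A x, y⟫ = ⟪x, A y⟫) (w : H) (hw : ∀ z, A z = 0 → ⟪w, z⟫ = 0) :
    w ∈ closure (Set.range A) := by
  have h : w ∈ (A : H →ₗ[ℝ] H).rangeᗮᗮ := by
    rw [Submodule.mem_orthogonal']
    intro z hz
    apply hw
    rw [Submodule.mem_orthogonal] at hz
    have := hz (A (A z)) ⟨A z, rfl⟩
    rw [hAsa] at this
    exact inner_self_eq_zero.1 this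
  rw [Submodule.orthogonal_orthogonal_eq_closure] at h
  exact h

lemma flow_tendsto [CompleteSpace H] (A : H →L[ℝ] H)
    (hAsa : ∀ x y : H, ⟪A x, y⟫ = ⟪x, A y⟫) (hAnn : ∀ x : H, 0 ≤ ⟪A x, x⟫) (w : ℝ → H)
    (hw' : ∀ t ≥ (0:ℝ), HasDerivAt w (-(A (w t))) t)
    (hw : ∀ z, A z = 0 → ⟪w 0, z⟫ = 0) : Tendsto w atTop (nhds 0) := by
  rw [Metric.tendsto_atTop]
  intro ε hε
  obtain ⟨_, ⟨v, rfl⟩, hv⟩ :=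
    Metric.mem_closure_iff.1 (mem_closure_range A hAsa _ hw) (ε / 2) (by positivity)
  obtain ⟨z, hz0, hz⟩ := exists_flow A v
  refine ⟨2 * ‖v‖ / ε + 1, fun t ht => ?_⟩
  have hq : 0 ≤ 2 * ‖v‖ / ε := by positivity
  have ht0 : 0 < t := by linarith
  have h1 := flow_norm_le A hAnn (fun t => w t - A (z t)) (fun t ht => by
    have h0 : HasDerivAt (fun t => w t - A (z t)) (-(A (w t)) - A (-(A (z t)))) t :=
      (hw' t ht).sub (A.hasFDerivAt.comp_hasDerivAt t (hz t))
    have h00 : -(A (w t - A (z t))) = -(A (w t)) - A (-(A (z t))) := by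
      rw [map_sub, map_neg]
      abel
    rw [h00]
    exact h0) t ht0.le
  have h2 := flow_decay A hAsa hAnn z (fun t _ => hz t) t ht0.le
  simp only [hz0] at h1 h2
  rw [dist_eq_norm] at hv
  have h3 : ‖A (z t)‖ < ε / 2 := by
    have h4 : 2 * ‖v‖ / ε < t := by linarith
    rw [div_lt_iff₀ hε] at h4
    by_contra hc
    push Not at hc
    have := mul_le_mul_of_nonneg_left hc ht0.le
    linarith
  rw [dist_zero_right]
  have h5 : ‖w t‖ ≤ ‖w t - A (z t)‖ + ‖A (z t)‖ := by
    simpa using norm_add_le (w t - A (z t)) (A (z t))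
  linarith

end helpers

/-- Section 4, case `α = 0`: if `A ≥ 0` is bounded selfadjoint, `Ay = f`, and
`u` solves `u̇ = −Au + f`, `u(0) = u₀`, then `u(t) → y − Py + Pu₀` strongly,
where `P` is the orthogonal projection onto `ker A`, and `A(u(∞)) = f`. -/
theorem linear_equation_no_regularization
    {H : Type*} [NormedAddCommGroup H] [InnerProductSpace ℝ H] [CompleteSpace H]
    (A : H →L[ℝ] H)
    (hAsa : ∀ x y : H, ⟪A x, y⟫ = ⟪x, A y⟫)
    (hAnn : ∀ x : H, 0 ≤ ⟪A x, x⟫)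
    (f y : H) (hy : A y = f)
    (P : H →L[ℝ] H)
    (hPker : ∀ x : H, A (P x) = 0)
    (hPorth : ∀ x z : H, A z = 0 → ⟪x - P x, z⟫ = 0)
    (u₀ : H) (u : ℝ → H)
    (hu0 : u 0 = u₀)
    (hu' : ∀ t ≥ (0:ℝ), HasDerivAt u (-(A (u t)) + f) t) :
    Tendsto u atTop (nhds (y - P y + P u₀)) ∧ A (y - P y + P u₀) = f := by
  have hfin : A (y - P y + P u₀) = f := by simp [hPker, hy]
  refine ⟨?_, hfin⟩
  have h := flow_tendsto A hAsa hAnn (fun t => u t - (y - P y + P u₀))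
    (fun t ht => by
      have := (hu' t ht).sub_const (y - P y + P u₀)
      convert this using 1
      rw [map_sub, hfin]
      abel)
    (fun z hz => by
      have h1 := hPorth (u₀ - y) z hz
      have h2 : u 0 - (y - P y + P u₀) = (u₀ - y) - P (u₀ - y) := by
        rw [hu0, map_sub]
        abel
      simp only [h2]
      exact h1)
  have h3 := h.add_const (y - P y + P u₀)
  simpa using h3
end

section
/- Let H be a real Hilbert space and let A : H → H be a bounded selfadjoint linear operator with ⟨Au, u⟩ ≥ 0 for all u ∈ H. Let f ∈ H and suppose there exists y ∈ H with Ay = f, and let P be the orthogonal projection of H onto ker A. Let α : [0,∞) → (0,∞) be continuous with lim_{t→∞} α(t) = 0 and ∫₀^∞ α(t) dt = +∞, let u₀ ∈ H, and let u : [0,∞) → H be the solution of the regularized Cauchy problem u̇(t) = −Au(t) − α(t)u(t) + f, u(0) = u₀. Then u(t) converges strongly as t → ∞ to u(∞) = y − Py, and A(u(∞)) = f. -/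
open MeasureTheory Filter
open scoped RealInnerProductSpace

theorem aux_dense {H : Type*} [NormedAddCommGroup H] [InnerProductSpace ℝ H] [CompleteSpace H]
    (A : H →L[ℝ] H) (hAsa : ∀ x y : H, ⟪A x, y⟫ = ⟪x, A y⟫) (w : H)
    (hw : ∀ z : H, A z = 0 → ⟪w, z⟫ = 0) (ε : ℝ) (hε : 0 < ε) :
    ∃ z : H, ‖w - A z‖ < ε := by
  have hmem : w ∈ (LinearMap.range (A : H →ₗ[ℝ] H)).topologicalClosure := by
    rw [← Submodule.orthogonal_orthogonal_eq_closure, Submodule.mem_orthogonal]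
    intro x hx
    rw [Submodule.mem_orthogonal] at hx
    rw [real_inner_comm]
    apply hw
    have h1 : ⟪A (A x), x⟫ = 0 := hx _ ⟨A x, rfl⟩
    rw [hAsa] at h1
    exact inner_self_eq_zero.mp h1
  have h2 : w ∈ closure ((LinearMap.range (A : H →ₗ[ℝ] H) : Submodule ℝ H) : Set H) := hmem
  obtain ⟨b, ⟨z, rfl⟩, hb⟩ := Metric.mem_closure_iff.mp h2 ε hε
  exact ⟨z, by simpa [dist_eq_norm] using hb⟩

/-- Gronwall-type lemma. -/
theorem aux_gronwall (α h h' : ℝ → ℝ) (T c : ℝ) (hT : 0 < T)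
    (hαcont : ContinuousOn α (Set.Ici (0:ℝ)))
    (hαint : Tendsto (fun t => ∫ s in (0:ℝ)..t, α s) atTop atTop)
    (hd : ∀ t ≥ T, HasDerivAt h (h' t) t)
    (hle : ∀ t ≥ T, h' t ≤ - α t * (h t - c)) (δ : ℝ) (hδ : 0 < δ) :
    ∀ᶠ t in atTop, h t < c + δ := by
  set I : ℝ → ℝ := fun t => ∫ s in (0:ℝ)..t, α s with hI
  have hId : ∀ t ≥ T, HasDerivAt I (α t) t := by
    intro t ht
    have ht0 : 0 < t := hT.trans_le ht
    apply intervalIntegral.integral_hasDerivAt_right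
    · apply ContinuousOn.intervalIntegrable
      apply hαcont.mono
      rw [Set.uIcc_of_le ht0.le]
      exact fun x hx => hx.1
    · exact (hαcont.mono Set.Ioi_subset_Ici_self).stronglyMeasurableAtFilter isOpen_Ioi t ht0
    · exact hαcont.continuousAt (Ici_mem_nhds ht0)
  have hG : ∀ t ≥ T, HasDerivAt (fun t => (h t - c) * Real.exp (I t))
      (h' t * Real.exp (I t) + (h t - c) * (Real.exp (I t) * α t)) t := by
    intro t ht
    exact ((hd t ht).sub_const c).mul (hId t ht).exp
  have hanti : AntitoneOn (fun t => (h t - c) * Real.exp (I t)) (Set.Ici T) := by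
    apply antitoneOn_of_deriv_nonpos (convex_Ici T)
    · exact fun t ht => (hG t ht).continuousAt.continuousWithinAt
    · intro t ht
      rw [interior_Ici] at ht
      exact (hG t (le_of_lt ht)).differentiableAt.differentiableWithinAt
    · intro t ht
      rw [interior_Ici] at ht
      rw [(hG t (le_of_lt ht)).deriv]
      have h1 := mul_le_mul_of_nonneg_right (hle t (le_of_lt ht)) (Real.exp_pos (I t)).le
      linarith
  set G := (h T - c) * Real.exp (I T)
  have hlim : Tendsto (fun t => G * Real.exp (- I t)) atTop (nhds (G * 0)) :=
    (Real.tendsto_exp_neg_atTop_nhds_zero.comp hαint).const_mul G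
  rw [mul_zero] at hlim
  filter_upwards [hlim.eventually (gt_mem_nhds hδ), eventually_ge_atTop T] with t h1 ht
  have h2 : (h t - c) * Real.exp (I t) ≤ G :=
    hanti (Set.mem_Ici.mpr le_rfl) (Set.mem_Ici.mpr ht) ht
  have h3 := mul_le_mul_of_nonneg_right h2 (Real.exp_pos (-I t)).le
  rw [mul_assoc, ← Real.exp_add, add_neg_cancel, Real.exp_zero, mul_one] at h3
  linarith

/-- Section 4, regularized case: if `A ≥ 0` is bounded selfadjoint, `Ay = f`,
`α > 0` is continuous with `α(t) → 0` and `∫₀^∞ α = ∞`, and `u` solves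
`u̇ = −Au − α(t)u + f`, `u(0) = u₀`, then `u(t) → y − Py` strongly, where `P`
is the orthogonal projection onto `ker A`, and `A(y − Py) = f`. -/
theorem linear_equation_with_regularization
    {H : Type*} [NormedAddCommGroup H] [InnerProductSpace ℝ H] [CompleteSpace H]
    (A : H →L[ℝ] H)
    (hAsa : ∀ x y : H, ⟪A x, y⟫ = ⟪x, A y⟫)
    (hAnn : ∀ x : H, 0 ≤ ⟪A x, x⟫)
    (f y : H) (hy : A y = f)
    (P : H →L[ℝ] H)
    (hPker : ∀ x : H, A (P x) = 0)
    (hPorth : ∀ x z : H, A z = 0 → ⟪x - P x, z⟫ = 0)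
    (α : ℝ → ℝ)
    (hαpos : ∀ t ≥ (0:ℝ), 0 < α t)
    (hαcont : ContinuousOn α (Set.Ici (0:ℝ)))
    (hαlim : Tendsto α atTop (nhds 0))
    (hαint : Tendsto (fun t => ∫ s in (0:ℝ)..t, α s) atTop atTop)
    (u₀ : H) (u : ℝ → H)
    (hu0 : u 0 = u₀)
    (hu' : ∀ t ≥ (0:ℝ), HasDerivAt u (-(A (u t)) - α t • u t + f) t) :
    Tendsto u atTop (nhds (y - P y)) ∧ A (y - P y) = f := by
  have hAw : A (y - P y) = f := by rw [map_sub, hPker, sub_zero, hy]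
  refine ⟨?_, hAw⟩
  set w := y - P y with hw
  have hv' : ∀ t ≥ (0:ℝ), HasDerivAt (fun t => u t - w)
      (-(A (u t)) - α t • u t + f) t := fun t ht => (hu' t ht).sub_const w
  have hh : ∀ t ≥ (0:ℝ), HasDerivAt (fun t => ‖u t - w‖ ^ 2)
      (2 * ⟪u t - w, -(A (u t)) - α t • u t + f⟫) t := fun t ht => (hv' t ht).norm_sq
  rw [Metric.tendsto_nhds]
  intro r hr
  set ε := r / 2 with hεdef
  have hε : 0 < ε := by positivity
  obtain ⟨z, hz⟩ := aux_dense A hAsa w (fun z hz => hPorth y z hz) ε hε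
  have hC : Tendsto (fun t => α t * (⟪A z, z⟫ / 2)) atTop (nhds (0 * (⟪A z, z⟫ / 2))) :=
    hαlim.mul_const _
  rw [zero_mul] at hC
  obtain ⟨T, hT⟩ := eventually_atTop.mp
    (hC.eventually (gt_mem_nhds (show (0:ℝ) < ε ^ 2 by positivity)))
  have key := aux_gronwall α (fun t => ‖u t - w‖ ^ 2)
    (fun t => 2 * ⟪u t - w, -(A (u t)) - α t • u t + f⟫) (max T 1) (2 * ε ^ 2)
    (by positivity) hαcont hαint
    (fun t ht => hh t (zero_le_one.trans ((le_max_right _ _).trans ht))) ?_ (ε ^ 2) (by positivity)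
  · filter_upwards [key] with t ht
    rw [dist_eq_norm]
    apply lt_of_pow_lt_pow_left₀ 2 hr.le
    have : r = 2 * ε := by rw [hεdef]; ring
    rw [this]
    nlinarith
  · intro t ht
    have ht0 : 0 ≤ t := zero_le_one.trans ((le_max_right _ _).trans ht)
    have ha := hαpos t ht0
    have hTt := hT t ((le_max_left _ _).trans ht)
    obtain ⟨v, hv⟩ : ∃ v, v = u t - w := ⟨_, rfl⟩
    obtain ⟨e, he⟩ : ∃ e, e = w - A z := ⟨_, rfl⟩
    have e1 : -(A (u t)) - α t • u t + f = -(A v) - α t • v - α t • (A z) - α t • e := by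
      rw [hv, he, map_sub, hAw]
      module
    simp only [← hv]
    rw [e1]
    rw [← he] at hz
    have h1 := hAnn (v + (α t / 2) • z)
    have hsym : ⟪A v, z⟫ = ⟪v, A z⟫ := hAsa v z
    have hc1 : ⟪A z, v⟫ = ⟪v, A z⟫ := real_inner_comm _ _
    have hc2 : ⟪A v, v⟫ = ⟪v, A v⟫ := real_inner_comm _ _
    simp only [map_add, map_smul, inner_add_left, inner_add_right, real_inner_smul_left,
      real_inner_smul_right] at h1
    rw [hsym, hc1, hc2] at h1
    simp only [inner_sub_right, inner_neg_right, real_inner_smul_right,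
      real_inner_self_eq_norm_sq]
    have h2 : -⟪v, e⟫ ≤ ‖v‖ * ‖e‖ := (neg_le_abs _).trans (abs_real_inner_le_norm v e)
    have h3 : -2 * ⟪v, e⟫ ≤ ‖v‖ ^ 2 + ε ^ 2 := by
      nlinarith [sq_nonneg (‖v‖ - ‖e‖), norm_nonneg e]
    have h4 := mul_le_mul_of_nonneg_left h3 ha.le
    have h5 := mul_le_mul_of_nonneg_left hTt.le ha.le
    nlinarith
end

section
/- Let α : [0,∞) → (0,∞) be differentiable, nonincreasing, with lim_{t→∞} α(t) = 0 and lim_{t→∞} α′(t)/α(t)² = 0. Then lim_{t→∞} α(t)·exp(∫₀ᵗ α(s) ds) = +∞. -/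
open MeasureTheory Filter

/-- Formula (5.2): if `α > 0` is differentiable, nonincreasing, `α(t) → 0`, and
`α′(t)/α(t)² → 0`, then `α(t) exp(∫₀ᵗ α) → +∞`. -/
theorem alpha_exp_integral_tendsto_atTop
    (α α' : ℝ → ℝ)
    (hα : ∀ t ≥ (0:ℝ), HasDerivAt α (α' t) t)
    (hαpos : ∀ t ≥ (0:ℝ), 0 < α t)
    (hα'np : ∀ t ≥ (0:ℝ), α' t ≤ 0)
    (hαlim : Tendsto α atTop (nhds 0))
    (hratio : Tendsto (fun t => α' t / α t ^ 2) atTop (nhds 0)) :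
    Tendsto (fun t => α t * Real.exp (∫ s in (0:ℝ)..t, α s)) atTop atTop := by
  have hI : ∀ t > (0:ℝ), HasDerivAt (fun u => ∫ s in (0:ℝ)..u, α s) (α t) t := by
    intro t ht
    apply intervalIntegral.integral_hasDerivAt_right
    · apply ContinuousOn.intervalIntegrable
      intro x hx
      rw [Set.uIcc_of_le ht.le] at hx
      exact (hα x hx.1).continuousAt.continuousWithinAt
    · refine ContinuousOn.stronglyMeasurableAtFilter isOpen_Ioi (s := Set.Ioi (0:ℝ)) ?_ t ht
      intro x hx
      exact (hα x (le_of_lt hx)).continuousAt.continuousWithinAt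
    · exact (hα t ht.le).continuousAt
  have hev : ∀ᶠ t in atTop, -(1/2 : ℝ) < α' t / α t ^ 2 :=
    hratio.eventually (lt_mem_nhds (by norm_num))
  obtain ⟨T0, hT0⟩ := eventually_atTop.1 hev
  set T := max T0 1 with hT
  have hT1 : (1:ℝ) ≤ T := le_max_right _ _
  have hd : ∀ t ≥ T, HasDerivAt (fun u => α u * Real.exp ((∫ s in (0:ℝ)..u, α s) / 2))
      (α' t * Real.exp ((∫ s in (0:ℝ)..t, α s) / 2) +
        α t * (Real.exp ((∫ s in (0:ℝ)..t, α s) / 2) * (α t / 2))) t := by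
    intro t ht
    exact (hα t (by linarith)).mul (((hI t (by linarith)).div_const 2).exp)
  have hmono : MonotoneOn (fun u => α u * Real.exp ((∫ s in (0:ℝ)..u, α s) / 2))
      (Set.Ici T) := by
    apply monotoneOn_of_deriv_nonneg (convex_Ici T)
    · intro t ht
      exact (hd t ht).continuousAt.continuousWithinAt
    · intro t ht
      rw [interior_Ici] at ht
      exact (hd t (le_of_lt ht)).differentiableAt.differentiableWithinAt
    · intro t ht
      rw [interior_Ici] at ht
      have ht' : T ≤ t := le_of_lt ht
      rw [(hd t ht').deriv]
      have h1 := hT0 t ((le_max_left _ _).trans ht')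
      have hp := hαpos t (by linarith)
      rw [lt_div_iff₀ (by positivity)] at h1
      have h2 : 0 ≤ (α' t + α t ^ 2 / 2) * Real.exp ((∫ s in (0:ℝ)..t, α s) / 2) :=
        mul_nonneg (by linarith) (Real.exp_pos _).le
      linarith
  set c := α T * Real.exp ((∫ s in (0:ℝ)..T, α s) / 2) with hc
  have hcpos : 0 < c := mul_pos (hαpos T (by linarith)) (Real.exp_pos _)
  have hinv : Tendsto (fun t => (α t)⁻¹) atTop atTop := by
    apply Tendsto.inv_tendsto_nhdsGT_zero
    apply tendsto_nhdsWithin_of_tendsto_nhds_of_eventually_within _ hαlim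
    filter_upwards [eventually_ge_atTop 0] with t ht using hαpos t ht
  refine tendsto_atTop_mono' _ ?_ (hinv.const_mul_atTop (pow_pos hcpos 2))
  filter_upwards [eventually_ge_atTop T] with t ht
  have hp := hαpos t (by linarith)
  have h1 : c ≤ α t * Real.exp ((∫ s in (0:ℝ)..t, α s) / 2) :=
    hmono (Set.mem_Ici.2 le_rfl) (Set.mem_Ici.2 ht) ht
  have h2 := pow_le_pow_left₀ hcpos.le h1 2
  have h3 : Real.exp (∫ s in (0:ℝ)..t, α s) =
      Real.exp ((∫ s in (0:ℝ)..t, α s) / 2) ^ 2 := by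
    rw [sq, ← Real.exp_add, add_halves]
  rw [← div_eq_mul_inv, div_le_iff₀ hp, h3]
  linarith
end
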